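/- arXiv:1410.5775 — 2 statements merged into one kernel-verified Lean document; each statement's English description precedes it below -/
import Mathlib

section
/- Let K be a convex body in R^n whose boundary has curvature bounded from above by C, let u, v ∈ ∂K, and suppose n is large. If |u − v| < (1/(100√n)) max(F(u), F(v)), then ||P_u − P_v||_TV ≤ 1 − 1/κ, where κ is an absolute constant and F(x) is defined by P_x({y ∈ ∂K : |x−y| ≤ F(x)}) = 1/128. -/
/-!
The shadow of a boundary point `x` seen from `u` is the orthogonal projection to the tangent
hyperplane at `u` of the direction from `u` to `x`. An inscribed ball of radius `1 / C` at every
boundary point makes the unit normal unique and Hölder continuous, so `∂K` is a `C¹` hypersurface,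
and the area formula `shadow_area` for the shadow map has exactly the unnormalised billiard density
as its Jacobian. As `P_u` is a probability measure, the shadow of a `P_u`-random point is therefore
uniform in the `(n-1)`-dimensional unit disc (`kernel_mass`), and every estimate becomes one on the
volume of subsets of a high-dimensional ball.

By symmetry let `F = F(u)` be the maximum, so `|u - v| < F / (100√n)`. For `x` with direction
`ω = (x - u) / |x - u|` the densities from `u` and `v` are comparable (`mem_overlap`) as soon as
`|x - u| > F`, `ω` has normal component at most `3/√n`, `ω` has component at most `3/√n` along
`u - v`, and `⟪m, ω⟫ < -0.002/√n` for every unit `m` that is almost an outward normal at `u`,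
meaning `⟪m, y - u⟫ ≤ F / (50√n)` for `y ∈ K`. The last condition bounds from below the cosines at
`v` and at `x`, since `-ν(v)` is such an `m`, and so is `-ν(x)` when the cosine at `x` is small.

The first three conditions fail with small probability, by the definition of `F` and concentration
of measure. For the last, a direction with `⟪m, ω⟫ ≥ 1 / (50√n)` hits `∂K` within distance `F`, so
such directions have total mass at most `1/128`. This first forces `m` to be far from tangential
(`half_space_mass`); dilating the disc by `1 + 0.3/n` then moves every direction with
`⟪m, ω⟫ ≥ -0.002/√n` into that set, unless it lies in a thin outer shell (`bad_mass`). Altogether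
the good points have `P_u`-mass at least `1/2`, and on them the density from `u` is at most `6000`
times the one from `v`; hence the total variation distance is at most `1 - 1/12000`.
-/

open MeasureTheory Metric Filter
open scoped ENNReal NNReal InnerProductSpace Topology

noncomputable section

abbrev Euc (n : ℕ) := EuclideanSpace ℝ (Fin n)

def IsConvexBody {n : ℕ} (K : Set (Euc n)) : Prop :=
  Convex ℝ K ∧ IsCompact K ∧ (interior K).Nonempty

/-- The curvature of `∂K` is bounded above by `C`: at every boundary point there is a
ball of radius `1/C` inside `K` touching the boundary at that point (so the tangent
planes of the ball and of `K` coincide there). -/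
def CurvatureBoundedBy {n : ℕ} (K : Set (Euc n)) (C : ℝ) : Prop :=
  ∀ x ∈ frontier K, ∃ z, closedBall z (1 / C) ⊆ K ∧ dist x z = 1 / C

/-- `ν` is an inward unit normal field for `K` on `∂K`. -/
def IsInwardNormal {n : ℕ} (K : Set (Euc n)) (ν : Euc n → Euc n) : Prop :=
  ∀ x ∈ frontier K, ‖ν x‖ = 1 ∧ ∀ y ∈ K, 0 ≤ ⟪ν x, y - x⟫_ℝ

/-- Surface measure on `∂K`: the `(n-1)`-dimensional Hausdorff measure restricted to `∂K`. -/
def surf {n : ℕ} (K : Set (Euc n)) : Measure (Euc n) :=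
  (μH[(n - 1 : ℝ)]).restrict (frontier K)

/-- Uniform probability distribution on `∂K`. -/
def unifBoundary {n : ℕ} (K : Set (Euc n)) : Measure (Euc n) :=
  (surf K Set.univ)⁻¹ • surf K

/-- `cos φ_{xy}`: cosine of the (acute) angle between `y - x` and the inward normal at `x`. -/
def cosAngle {n : ℕ} (ν : Euc n → Euc n) (x y : Euc n) : ℝ :=
  ⟪ν x, y - x⟫_ℝ / ‖y - x‖

/-- `P` is the one-step transition kernel of the stochastic billiard chain on `∂K`:
`P_u(A) = (π^{(n-1)/2} / (vol(∂K) Γ((n+1)/2))) ∫_A cos(φ_{uv}) cos(φ_{vu}) / ‖u-v‖^{n-1} dv`. -/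
def IsBilliardKernel {n : ℕ} (K : Set (Euc n)) (ν : Euc n → Euc n)
    (P : Euc n → Measure (Euc n)) : Prop :=
  ∀ u ∈ frontier K, IsProbabilityMeasure (P u) ∧
    ∀ A : Set (Euc n), MeasurableSet A →
      P u A = ∫⁻ v in A, ENNReal.ofReal
        (Real.pi ^ (((n : ℝ) - 1) / 2) /
            (Real.Gamma (((n : ℝ) + 1) / 2) * (surf K Set.univ).toReal) *
          (cosAngle ν u v * cosAngle ν v u / ‖u - v‖ ^ (n - 1))) ∂(surf K)

/-- Total variation distance between two measures: `sup_A |μ₁(A) - μ₂(A)|`. -/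
def tvDist {n : ℕ} (μ₁ μ₂ : Measure (Euc n)) : ℝ :=
  ⨆ A : Set (Euc n), |(μ₁ A).toReal - (μ₂ A).toReal|

open scoped Pointwise

/-! ### Volumes of subsets of the unit ball -/

set_option linter.unusedSectionVars false

section BallVolume

variable {E : Type*} [NormedAddCommGroup E] [InnerProductSpace ℝ E] [MeasurableSpace E]
  [BorelSpace E] [FiniteDimensional ℝ E] (μ : Measure E) [μ.IsAddHaarMeasure]

lemma real_closedBall (x : E) {r : ℝ} (hr : 0 ≤ r) :
    μ.real (closedBall x r) = r ^ Module.finrank ℝ E * μ.real (closedBall (0 : E) 1) := by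
  rw [Measure.addHaar_real_closedBall' μ x hr]

lemma real_closedBall_pos : 0 < μ.real (closedBall (0 : E) 1) := by
  rw [Measure.real, ENNReal.toReal_pos_iff]
  exact ⟨measure_closedBall_pos μ _ one_pos, measure_closedBall_lt_top⟩

lemma real_mono_of_ball {s t : Set E} {r : ℝ} (h : s ⊆ t) (ht : t ⊆ closedBall (0 : E) r) :
    μ.real s ≤ μ.real t :=
  measureReal_mono h ((measure_mono ht).trans_lt measure_closedBall_lt_top).ne

/-- A cap at height `t` lies in the ball of radius `√(1 - t²)` centred at `t • p`. -/
lemma cap_le {p : E} (hp : ‖p‖ ≤ 1) {t : ℝ} (ht : 0 ≤ t) :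
    μ.real ({z | t ≤ ⟪p, z⟫_ℝ} ∩ closedBall 0 1) ≤
      √(1 - t ^ 2) ^ Module.finrank ℝ E * μ.real (closedBall (0 : E) 1) := by
  rw [← real_closedBall μ (t • p) (Real.sqrt_nonneg _)]
  refine measureReal_mono ?_ measure_closedBall_lt_top.ne
  rintro z ⟨hz, hz1⟩
  simp only [Set.mem_ofPred_eq, mem_closedBall, dist_zero_right] at hz hz1
  rw [mem_closedBall, dist_eq_norm]
  apply Real.le_sqrt_of_sq_le
  rw [@norm_sub_sq_real, real_inner_smul_right, real_inner_comm, norm_smul, Real.norm_of_nonneg ht]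
  have h1 : ‖z‖ ^ 2 ≤ 1 := by nlinarith [norm_nonneg z]
  have h2 : (t * ‖p‖) ^ 2 ≤ t ^ 2 := by
    have : ‖p‖ ^ 2 ≤ 1 := by nlinarith [norm_nonneg p]
    nlinarith [sq_nonneg t]
  nlinarith

lemma sqrt_pow_le_exp {n d : ℕ} (hd : d + 1 = n) (hn : 1000 ≤ n) {k : ℝ} :
    √(1 - k / n) ^ d ≤ Real.exp (-(k / 2) * (1 - 1 / n)) := by
  have hn0 : (0 : ℝ) < n := by positivity
  have h1 : √(1 - k / n) ≤ Real.exp (-(k / (2 * n))) := by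
    apply Real.sqrt_le_iff.2 ⟨(Real.exp_pos _).le, ?_⟩
    rw [← Real.exp_nat_mul]
    have := Real.add_one_le_exp (-(k / n))
    have h : ((2 : ℕ) : ℝ) * -(k / (2 * n)) = -(k / n) := by push_cast; field_simp
    rw [h]; linarith
  calc √(1 - k / n) ^ d ≤ Real.exp (-(k / (2 * n))) ^ d := by gcongr
    _ = Real.exp (-(k / 2) * (1 - 1 / n)) := by
        rw [← Real.exp_nat_mul]
        congr 1
        have : (d : ℝ) = n - 1 := by rw [← hd]; push_cast; ring
        rw [this]; field_simp

/-- A cap of the unit ball at height `k / √n` has Gaussian-small volume. -/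
lemma cap_le' {n : ℕ} (hd : Module.finrank ℝ E + 1 = n) (hn : 1000 ≤ n) {p : E} (hp : ‖p‖ ≤ 1)
    {k : ℝ} (hk : 0 ≤ k) :
    μ.real ({z | k / √n ≤ ⟪p, z⟫_ℝ} ∩ closedBall 0 1) ≤
      Real.exp (-(k ^ 2 / 2) * (1 - 1 / n)) * μ.real (closedBall (0 : E) 1) := by
  have hn0 : (1000 : ℝ) ≤ n := by exact_mod_cast hn
  have hs : √(n : ℝ) ^ 2 = n := Real.sq_sqrt (by positivity)
  refine (cap_le μ hp (by positivity)).trans ?_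
  gcongr
  rw [div_pow, hs]
  exact sqrt_pow_le_exp hd hn

lemma one_sub_le_pow {n d : ℕ} (hd : d + 1 = n) (hn : 1000 ≤ n) {y : ℝ} (hy : 0 ≤ y)
    (hy1 : y ≤ 1) : 1 - y ≤ (1 - y / n) ^ d := by
  have hn0 : (1000 : ℝ) ≤ n := by exact_mod_cast hn
  have h := one_add_mul_le_pow (a := -(y / n)) (by
    have : y / n ≤ 1 := by rw [div_le_one (by linarith)]; linarith
    linarith) d
  have hdn : (d : ℝ) = n - 1 := by rw [← hd]; push_cast; ring
  have h2 : (d : ℝ) * (y / n) ≤ y := by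
    rw [hdn, mul_div_assoc', div_le_iff₀ (by linarith)]; nlinarith
  calc 1 - y ≤ 1 + d * (-(y / n)) := by linarith
    _ ≤ _ := h
    _ = _ := by ring

lemma half_ball (e : E) {a : ℝ} (ha : 0 ≤ a) :
    a ^ Module.finrank ℝ E * μ.real (closedBall (0 : E) 1) / 2 ≤
      μ.real ({z | 0 ≤ ⟪e, z⟫_ℝ} ∩ closedBall 0 a) := by
  set S := {z | 0 ≤ ⟪e, z⟫_ℝ} ∩ closedBall 0 a with hS
  have hneg : μ.real (-S) = μ.real S := by
    simp only [Measure.real, Measure.measure_neg]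
  have hc : closedBall (0 : E) a ⊆ S ∪ -S := by
    intro z hz
    rcases le_total 0 ⟪e, z⟫_ℝ with h | h
    · exact Or.inl ⟨h, hz⟩
    · right
      refine ⟨?_, ?_⟩
      · simpa [inner_neg_right] using h
      · simpa using hz
  have hsub : S ∪ -S ⊆ closedBall (0 : E) a := by
    rintro z (h | h)
    · exact h.2
    · simpa using h.2
  have h1 := real_mono_of_ball μ hc hsub
  have h2 : μ.real (S ∪ -S) ≤ μ.real S + μ.real (-S) := measureReal_union_le _ _
  rw [real_closedBall μ 0 ha] at h1
  linarith

lemma exp_bound_two {n : ℕ} (hn : 1000 ≤ n) {k c : ℝ} (hk : (1.99 : ℝ) ≤ k * (1 - 1 / 1000))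
    (hc : Real.exp (-1.99) ≤ c) : Real.exp (-k * (1 - 1 / n)) ≤ c := by
  refine le_trans (Real.exp_le_exp.2 ?_) hc
  have hn0 : (1000 : ℝ) ≤ n := by exact_mod_cast hn
  have : 1 / (n : ℝ) ≤ 1 / 1000 := by gcongr
  nlinarith

lemma exp_neg_num : Real.exp (-1.99) ≤ 0.14 := by
  have h := Real.exp_one_gt_d9
  have h2 : Real.exp (-1.99) * Real.exp 1 ^ 2 = Real.exp 0.01 := by
    rw [← Real.exp_nat_mul, ← Real.exp_add]; norm_num
  have h3 : Real.exp 0.01 ≤ 1.02 := by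
    have := Real.exp_bound_div_one_sub_of_interval (x := 0.01) (by norm_num) (by norm_num)
    linarith [show (1 : ℝ) / (1 - 0.01) ≤ 1.02 by norm_num]
  nlinarith [Real.exp_pos (-1.99)]

lemma exp_neg_num' : Real.exp (-4.4) ≤ 0.02 := by
  have h : Real.exp (-4.4) ≤ Real.exp (-1.99) * Real.exp (-1.99) := by
    rw [← Real.exp_add]; apply Real.exp_le_exp.2; norm_num
  nlinarith [exp_neg_num, Real.exp_pos (-1.99)]

/-- A unit direction has component at least `1 / (5√n)` on a fixed fraction of the ball:
translate the slab `0 ≤ ⟪e, z⟫ ≤ 2/√n` of a slightly smaller ball. -/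
lemma half_space_lower {n : ℕ} (hd : Module.finrank ℝ E + 1 = n) (hn : 1000 ≤ n) {e : E}
    (he : ‖e‖ = 1) :
    0.14 * μ.real (closedBall (0 : E) 1) ≤
      μ.real ({z | 0.2 / √n ≤ ⟪e, z⟫_ℝ} ∩ closedBall 0 1) := by
  have hn0 : (1000 : ℝ) ≤ n := by exact_mod_cast hn
  set s := √(n : ℝ) with hsdef
  have hs : s ^ 2 = n := Real.sq_sqrt (by positivity)
  have hs0 : 3 ≤ s := Real.le_sqrt_of_sq_le (by linarith)
  have hspos : 0 < s := by linarith
  set a : ℝ := 1 - 0.43 / n with ha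
  have hy : 0.43 / (n : ℝ) ≤ 1 := by rw [div_le_one (by linarith)]; linarith
  have hy0 : 0 ≤ 0.43 / (n : ℝ) := by positivity
  have ha0 : 0 ≤ a := by linarith
  have ha1 : a ≤ 1 := by linarith
  set T : Set E := {z | 0 ≤ ⟪e, z⟫_ℝ ∧ ⟪e, z⟫_ℝ ≤ 2 / s} ∩ closedBall 0 a with hT
  have h1 := half_ball μ e ha0
  have h2 := cap_le' μ hd hn he.le (k := 2) (by norm_num)
  have hexp : Real.exp (-((2 : ℝ) ^ 2 / 2) * (1 - 1 / n)) ≤ 0.14 :=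
    exp_bound_two hn (by norm_num) exp_neg_num
  have h3 : μ.real ({z | 0 ≤ ⟪e, z⟫_ℝ} ∩ closedBall 0 a) ≤
      μ.real T + μ.real ({z | 2 / s ≤ ⟪e, z⟫_ℝ} ∩ closedBall 0 1) := by
    refine le_trans (real_mono_of_ball μ (r := 1)
      (t := T ∪ ({z | 2 / s ≤ ⟪e, z⟫_ℝ} ∩ closedBall 0 1)) ?_ ?_)
      (measureReal_union_le _ _)
    · rintro z ⟨hz, hza⟩
      rcases le_total ⟪e, z⟫_ℝ (2 / s) with h | h
      · exact Or.inl ⟨⟨hz, h⟩, hza⟩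
      · exact Or.inr ⟨h, closedBall_subset_closedBall ha1 hza⟩
    · rintro z (h | h)
      · exact closedBall_subset_closedBall ha1 h.2
      · exact h.2
  have h4 : μ.real T ≤ μ.real ({z | 0.2 / s ≤ ⟪e, z⟫_ℝ} ∩ closedBall 0 1) := by
    have : μ.real T = μ.real ((fun z => (0.2 / s) • e + z) '' T) := by
      simp only [Measure.real, Set.image_add_left, measure_preimage_add]
    rw [this]
    refine real_mono_of_ball μ (r := 1) ?_ Set.inter_subset_right
    rintro _ ⟨z, ⟨⟨hz0, hz2⟩, hza⟩, rfl⟩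
    rw [mem_closedBall, dist_zero_right] at hza
    refine ⟨?_, ?_⟩
    · simp only [Set.mem_ofPred_eq, inner_add_right, real_inner_smul_right,
        real_inner_self_eq_norm_sq, he]
      linarith
    · rw [mem_closedBall, dist_zero_right, ← sq_le_one_iff₀ (norm_nonneg _), norm_add_sq_real,
        real_inner_smul_left, norm_smul, he, Real.norm_of_nonneg (by positivity)]
      have hz3 : ‖z‖ ^ 2 ≤ a ^ 2 := by gcongr
      have hz4 : 0.2 / s * ⟪e, z⟫_ℝ ≤ 0.2 / s * (2 / s) := by gcongr
      have e1 : 0.2 / s * (2 / s) = 0.4 / n := by rw [← hs]; field_simp; norm_num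
      have e2 : (0.2 / s * 1) ^ 2 = 0.04 / n := by rw [← hs]; field_simp; norm_num
      have e3 : a ^ 2 ≤ 1 - 0.84 / n := by
        have : 0.43 / (n : ℝ) ≤ 0.02 := by rw [div_le_iff₀ (by linarith)]; linarith
        have h5 : 0.84 / (n : ℝ) = 0.43 / n * (0.84 / 0.43) := by ring
        have h6 : a ^ 2 = 1 - (0.43 / n) * (2 - 0.43 / n) := by rw [ha]; ring
        rw [h5, h6]
        have : (0.84 / 0.43 : ℝ) ≤ 2 - 0.43 / n := by norm_num at *; linarith
        nlinarith
      rw [e1] at hz4; rw [e2]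
      have : 0.84 / (n : ℝ) = 2 * (0.4 / n) + 0.04 / n := by ring
      linarith
  have h5 := one_sub_le_pow hd hn (y := 0.43) (by norm_num) (by norm_num)
  have hβ := real_closedBall_pos μ
  have h6 : (1 - 0.43) * μ.real (closedBall (0 : E) 1) ≤
    a ^ Module.finrank ℝ E * μ.real (closedBall (0 : E) 1) := by gcongr
  have h7 : Real.exp (-((2 : ℝ) ^ 2 / 2) * (1 - 1 / n)) * μ.real (closedBall (0 : E) 1) ≤
    0.14 * μ.real (closedBall (0 : E) 1) := by gcongr
  linarith

/-- Volume of a cone intersected with an annulus, by scaling. -/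
lemma cone_annulus {C : Set E} (hC : MeasurableSet C) (hcone : ∀ r : ℝ, 0 < r → r • C = C)
    {b₁ b₂ : ℝ} (h1 : 0 < b₁) (h12 : b₁ ≤ b₂) :
    (b₂ ^ Module.finrank ℝ E - b₁ ^ Module.finrank ℝ E) * μ.real (C ∩ closedBall 0 1) =
      μ.real ((C ∩ closedBall 0 b₂) \ (C ∩ closedBall 0 b₁)) := by
  have key : ∀ b : ℝ, 0 < b →
      μ.real (C ∩ closedBall 0 b) = b ^ Module.finrank ℝ E * μ.real (C ∩ closedBall 0 1) := by
    intro b hb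
    have : C ∩ closedBall (0 : E) b = b • (C ∩ closedBall 0 1) := by
      rw [Set.smul_set_inter₀ hb.ne', hcone b hb, smul_unitClosedBall_of_nonneg hb.le]
    rw [this, Measure.real, Measure.addHaar_smul_of_nonneg μ hb.le, ENNReal.toReal_mul,
      ENNReal.toReal_ofReal (by positivity), Measure.real]
  rw [measureReal_sdiff (Set.inter_subset_inter_right _ (closedBall_subset_closedBall h12))
    (hC.inter measurableSet_closedBall)
    ((measure_mono Set.inter_subset_right).trans_lt measure_closedBall_lt_top).ne,
    key _ h1, key _ (h1.trans_le h12)]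
  ring

end BallVolume

section BallVolume2

variable {E : Type*} [NormedAddCommGroup E] [InnerProductSpace ℝ E] [MeasurableSpace E]
  [BorelSpace E] [FiniteDimensional ℝ E] (μ : Measure E) [μ.IsAddHaarMeasure]

lemma half_space_arith {c P R y i : ℝ} (h : c ^ 2 + P ^ 2 = 1) (hc : -(1 / 4) < c) (hP : 0 ≤ P)
    (hi : 0 < i) (hR : R ≤ 0.6 * i) (hR' : 0.1 * i ≤ R) (hy : 0.199 * i ≤ y) :
    0.02 * i ≤ c * R + P * y := by
  rcases le_total 0 c with h0 | h0
  · have hsum : 1 ≤ c + P := by nlinarith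
    have h1 : c * (0.1 * i) ≤ c * R := by gcongr
    have h2 : P * (0.1 * i) ≤ P * y := by gcongr; linarith
    nlinarith
  · have hp1 : 0.96 ≤ P := by nlinarith
    have h1 : 0.96 * (0.199 * i) ≤ P * y := by gcongr
    have h2 : (-c) * R ≤ (1 / 4) * (0.6 * i) := by
      apply mul_le_mul <;> linarith
    linarith

/-- Dilating by `1 + 0.3 i²` decreases the height `R` by at least `0.098 i`. -/
lemma dilation_arith {a i R R' c y : ℝ} (hi : 0 < i) (hi1 : i ^ 2 ≤ 1 / 1000)
    (hR0 : 0 ≤ R) (hR'0 : 0 ≤ R') (hRsq : R ^ 2 = 1 - a ^ 2)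
    (hR'sq : R' ^ 2 = 1 - ((1 + 0.3 * i ^ 2) * a) ^ 2) (hR : R ≤ 3 * i) (hc : c ≤ -(1 / 4))
    (hy : -(0.002 * i) ≤ c * R + y) : 0.02 * i ≤ c * R' + (1 + 0.3 * i ^ 2) * y := by
  have hasq : 1 - 9 / 1000 ≤ a ^ 2 := by nlinarith
  have hdiff : 0.59 * i ^ 2 ≤ R ^ 2 - R' ^ 2 := by
    have e : R ^ 2 - R' ^ 2 = (0.6 * i ^ 2 + 0.09 * (i ^ 2) ^ 2) * a ^ 2 := by
      rw [hRsq, hR'sq]; ring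
    have h1 : 0.6 * i ^ 2 * (1 - 9 / 1000) ≤ (0.6 * i ^ 2 + 0.09 * (i ^ 2) ^ 2) * a ^ 2 := by
      apply mul_le_mul _ hasq (by norm_num) (by positivity)
      nlinarith [sq_nonneg (i ^ 2)]
    rw [e]; nlinarith [sq_nonneg i]
  have hR'R : R' ≤ R := abs_le_of_sq_le_sq' (by nlinarith [sq_nonneg i]) hR0 |>.2
  have hRR : 0.098 * i ≤ R - R' := by
    by_contra hcon
    push Not at hcon
    have h5 : R ^ 2 - R' ^ 2 = (R - R') * (R + R') := by ring
    have h6 : R + R' ≤ 6 * i := by linarith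
    have h7 : (R - R') * (R + R') ≤ (0.098 * i) * (6 * i) :=
      mul_le_mul hcon.le h6 (by positivity) (by positivity)
    have h8 : (0.098 * i) * (6 * i) = 0.588 * i ^ 2 := by ring
    have : 0 < i ^ 2 := by positivity
    linarith
  have h7 : (1 / 4) * (0.098 * i) ≤ -c * (R - R') := by
    apply mul_le_mul <;> linarith
  have h8 : -(0.002 * i) ≤ y := by nlinarith
  have h9 : -(0.002 * i) ≤ 0.3 * i ^ 2 * y := by
    have h10 : 0.3 * i ^ 2 * (-(0.002 * i)) ≤ 0.3 * i ^ 2 * y := by gcongr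
    have h11 : 0.3 * i ^ 2 * (0.002 * i) ≤ 1 * (0.002 * i) := by gcongr; linarith
    linarith
  linarith

/-- If `A` contains the shadow of every direction whose component along the unit vector `(c, p)` is
at least `1 / (50√n)`, and `(c, p)` does not point steeply downwards, then `A` fills more than a
fraction `1/128` of the disc: it contains the part of a cone around `p` in a shell near the
boundary of the disc, where the height of the direction is of order `1/√n`. -/
lemma half_space_mass {n : ℕ} (hd : Module.finrank ℝ E + 1 = n) (hn : 1000 ≤ n) {c : ℝ} {p : E}
    (hcp : c ^ 2 + ‖p‖ ^ 2 = 1) (hc : -(1 / 4) < c) {A : Set E} (hAB : A ⊆ closedBall 0 1)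
    (hA : ∀ z : E, ‖z‖ < 1 → 1 / (50 * √n) ≤ c * √(1 - ‖z‖ ^ 2) + ⟪p, z⟫_ℝ → z ∈ A) :
    μ.real (closedBall (0 : E) 1) / 128 < μ.real A := by
  have hn0 : (1000 : ℝ) ≤ n := by exact_mod_cast hn
  set s := √(n : ℝ) with hsdef
  have hs : s ^ 2 = n := Real.sq_sqrt (by positivity)
  have hs0 : 3 ≤ s := Real.le_sqrt_of_sq_le (by linarith)
  have hspos : 0 < s := by linarith
  have hnt : Nontrivial E := Module.nontrivial_of_finrank_pos (R := ℝ) (by omega)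
  -- `p = ‖p‖ • e` for a unit vector `e`
  obtain ⟨e, he, hpe⟩ : ∃ e : E, ‖e‖ = 1 ∧ p = ‖p‖ • e := by
    by_cases hp : p = 0
    · obtain ⟨e, he⟩ := exists_norm_eq E (zero_le_one (α := ℝ))
      exact ⟨e, he, by simp [hp]⟩
    · refine ⟨‖p‖⁻¹ • p, ?_, ?_⟩
      · rw [norm_smul, norm_inv, norm_norm, inv_mul_cancel₀ (norm_ne_zero_iff.2 hp)]
      · rw [smul_smul, mul_inv_cancel₀ (norm_ne_zero_iff.2 hp), one_smul]
  set C : Set E := {z | 0.2 / s * ‖z‖ ≤ ⟪e, z⟫_ℝ} with hCdef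
  have hCm : MeasurableSet C := measurableSet_le (by fun_prop) (by fun_prop)
  have hCc : ∀ r : ℝ, 0 < r → r • C = C := by
    intro r hr
    ext z
    rw [Set.mem_smul_set_iff_inv_smul_mem₀ hr.ne']
    simp only [hCdef, Set.mem_ofPred_eq, norm_smul, real_inner_smul_right, norm_inv,
      Real.norm_of_nonneg hr.le]
    rw [show 0.2 / s * (r⁻¹ * ‖z‖) = r⁻¹ * (0.2 / s * ‖z‖) by ring]
    exact mul_le_mul_iff_right₀ (inv_pos.2 hr)
  set b₁ : ℝ := 1 - 0.18 / n with hb1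
  set b₂ : ℝ := 1 - 0.006 / n with hb2
  have hi : (1 : ℝ) / n ≤ 1 / 1000 := by gcongr
  have hi0 : 0 < (1 : ℝ) / n := by positivity
  have e18 : 0.18 / (n : ℝ) = 0.18 * (1 / n) := by ring
  have e06 : 0.006 / (n : ℝ) = 0.006 * (1 / n) := by ring
  rw [e18] at hb1
  rw [e06] at hb2
  have hβ := real_closedBall_pos μ
  have hcone := cone_annulus μ hCm hCc (b₁ := b₁) (b₂ := b₂) (by linarith) (by linarith)
  have hClow : 0.14 * μ.real (closedBall (0 : E) 1) ≤ μ.real (C ∩ closedBall 0 1) := by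
    refine (half_space_lower μ hd hn he).trans ?_
    refine real_mono_of_ball μ (r := 1) ?_ Set.inter_subset_right
    rintro z ⟨hz, hz1⟩
    refine ⟨?_, hz1⟩
    simp only [mem_closedBall, dist_zero_right] at hz1
    refine le_trans ?_ (show 0.2 / s ≤ ⟪e, z⟫_ℝ from hz)
    exact mul_le_of_le_one_right (by positivity) hz1
  have hsub : (C ∩ closedBall 0 b₂) \ (C ∩ closedBall 0 b₁) ⊆ A := by
    rintro z ⟨⟨hzC, hz2⟩, hz1⟩
    have hz1' : b₁ < ‖z‖ := by
      by_contra h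
      exact hz1 ⟨hzC, by simpa using h⟩
    simp only [mem_closedBall, dist_zero_right] at hz2
    simp only [hCdef, Set.mem_ofPred_eq] at hzC
    apply hA z (by linarith)
    set R := √(1 - ‖z‖ ^ 2) with hR
    have hin : 1 / (n : ℝ) = (1 / s) ^ 2 := by rw [← hs]; field_simp
    have hRup : R ≤ 0.6 / s := by
      apply Real.sqrt_le_iff.2 ⟨by positivity, ?_⟩
      have : (0.6 / s) ^ 2 = 0.36 * (1 / n) := by rw [hin]; ring
      rw [this]
      nlinarith
    have hRlo : 0.1 / s ≤ R := by
      apply Real.le_sqrt_of_sq_le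
      have : (0.1 / s) ^ 2 = 0.01 * (1 / n) := by rw [hin]; ring
      rw [this]
      nlinarith [norm_nonneg z]
    have hez : 0.199 / s ≤ ⟪e, z⟫_ℝ := by
      refine le_trans ?_ hzC
      rw [div_mul_eq_mul_div]
      gcongr
      linarith
    have hsi : 0 < 1 / s := by positivity
    rw [hpe, real_inner_smul_left]
    rw [show 1 / (50 * s) = 0.02 * (1 / s) by field_simp; norm_num]
    rw [show 0.6 / s = 0.6 * (1 / s) by ring] at hRup
    rw [show 0.1 / s = 0.1 * (1 / s) by ring] at hRlo
    rw [show 0.199 / s = 0.199 * (1 / s) by ring] at hez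
    exact half_space_arith hcp hc (norm_nonneg p) hsi hRup hRlo hez
  have hle := real_mono_of_ball μ hsub hAB
  have h5 := one_sub_le_pow hd hn (y := 0.006) (by norm_num) (by norm_num)
  rw [e06, ← hb2] at h5
  have h6 : b₁ ^ Module.finrank ℝ E ≤ 0.85 := by
    have h61 : b₁ ≤ Real.exp (-(0.18 * (1 / n))) := by
      have := Real.add_one_le_exp (-(0.18 * (1 / (n : ℝ))))
      linarith
    have hdn : (Module.finrank ℝ E : ℝ) = n - 1 := by rw [← hd]; push_cast; ring
    have h62 : b₁ ^ Module.finrank ℝ E ≤ Real.exp (-(0.18 * (1 - 1 / n))) := by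
      calc b₁ ^ Module.finrank ℝ E ≤ Real.exp (-(0.18 * (1 / n))) ^ Module.finrank ℝ E := by
            apply pow_le_pow_left₀ (by linarith) h61
        _ = _ := by
            rw [← Real.exp_nat_mul, hdn]
            congr 1
            field_simp
    refine h62.trans ?_
    rw [Real.exp_neg]
    have := Real.add_one_le_exp (0.18 * (1 - 1 / (n : ℝ)))
    have h7 : (1.178 : ℝ) ≤ Real.exp (0.18 * (1 - 1 / (n : ℝ))) := by linarith
    calc (Real.exp (0.18 * (1 - 1 / (n : ℝ))))⁻¹ ≤ (1.178)⁻¹ := by gcongr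
      _ ≤ _ := by norm_num
  rw [← hcone] at hle
  have h8 : 0.144 * (0.14 * μ.real (closedBall (0 : E) 1)) ≤
      (b₂ ^ Module.finrank ℝ E - b₁ ^ Module.finrank ℝ E) * μ.real (C ∩ closedBall 0 1) := by
    exact mul_le_mul (by linarith) hClow (by positivity) (by linarith)
  linarith

/-- All but half of the unit disc consists of shadows `z` of directions
`ω = (√(1 - ‖z‖²), z)` that avoid `A`, are nearly tangential, have small component along `q`, and
have component at most `-0.002 / √n` along every `m ∈ M`. Here `M` is a family of unit vectors such
that `A` contains the directions with component at least `1 / (50√n)` along some `m ∈ M`. As `A` is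
small, `half_space_mass` makes the height of each `m` at most `-1/4`; a dilation of the disc then
carries the directions violating the last condition into `A`, up to a thin shell at the boundary. -/
lemma bad_mass {n : ℕ} (hd : Module.finrank ℝ E + 1 = n) (hn : 1000 ≤ n)
    {A : Set E} (hAB : A ⊆ closedBall 0 1)
    (hAm : μ.real A ≤ μ.real (closedBall (0 : E) 1) / 128) (M : Set (ℝ × E))
    (hM : ∀ m ∈ M, m.1 ^ 2 + ‖m.2‖ ^ 2 = 1)
    (hMA : ∀ m ∈ M, ∀ z : E, ‖z‖ < 1 →
      1 / (50 * √n) ≤ m.1 * √(1 - ‖z‖ ^ 2) + ⟪m.2, z⟫_ℝ → z ∈ A)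
    {q : E} (hq : ‖q‖ ≤ 1) :
    μ.real {z : E | ‖z‖ < 1 ∧ ¬ (z ∉ A ∧ √(1 - ‖z‖ ^ 2) ≤ 3 / √n ∧ ⟪q, z⟫_ℝ ≤ 3 / √n ∧
      ∀ m ∈ M, m.1 * √(1 - ‖z‖ ^ 2) + ⟪m.2, z⟫_ℝ < -(0.002 / √n))} ≤
      μ.real (closedBall (0 : E) 1) / 2 := by
  have hn0 : (1000 : ℝ) ≤ n := by exact_mod_cast hn
  set s := √(n : ℝ) with hsdef
  have hs : s ^ 2 = n := Real.sq_sqrt (by positivity)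
  have hs0 : 3 ≤ s := Real.le_sqrt_of_sq_le (by linarith)
  have hspos : 0 < s := by linarith
  have hβ := real_closedBall_pos μ
  have hM1 : ∀ m ∈ M, m.1 ≤ -(1 / 4) := by
    intro m hm
    by_contra hc
    push Not at hc
    exact absurd (half_space_mass μ hd hn (hM m hm) hc hAB (hMA m hm)) (not_lt.2 hAm)
  have hi : (1 : ℝ) / n ≤ 1 / 1000 := by gcongr
  have hi0 : 0 < (1 : ℝ) / n := by positivity
  have hin : 1 / (n : ℝ) = (1 / s) ^ 2 := by rw [← hs]; field_simp
  have hsi : 0 < 1 / s := by positivity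
  set D : Set E := {z | ‖z‖ ≤ 1 - 0.31 / n ∧ √(1 - ‖z‖ ^ 2) ≤ 3 / s ∧
    ∃ m ∈ M, -(0.002 / s) ≤ m.1 * √(1 - ‖z‖ ^ 2) + ⟪m.2, z⟫_ℝ} with hD
  set S₁ : Set E := closedBall 0 √(1 - 9 / n) with hS1
  set S₂ : Set E := {z | 3 / s ≤ ⟪q, z⟫_ℝ} ∩ closedBall 0 1 with hS2
  set S₃ : Set E := closedBall 0 1 \ closedBall 0 (1 - 0.31 / n) with hS3
  -- dilating by `1 + 0.3 / n` lowers `√(1 - ‖z‖²)` enough to push `D` into `A`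
  have hDA : μ.real D ≤ μ.real A := by
    set t : ℝ := 0.3 / n with ht
    have ht' : t = 0.3 * (1 / n) := by rw [ht]; ring
    have e31 : 0.31 / (n : ℝ) = 0.31 * (1 / n) := by ring
    have hsub : (1 + t) • D ⊆ A := by
      rintro _ ⟨z, ⟨hz1, hzR, m, hm, hmz⟩, rfl⟩
      rw [e31] at hz1
      have hz0 := norm_nonneg z
      have hnorm : ‖(1 + t) • z‖ = (1 + t) * ‖z‖ := by
        rw [norm_smul, Real.norm_of_nonneg (by rw [ht']; linarith)]
      have hlt : (1 + t) * ‖z‖ < 1 := by rw [ht']; nlinarith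
      apply hMA m hm _ (by simpa only [hnorm] using hlt)
      simp only [hnorm, real_inner_smul_right]
      set R := √(1 - ‖z‖ ^ 2) with hR
      set R' := √(1 - ((1 + t) * ‖z‖) ^ 2) with hR'
      have hRsq : R ^ 2 = 1 - ‖z‖ ^ 2 := Real.sq_sqrt (by nlinarith)
      have hR'sq : R' ^ 2 = 1 - ((1 + t) * ‖z‖) ^ 2 := Real.sq_sqrt (by
        have : 0 ≤ (1 + t) * ‖z‖ := by rw [ht']; positivity
        nlinarith)
      have hR0 : 0 ≤ R := Real.sqrt_nonneg _
      have hR'0 : 0 ≤ R' := Real.sqrt_nonneg _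
      rw [show 1 / (50 * s) = 0.02 * (1 / s) by field_simp; norm_num]
      rw [show 0.002 / s = 0.002 * (1 / s) by ring] at hmz
      rw [show 3 / s = 3 * (1 / s) by ring] at hzR
      rw [ht', hin] at hR'sq ⊢
      exact dilation_arith hsi (hin ▸ hi) hR0 hR'0 hRsq hR'sq hzR (hM1 m hm) hmz
    have hle := real_mono_of_ball μ hsub hAB
    refine le_trans ?_ hle
    have ht0 : 0 ≤ t := by rw [ht']; positivity
    rw [Measure.real, Measure.real, Measure.addHaar_smul_of_nonneg μ (by linarith),
      ENNReal.toReal_mul, ENNReal.toReal_ofReal (by positivity)]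
    exact le_mul_of_one_le_left ENNReal.toReal_nonneg (one_le_pow₀ (by linarith))
  have hm1 : μ.real S₁ ≤ 0.02 * μ.real (closedBall (0 : E) 1) := by
    rw [hS1, real_closedBall μ 0 (Real.sqrt_nonneg _)]
    gcongr
    refine (sqrt_pow_le_exp hd hn).trans ((Real.exp_le_exp.2 ?_).trans exp_neg_num')
    nlinarith
  have hm2 : μ.real S₂ ≤ 0.02 * μ.real (closedBall (0 : E) 1) := by
    refine (cap_le' μ hd hn hq (by norm_num)).trans ?_
    gcongr
    refine (Real.exp_le_exp.2 ?_).trans exp_neg_num'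
    nlinarith
  have hm3 : μ.real S₃ ≤ 0.31 * μ.real (closedBall (0 : E) 1) := by
    have h31 : (0 : ℝ) ≤ 1 - 0.31 / n := by
      rw [show 0.31 / (n : ℝ) = 0.31 * (1 / n) by ring]; linarith
    have h31' : (1 : ℝ) - 0.31 / n ≤ 1 := by
      rw [show 0.31 / (n : ℝ) = 0.31 * (1 / n) by ring]; linarith
    rw [hS3, measureReal_sdiff (closedBall_subset_closedBall h31') measurableSet_closedBall
      measure_closedBall_lt_top.ne, real_closedBall μ 0 h31]
    have := one_sub_le_pow hd hn (y := 0.31) (by norm_num) (by norm_num)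
    nlinarith
  have hcover : {z : E | ‖z‖ < 1 ∧ ¬ (z ∉ A ∧ √(1 - ‖z‖ ^ 2) ≤ 3 / s ∧ ⟪q, z⟫_ℝ ≤ 3 / s ∧
      ∀ m ∈ M, m.1 * √(1 - ‖z‖ ^ 2) + ⟪m.2, z⟫_ℝ < -(0.002 / s))} ⊆
      A ∪ (S₁ ∪ (S₂ ∪ (S₃ ∪ D))) := by
    rintro z ⟨hz1, hz⟩
    by_contra hcon
    simp only [Set.mem_union, not_or] at hcon
    obtain ⟨hzA, hz1', hz2, hz3, hzD⟩ := hcon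
    have hzR : √(1 - ‖z‖ ^ 2) ≤ 3 / s := by
      rw [hS1, mem_closedBall, dist_zero_right, not_le,
        Real.sqrt_lt' (lt_of_le_of_ne (norm_nonneg z) ?_)] at hz1'
      · apply Real.sqrt_le_iff.2 ⟨by positivity, ?_⟩
        rw [div_pow, hs]
        linarith
      · rintro h0
        linarith [Real.sqrt_nonneg (1 - 9 / (n : ℝ))]
    have hzq : ⟪q, z⟫_ℝ ≤ 3 / s := by
      by_contra h
      exact hz2 ⟨(not_le.1 h).le, by simpa using hz1.le⟩
    have hz31 : ‖z‖ ≤ 1 - 0.31 / n := by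
      by_contra h
      exact hz3 ⟨by simpa using hz1.le, by simpa using h⟩
    apply hz
    refine ⟨hzA, hzR, hzq, fun m hm => ?_⟩
    by_contra h
    exact hzD ⟨hz31, hzR, m, hm, not_lt.1 h⟩
  have hball : A ∪ (S₁ ∪ (S₂ ∪ (S₃ ∪ D))) ⊆ closedBall (0 : E) 1 := by
    refine Set.union_subset hAB (Set.union_subset ?_ (Set.union_subset ?_ (Set.union_subset ?_ ?_)))
    · exact closedBall_subset_closedBall (Real.sqrt_le_one.2 (by
        have : (0 : ℝ) ≤ 9 / n := by positivity
        linarith))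
    · exact Set.inter_subset_right
    · exact Set.sdiff_subset
    · rintro z ⟨hz, -⟩
      rw [mem_closedBall, dist_zero_right]
      have : (0 : ℝ) ≤ 0.31 / n := by positivity
      linarith
  have h1 := real_mono_of_ball μ hcover hball
  have u1 : μ.real (A ∪ (S₁ ∪ (S₂ ∪ (S₃ ∪ D)))) ≤ _ := measureReal_union_le _ _
  have u2 : μ.real (S₁ ∪ (S₂ ∪ (S₃ ∪ D))) ≤ _ := measureReal_union_le _ _
  have u3 : μ.real (S₂ ∪ (S₃ ∪ D)) ≤ _ := measureReal_union_le _ _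
  have u4 : μ.real (S₃ ∪ D) ≤ _ := measureReal_union_le _ _
  linarith

end BallVolume2

/-! ### The Jacobian of the shadow map -/

section Linear

variable {V : Type*} [NormedAddCommGroup V] [InnerProductSpace ℝ V]

lemma finrank_orth {d : ℕ} (hV : Module.finrank ℝ V = d + 1) {b : V} (hb : ‖b‖ = 1) :
    Module.finrank ℝ (ℝ ∙ b)ᗮ = d := by
  have : Fact (Module.finrank ℝ V = d + 1) := ⟨hV⟩
  exact Submodule.finrank_orthogonal_span_singleton (by rintro rfl; simp at hb)

lemma hausdorff_isAddHaar {W : Type*} [NormedAddCommGroup W] [InnerProductSpace ℝ W]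
    [FiniteDimensional ℝ W] [MeasurableSpace W] [BorelSpace W] {d : ℕ}
    (hW : Module.finrank ℝ W = d) : (μH[(d : ℝ)] : Measure W).IsAddHaarMeasure := by
  subst hW
  exact isAddHaarMeasure_hausdorffMeasure

/-- A linear map sending the hyperplane `bᗮ` to `aᗮ` and inducing an isometry of the quotients
scales `d`-dimensional measure on `bᗮ` by its full determinant. -/
lemma hausdorff_image_linear [FiniteDimensional ℝ V] [MeasurableSpace V] [BorelSpace V] {d : ℕ}
    (hV : Module.finrank ℝ V = d + 1) {a b : V} (ha : ‖a‖ = 1) (hb : ‖b‖ = 1)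
    (L : V →ₗ[ℝ] V) (hL : ∀ w, ⟪a, L w⟫_ℝ = ⟪b, w⟫_ℝ) {Z : Set V}
    (hZ : ∀ z ∈ Z, ⟪b, z⟫_ℝ = 0) :
    μH[(d : ℝ)] (L '' Z) = ENNReal.ofReal |LinearMap.det L| * μH[(d : ℝ)] Z := by
  set R := (ℝ ∙ (a - b))ᗮ.reflection with hR
  have hRa : R a = b := Submodule.reflection_sub (by rw [ha, hb])
  set L' : V →ₗ[ℝ] V := R.toLinearMap ∘ₗ L with hL'
  have hLb : ∀ w, ⟪b, L' w⟫_ℝ = ⟪b, w⟫_ℝ := by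
    intro w
    rw [← hL w, ← hRa]
    exact R.inner_map_map _ _
  set W := (ℝ ∙ b)ᗮ with hW
  have memW : ∀ w, w ∈ W ↔ ⟪b, w⟫_ℝ = 0 := fun w =>
    Submodule.mem_orthogonal_singleton_iff_inner_right
  have he : W ≤ W.comap L' := by
    intro w hw
    rw [Submodule.mem_comap, memW, hLb, ← memW]; exact hw
  have hQ : W.mapQ W L' he = LinearMap.id := LinearMap.ext fun x ↦ by
    induction x using Submodule.Quotient.induction_on with
    | _ w =>
      rw [Submodule.mapQ_apply, LinearMap.id_apply, Submodule.Quotient.eq, memW, inner_sub_right,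
        hLb, sub_self]
  have hdet := L'.det_eq_det_mul_det W he
  rw [hQ, LinearMap.det_id, mul_one] at hdet
  have hdet' : |LinearMap.det L'| = |LinearMap.det L| := by
    rw [hL', LinearMap.det_comp, abs_mul]
    have : LinearMap.det R.toLinearMap = _ := Submodule.det_reflection (ℝ ∙ (a - b))ᗮ
    have h2 : |LinearMap.det R.toLinearMap| = 1 := by rw [this, abs_pow]; simp
    rw [h2, one_mul]
  have : (μH[(d : ℝ)] : Measure W).IsAddHaarMeasure := hausdorff_isAddHaar (finrank_orth hV hb)
  have hiso : Isometry (Subtype.val : W → V) := isometry_subtype_coe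
  have hd : (0 : ℝ) ≤ d := Nat.cast_nonneg d
  set Z0 : Set W := Subtype.val ⁻¹' Z
  have hZ0 : Z = Subtype.val '' Z0 := by
    ext z; constructor
    · intro hz; exact ⟨⟨z, (memW z).2 (hZ z hz)⟩, hz, rfl⟩
    · rintro ⟨w, hw, rfl⟩; exact hw
  have h1 : μH[(d : ℝ)] (L '' Z) = μH[(d : ℝ)] (L' '' Z) := by
    rw [hL', LinearMap.coe_comp, Set.image_comp]
    exact (R.isometry.hausdorffMeasure_image (Or.inl hd) _).symm
  have h2 : L' '' Z = Subtype.val '' ((L'.restrict (p := W) (q := W) he) '' Z0) := by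
    rw [hZ0, Set.image_image, Set.image_image]
    rfl
  rw [h1, h2, hiso.hausdorffMeasure_image (Or.inl hd), Measure.addHaar_image_linearMap, hZ0,
    hiso.hausdorffMeasure_image (Or.inl hd), ← hdet', hdet]

/-- The linear map which on `bᗮ` is the derivative, at a point at distance `ρ` from the origin in
the direction `ω`, of radial projection to the sphere followed by orthogonal projection to `aᗮ`,
and which sends `bᗮ` into `aᗮ`. -/
def derivMap (a b ω : V) (ρ : ℝ) : V →ₗ[ℝ] V :=
  ρ⁻¹ • (LinearMap.id - (innerₗ V ω).smulRight ω
    - (innerₗ V a - ⟪a, ω⟫_ℝ • innerₗ V ω).smulRight a) + (innerₗ V b).smulRight a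

lemma derivMap_apply (a b ω : V) (ρ : ℝ) (w : V) :
    derivMap a b ω ρ w = ρ⁻¹ • (w - ⟪ω, w⟫_ℝ • ω - (⟪a, w⟫_ℝ - ⟪a, ω⟫_ℝ * ⟪ω, w⟫_ℝ) • a)
      + ⟪b, w⟫_ℝ • a := by
  simp [derivMap]

lemma inner_derivMap {a : V} (b ω : V) (ρ : ℝ) (ha : ‖a‖ = 1) (w : V) :
    ⟪a, derivMap a b ω ρ w⟫_ℝ = ⟪b, w⟫_ℝ := by
  rw [derivMap_apply]
  simp only [inner_add_right, inner_smul_right, inner_sub_right, real_inner_self_eq_norm_sq, ha]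
  ring

/-- `derivMap` is `ρ⁻¹` times a product of three transvections, whose determinants multiply up. -/
lemma det_derivMap [FiniteDimensional ℝ V] {d : ℕ} (hV : Module.finrank ℝ V = d + 1) {a ω : V}
    (b : V) {ρ : ℝ}
    (ha : ‖a‖ = 1) (hω : ‖ω‖ = 1) (hρ : 0 < ρ) (hs : ⟪a, ω⟫_ℝ ≠ 0) :
    LinearMap.det (derivMap a b ω ρ) = ⟪a, ω⟫_ℝ * ⟪b, ω⟫_ℝ / ρ ^ d := by
  have key : derivMap a b ω ρ = ρ⁻¹ •
      (LinearMap.transvection ((⟪a, ω⟫_ℝ)⁻¹ • innerₗ V ω - innerₗ V a) a ∘ₗ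
        (LinearMap.transvection (innerₗ V ω) (a - ω) ∘ₗ
          LinearMap.transvection (ρ • innerₗ V b - innerₗ V ω) ω)) := by
    ext w
    rw [derivMap_apply]
    simp only [LinearMap.smul_apply, LinearMap.comp_apply, LinearMap.transvection.apply,
      LinearMap.sub_apply, innerₗ_apply_apply, smul_eq_mul, inner_add_right, inner_smul_right,
      inner_sub_right, real_inner_self_eq_norm_sq, ha, hω, real_inner_comm a ω]
    rw [show ⟪b, w⟫_ℝ • a = ρ⁻¹ • ((ρ * ⟪b, w⟫_ℝ) • a) by rw [smul_smul]; field_simp, ← smul_add]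
    congr 1
    match_scalars <;> field_simp <;> ring
  rw [key, LinearMap.det_smul, LinearMap.det_comp, LinearMap.det_comp,
    LinearMap.transvection.det, LinearMap.transvection.det, LinearMap.transvection.det, hV]
  simp only [LinearMap.sub_apply, LinearMap.smul_apply, innerₗ_apply_apply, smul_eq_mul,
      inner_sub_right, real_inner_self_eq_norm_sq, ha, hω, real_inner_comm a ω,
      inv_pow, pow_succ]
  field_simp
  ring

end Linear

/-! ### The area formula for the shadow map -/

section Local

variable {V : Type*} [NormedAddCommGroup V] [InnerProductSpace ℝ V]

/-- The orthogonal projection to `aᗮ` (for a unit vector `a`) of the direction from `u` to `x`. -/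
def shadow (a u x : V) : V :=
  ‖x - u‖⁻¹ • (x - u) - (‖x - u‖⁻¹ * ⟪a, x - u⟫_ℝ) • a

lemma inner_shadow {a : V} (ha : ‖a‖ = 1) (u x : V) : ⟪a, shadow a u x⟫_ℝ = 0 := by
  simp [shadow, inner_sub_right, inner_smul_right, ha]

/-- The derivative of `shadow a u` agrees on `bᗮ` with `derivMap`, for every `b`. -/
lemma hasStrictFDerivAt_shadow (a u x₀ : V) (hx : x₀ ≠ u) :
    ∃ D : V →L[ℝ] V, HasStrictFDerivAt (shadow a u) D x₀ ∧ ∀ b w : V,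
      D w + ⟪b, w⟫_ℝ • a = derivMap a b (‖x₀ - u‖⁻¹ • (x₀ - u)) ‖x₀ - u‖ w := by
  have hpos : 0 < ‖x₀ - u‖ := norm_pos_iff.2 (sub_ne_zero.2 hx)
  have h0 : HasStrictFDerivAt (fun x : V => x - u) (ContinuousLinearMap.id ℝ V) x₀ :=
    (hasStrictFDerivAt_id x₀).sub_const u
  have h1 : HasStrictFDerivAt (fun x : V => ‖x - u‖ ^ 2) _ x₀ :=
    (hasStrictFDerivAt_norm_sq (x₀ - u)).comp x₀ h0
  have h2 : HasStrictFDerivAt (fun x : V => √(‖x - u‖ ^ 2)) _ x₀ :=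
    h1.sqrt (by positivity)
  simp only [Real.sqrt_sq (norm_nonneg _)] at h2
  have h3 : HasStrictFDerivAt (fun x : V => ‖x - u‖⁻¹) _ x₀ :=
    (hasStrictDerivAt_inv hpos.ne').comp_hasStrictFDerivAt x₀ h2
  have h4 := h3.smul h0
  have h5 : HasStrictFDerivAt (fun x : V => ⟪a, x - u⟫_ℝ) _ x₀ :=
    (innerSL ℝ a).hasStrictFDerivAt.comp x₀ h0
  have h6 := h4.sub ((h3.mul h5).smul_const a)
  refine ⟨_, h6, fun b w => ?_⟩
  rw [derivMap_apply]
  simp [inner_smul_left, inner_smul_right]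
  rw [← inner_sub_left]
  match_scalars <;> field_simp <;> ring

lemma exists_pow_le (d : ℕ) {t : ℝ≥0} (ht : 1 < t) : ∃ K : ℝ≥0, 1 < K ∧ K ^ d ≤ t := by
  have hc : Tendsto (fun K : ℝ≥0 => K ^ d) (𝓝[>] 1) (𝓝 1) := by
    have : ContinuousAt (fun K : ℝ≥0 => K ^ d) 1 := by fun_prop
    have h := this.tendsto
    simp only [one_pow] at h
    exact h.mono_left nhdsWithin_le_nhds
  obtain ⟨K, h1, h2⟩ := ((hc.eventually (gt_mem_nhds ht)).and self_mem_nhdsWithin).exists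
  exact ⟨K, h2, h1.le⟩

/-- A map close to the identity in the Lipschitz sense nearly preserves Hausdorff measure. -/
lemma hausdorff_approx {V : Type*} [NormedAddCommGroup V] [MeasurableSpace V] [BorelSpace V]
    (d : ℕ) {K : ℝ≥0} (hK : 1 < K)
    {f : V → V} {X : Set V}
    (hf : ∀ x ∈ X, ∀ y ∈ X, ‖f x - f y - (x - y)‖ ≤ (1 - (K : ℝ)⁻¹) * ‖x - y‖) :
    μH[(d : ℝ)] (f '' X) ≤ (K : ℝ≥0∞) ^ d * μH[(d : ℝ)] X ∧
      μH[(d : ℝ)] X ≤ (K : ℝ≥0∞) ^ d * μH[(d : ℝ)] (f '' X) := by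
  have hK' : (1 : ℝ) < K := by exact_mod_cast hK
  have hd : (0 : ℝ) ≤ d := Nat.cast_nonneg d
  have hKi : (1 : ℝ) - (K : ℝ)⁻¹ ≤ K - 1 := by
    have : 0 < (K : ℝ) := by linarith
    rw [sub_le_sub_iff, ← sub_nonneg]
    have : (K : ℝ) + (K : ℝ)⁻¹ - (1 + 1) = (K - 1) ^ 2 / K := by field_simp; ring
    rw [this]; positivity
  constructor
  · have hl : LipschitzOnWith K f X := by
      refine LipschitzOnWith.of_dist_le_mul fun x hx y hy => ?_
      rw [dist_eq_norm, dist_eq_norm]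
      have h1 := hf x hx y hy
      have h2 := norm_le_norm_add_norm_sub' (f x - f y) (x - y)
      nlinarith [norm_nonneg (x - y)]
    have := hl.hausdorffMeasure_image_le hd
    rwa [ENNReal.rpow_natCast] at this
  · have hl : AntilipschitzWith K (fun x : X => f x) := by
      refine AntilipschitzWith.of_le_mul_dist fun x y => ?_
      rw [Subtype.dist_eq, dist_eq_norm, dist_eq_norm]
      have h1 := hf x x.2 y y.2
      have h2 := norm_le_norm_add_norm_sub (f x - f y) ((x : V) - y)
      have h3 : (K : ℝ)⁻¹ * ‖(x : V) - y‖ ≤ ‖f x - f y‖ := by linarith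
      have h4 : 0 < (K : ℝ) := by linarith
      rwa [inv_mul_le_iff₀ h4] at h3
    have := hl.le_hausdorffMeasure_image hd Set.univ
    rw [ENNReal.rpow_natCast] at this
    have h2 := (isometry_subtype_coe (s := X)).hausdorffMeasure_image (Or.inl hd) Set.univ
    rw [Set.image_univ, Subtype.range_coe] at h2
    rw [← h2] at this
    have h3 : (fun x : X => f x) '' Set.univ = f '' X := by
      ext z; simp
    rwa [h3] at this

/-- Near a point `x₀` at which the set `S` has the tangent space `bᗮ`, `shadow a u` multiplies
`d`-dimensional measure on `S` by approximately its Jacobian. -/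
lemma shadow_local [FiniteDimensional ℝ V] [MeasurableSpace V] [BorelSpace V] {d : ℕ}
    (hV : Module.finrank ℝ V = d + 1) {a b : V} (ha : ‖a‖ = 1) (hb : ‖b‖ = 1) {u x₀ : V}
    {S : Set V}
    (hS : ∀ ε > 0, ∃ U ∈ 𝓝 x₀, ∀ x ∈ U ∩ S, ∀ y ∈ U ∩ S, |⟪b, x - y⟫_ℝ| ≤ ε * ‖x - y‖)
    (hax : 0 < ⟪a, x₀ - u⟫_ℝ) (hbx : 0 < ⟪b, u - x₀⟫_ℝ) {t : ℝ≥0} (ht : 1 < t) :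
    ∃ U ∈ 𝓝 x₀, ∀ X ⊆ U ∩ S,
      μH[(d : ℝ)] (shadow a u '' X) ≤ t * (ENNReal.ofReal
        (⟪a, x₀ - u⟫_ℝ * ⟪b, u - x₀⟫_ℝ / ‖x₀ - u‖ ^ (d + 2)) * μH[(d : ℝ)] X) ∧
      ENNReal.ofReal (⟪a, x₀ - u⟫_ℝ * ⟪b, u - x₀⟫_ℝ / ‖x₀ - u‖ ^ (d + 2)) * μH[(d : ℝ)] X
        ≤ t * μH[(d : ℝ)] (shadow a u '' X) := by
  have hne : x₀ ≠ u := by rintro rfl; simp at hax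
  have hpos : 0 < ‖x₀ - u‖ := norm_pos_iff.2 (sub_ne_zero.2 hne)
  set ω := ‖x₀ - u‖⁻¹ • (x₀ - u) with hω
  have hω1 : ‖ω‖ = 1 := by rw [hω, norm_smul, norm_inv, norm_norm]; field_simp
  have haω : ⟪a, ω⟫_ℝ = ‖x₀ - u‖⁻¹ * ⟪a, x₀ - u⟫_ℝ := by rw [hω, inner_smul_right]
  have hbω : ⟪b, ω⟫_ℝ = - (‖x₀ - u‖⁻¹ * ⟪b, u - x₀⟫_ℝ) := by
    rw [hω, inner_smul_right, ← neg_sub u x₀, inner_neg_right]; ring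
  obtain ⟨D, hD, hDL⟩ := hasStrictFDerivAt_shadow a u x₀ hne
  set L := derivMap a b ω ‖x₀ - u‖ with hLdef
  have hdet : LinearMap.det L =
      -(⟪a, x₀ - u⟫_ℝ * ⟪b, u - x₀⟫_ℝ / ‖x₀ - u‖ ^ (d + 2)) := by
    rw [hLdef, det_derivMap hV b ha hω1 hpos (by rw [haω]; positivity), haω, hbω, pow_add]
    field_simp
  have hJ : 0 < ⟪a, x₀ - u⟫_ℝ * ⟪b, u - x₀⟫_ℝ / ‖x₀ - u‖ ^ (d + 2) := by positivity
  have hdet0 : LinearMap.det L ≠ 0 := by rw [hdet]; exact (neg_neg_of_pos hJ).ne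
  have habs : |LinearMap.det L| = ⟪a, x₀ - u⟫_ℝ * ⟪b, u - x₀⟫_ℝ / ‖x₀ - u‖ ^ (d + 2) := by
    rw [hdet, abs_neg, abs_of_pos hJ]
  set Le : V ≃L[ℝ] V := (LinearMap.equivOfDetNeZero L hdet0).toContinuousLinearEquiv with hLe
  have hLe_apply : ∀ w, Le w = L w := fun w => rfl
  obtain ⟨K, hK1, hKt⟩ := exists_pow_le d ht
  have hK' : (1 : ℝ) < K := by exact_mod_cast hK1
  set c : ℝ := ‖(Le.symm : V →L[ℝ] V)‖ + 1 with hc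
  have hcpos : 0 < c := by positivity
  set ε : ℝ := (1 - (K : ℝ)⁻¹) / (2 * c) with hε
  have hεpos : 0 < ε := by
    have : (K : ℝ)⁻¹ < 1 := inv_lt_one_of_one_lt₀ hK'
    have : 0 < 1 - (K : ℝ)⁻¹ := by linarith
    positivity
  obtain ⟨U₁, hU₁, hU₁S⟩ := hS ε hεpos
  have hD' := hD.isLittleO.bound hεpos
  rw [nhds_prod_eq, Filter.eventually_prod_self_iff'] at hD'
  obtain ⟨U₂, hU₂, hU₂S⟩ := hD'
  refine ⟨U₁ ∩ U₂, inter_mem hU₁ hU₂, fun X hX => ?_⟩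
  rw [← habs]
  have happ := hausdorff_approx d hK1 (f := fun x => Le.symm (shadow a u x)) (X := X) (by
    intro x hx y hy
    have h1 := hU₁S x ⟨(hX hx).1.1, (hX hx).2⟩ y ⟨(hX hy).1.1, (hX hy).2⟩
    have h2 := hU₂S x (hX hx).1.2 y (hX hy).1.2
    simp only at h2
    have h3 : shadow a u x - shadow a u y - L (x - y)
        = (shadow a u x - shadow a u y - D (x - y)) - ⟪b, x - y⟫_ℝ • a := by
      rw [← hDL b]; abel
    have h4 : ‖shadow a u x - shadow a u y - L (x - y)‖ ≤ 2 * ε * ‖x - y‖ := by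
      rw [h3]
      refine (norm_sub_le _ _).trans ?_
      rw [norm_smul, ha, mul_one, Real.norm_eq_abs]
      linarith
    have h5 : Le.symm (shadow a u x) - Le.symm (shadow a u y) - (x - y)
        = (Le.symm : V →L[ℝ] V) (shadow a u x - shadow a u y - L (x - y)) := by
      rw [← hLe_apply]; simp
    rw [h5]
    refine (ContinuousLinearMap.le_opNorm _ _).trans ?_
    calc _ ≤ c * (2 * ε * ‖x - y‖) := by
          gcongr; rw [hc]; linarith
      _ = (1 - (K : ℝ)⁻¹) * ‖x - y‖ := by rw [hε]; field_simp)
  set Z := (fun x => Le.symm (shadow a u x)) '' X with hZ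
  have himg : shadow a u '' X = L '' Z := by
    rw [hZ, Set.image_image]
    refine Set.image_congr fun x _ => ?_
    rw [← hLe_apply]; simp
  have hZb : ∀ z ∈ Z, ⟪b, z⟫_ℝ = 0 := by
    rintro _ ⟨x, _, rfl⟩
    rw [← inner_derivMap b ω ‖x₀ - u‖ ha, ← hLdef, ← hLe_apply]
    simp [inner_shadow ha]
  have hlin := hausdorff_image_linear hV ha hb L (inner_derivMap b ω _ ha) hZb
  rw [himg, hlin]
  have hKt' : (K : ℝ≥0∞) ^ d ≤ t := by exact_mod_cast hKt
  constructor
  · rw [mul_left_comm]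
    gcongr
    exact happ.1.trans (by gcongr)
  · rw [mul_left_comm]
    gcongr
    exact happ.2.trans (by gcongr)

end Local

section Global

lemma le_of_forall_one_lt_sq {x y : ℝ≥0∞} (h : ∀ t : ℝ≥0, 1 < t → x ≤ (t : ℝ≥0∞) ^ 2 * y) :
    x ≤ y := by
  have hlim : Tendsto (fun t : ℝ≥0 => (t : ℝ≥0∞) ^ 2 * y) (𝓝[>] 1) (𝓝 y) := by
    have h1 : Tendsto (fun t : ℝ≥0 => ((t ^ 2 : ℝ≥0) : ℝ≥0∞)) (𝓝[>] 1) (𝓝 ((1 : ℝ≥0) : ℝ≥0∞)) := by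
      rw [ENNReal.tendsto_coe]
      have : ContinuousAt (fun K : ℝ≥0 => K ^ 2) 1 := by fun_prop
      have h := this.tendsto
      simp only [one_pow] at h
      exact h.mono_left nhdsWithin_le_nhds
    have h2 := ENNReal.Tendsto.mul_const (b := y) h1 (Or.inl (by simp))
    simpa using h2
  exact ge_of_tendsto hlim (eventually_nhdsWithin_of_forall fun t ht => h t ht)

variable {V : Type*} [NormedAddCommGroup V] [InnerProductSpace ℝ V]

lemma continuousOn_shadow (a u : V) {S : Set V} (hS : u ∉ S) : ContinuousOn (shadow a u) S := by
  have hne : ∀ x ∈ S, ‖x - u‖ ≠ 0 := fun x hx h => hS (by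
    rw [norm_eq_zero, sub_eq_zero] at h; rwa [← h])
  have h1 : ContinuousOn (fun x : V => ‖x - u‖⁻¹) S := by
    refine ContinuousOn.inv₀ (by fun_prop) hne
  unfold shadow
  fun_prop

/-- The area formula for `shadow a u` on a hypersurface `S` with unit normal field `ν`. -/
lemma shadow_area [FiniteDimensional ℝ V] [MeasurableSpace V] [BorelSpace V] {d : ℕ}
    (hV : Module.finrank ℝ V = d + 1) {a : V} (ha : ‖a‖ = 1) {u : V} {ν : V → V}
    {S : Set V} (hν : ContinuousOn ν S) (hν1 : ∀ x ∈ S, ‖ν x‖ = 1)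
    (htan : ∀ x₀ ∈ S, ∀ ε > 0, ∃ U ∈ 𝓝 x₀, ∀ x ∈ U ∩ S, ∀ y ∈ U ∩ S,
      |⟪ν x₀, x - y⟫_ℝ| ≤ ε * ‖x - y‖)
    (hax : ∀ x ∈ S, 0 < ⟪a, x - u⟫_ℝ) (hbx : ∀ x ∈ S, 0 < ⟪ν x, u - x⟫_ℝ)
    (hinj : Set.InjOn (shadow a u) S) {X : Set V} (hX : MeasurableSet X) (hXS : X ⊆ S) :
    ∫⁻ x in X, ENNReal.ofReal (⟪a, x - u⟫_ℝ * ⟪ν x, u - x⟫_ℝ / ‖x - u‖ ^ (d + 2)) ∂μH[(d : ℝ)]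
      = μH[(d : ℝ)] (shadow a u '' X) := by
  set g : V → ℝ := fun x => ⟪a, x - u⟫_ℝ * ⟪ν x, u - x⟫_ℝ / ‖x - u‖ ^ (d + 2) with hg
  have huS : u ∉ S := fun h => by simpa using hax u h
  have hne : ∀ x ∈ S, ‖x - u‖ ≠ 0 := fun x hx h => huS (by
    rw [norm_eq_zero, sub_eq_zero] at h; rwa [← h])
  have hgc : ContinuousOn g S := by
    refine ContinuousOn.div (by fun_prop) (by fun_prop) fun x hx => pow_ne_zero _ (hne x hx)
  have hgpos : ∀ x ∈ S, 0 < g x := fun x hx => by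
    have h1 := hax x hx
    have h2 := hbx x hx
    have h3 : 0 < ‖x - u‖ := lt_of_le_of_ne (norm_nonneg _) (hne x hx).symm
    positivity
  have himeas : ∀ Y : Set V, MeasurableSet Y → Y ⊆ S → MeasurableSet (shadow a u '' Y) :=
    fun Y hY hYS => hY.image_of_continuousOn_injOn
      ((continuousOn_shadow a u huS).mono hYS) (hinj.mono hYS)
  have main : ∀ t : ℝ≥0, 1 < t →
      ∫⁻ x in X, ENNReal.ofReal (g x) ∂μH[(d : ℝ)] ≤ (t : ℝ≥0∞) ^ 2 * μH[(d : ℝ)] (shadow a u '' X) ∧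
      μH[(d : ℝ)] (shadow a u '' X) ≤ (t : ℝ≥0∞) ^ 2 * ∫⁻ x in X, ENNReal.ofReal (g x) ∂μH[(d : ℝ)] := by
    intro t ht
    have ht' : (1 : ℝ) < t := by exact_mod_cast ht
    have hloc : ∀ x₀ ∈ S, ∃ U : Set V, IsOpen U ∧ x₀ ∈ U ∧ ∀ Y ⊆ U ∩ S, MeasurableSet Y →
        ∫⁻ x in Y, ENNReal.ofReal (g x) ∂μH[(d : ℝ)] ≤ (t : ℝ≥0∞) ^ 2 * μH[(d : ℝ)] (shadow a u '' Y) ∧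
        μH[(d : ℝ)] (shadow a u '' Y) ≤ (t : ℝ≥0∞) ^ 2 * ∫⁻ x in Y, ENNReal.ofReal (g x) ∂μH[(d : ℝ)] := by
      intro x₀ hx₀
      obtain ⟨U₁, hU₁, h₁⟩ := shadow_local hV ha (hν1 x₀ hx₀) (htan x₀ hx₀) (hax x₀ hx₀)
        (hbx x₀ hx₀) ht
      have hg0 := hgpos x₀ hx₀
      have hlt : ∀ᶠ y in 𝓝 (g x₀), y < t * g x₀ ∧ g x₀ < t * y := by
        refine (eventually_lt_nhds (by nlinarith)).and ?_
        have : ContinuousAt (fun y : ℝ => (t : ℝ) * y) (g x₀) := by fun_prop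
        exact this.eventually (lt_mem_nhds (by nlinarith))
      have hlt2 := (hgc x₀ hx₀).eventually hlt
      rw [eventually_nhdsWithin_iff] at hlt2
      obtain ⟨U, hUsub, hUo, hxU⟩ := _root_.mem_nhds_iff.1 (inter_mem hU₁ hlt2)
      refine ⟨U, hUo, hxU, fun Y hY hYm => ?_⟩
      obtain ⟨h2, h3⟩ := h₁ Y (fun y hy => ⟨(hUsub (hY hy).1).1, (hY hy).2⟩)
      change _ ≤ (t : ℝ≥0∞) * (ENNReal.ofReal (g x₀) * _) at h2
      change ENNReal.ofReal (g x₀) * _ ≤ _ at h3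
      have hYg : ∀ y ∈ Y, g y < t * g x₀ ∧ g x₀ < t * g y := fun y hy =>
        (hUsub (hY hy).1).2 (hY hy).2
      have hmul : ∀ r : ℝ, ENNReal.ofReal (t * r) = t * ENNReal.ofReal r := fun r => by
        rw [ENNReal.ofReal_mul (by positivity), ENNReal.ofReal_coe_nnreal]
      constructor
      · calc ∫⁻ x in Y, ENNReal.ofReal (g x) ∂μH[(d : ℝ)]
            ≤ ∫⁻ x in Y, t * ENNReal.ofReal (g x₀) ∂μH[(d : ℝ)] := by
              refine setLIntegral_mono measurable_const fun y hy => ?_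
              rw [← hmul]
              exact ENNReal.ofReal_le_ofReal (hYg y hy).1.le
          _ = t * (ENNReal.ofReal (g x₀) * μH[(d : ℝ)] Y) := by
              rw [setLIntegral_const, mul_assoc]
          _ ≤ t * (t * μH[(d : ℝ)] (shadow a u '' Y)) := by gcongr
          _ = _ := by ring
      · calc μH[(d : ℝ)] (shadow a u '' Y) ≤ t * (ENNReal.ofReal (g x₀) * μH[(d : ℝ)] Y) := h2
          _ = t * ∫⁻ x in Y, ENNReal.ofReal (g x₀) ∂μH[(d : ℝ)] := by rw [setLIntegral_const]
          _ ≤ t * ∫⁻ x in Y, t * ENNReal.ofReal (g x) ∂μH[(d : ℝ)] := by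
              refine mul_le_mul_right ?_ _
              refine setLIntegral_mono' hYm fun y hy => ?_
              rw [← hmul]
              exact ENNReal.ofReal_le_ofReal (hYg y hy).2.le
          _ = _ := by
              rw [lintegral_const_mul' _ _ ENNReal.coe_ne_top]; ring
    choose! U hUo hxU hU using hloc
    obtain ⟨T, hTS, hTc, hTcov⟩ := TopologicalSpace.countable_cover_nhdsWithin
      (s := S) (f := U) fun x hx => mem_nhdsWithin_of_mem_nhds ((hUo x hx).mem_nhds (hxU x hx))
    rcases T.eq_empty_or_nonempty with rfl | hTne
    · have : X = ∅ := by
        refine Set.eq_empty_of_subset_empty (hXS.trans (hTcov.trans ?_)); simp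
      simp [this]
    obtain ⟨f, rfl⟩ := hTc.exists_eq_range hTne
    have hfS : ∀ i, f i ∈ S := fun i => hTS ⟨i, rfl⟩
    set W : ℕ → Set V := fun i => X ∩ disjointed (fun j => U (f j)) i with hW
    have hWm : ∀ i, MeasurableSet (W i) := fun i => hX.inter
      (MeasurableSet.disjointed (fun j => (hUo _ (hfS j)).measurableSet) i)
    have hWd : Pairwise (Function.onFun Disjoint W) := fun i j hij =>
      ((disjoint_disjointed _ hij).mono Set.inter_subset_right Set.inter_subset_right)
    have hWS : ∀ i, W i ⊆ S := fun i => Set.inter_subset_left.trans hXS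
    have hWU : X = ⋃ i, W i := by
      rw [hW, ← Set.inter_iUnion, iUnion_disjointed]
      refine (Set.inter_eq_left.2 (hXS.trans (hTcov.trans ?_))).symm
      simp
    have e1 : ∫⁻ x in X, ENNReal.ofReal (g x) ∂μH[(d : ℝ)]
        = ∑' i, ∫⁻ x in W i, ENNReal.ofReal (g x) ∂μH[(d : ℝ)] := by
      rw [hWU, lintegral_iUnion hWm hWd]
    have e2 : μH[(d : ℝ)] (shadow a u '' X) = ∑' i, μH[(d : ℝ)] (shadow a u '' W i) := by
      rw [hWU, Set.image_iUnion, measure_iUnion _ (fun i => himeas _ (hWm i) (hWS i))]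
      intro i j hij
      exact (hWd hij).image hinj (hWS i) (hWS j)
    have hi := fun i => hU (f i) (hfS i) (W i)
      (fun y hy => ⟨disjointed_subset (fun j => U (f j)) i hy.2, hXS hy.1⟩) (hWm i)
    rw [e1, e2, ← ENNReal.tsum_mul_left, ← ENNReal.tsum_mul_left]
    exact ⟨ENNReal.tsum_le_tsum fun i => (hi i).1, ENNReal.tsum_le_tsum fun i => (hi i).2⟩
  exact le_antisymm (le_of_forall_one_lt_sq fun t ht => (main t ht).1)
    (le_of_forall_one_lt_sq fun t ht => (main t ht).2)

end Global

/-! ### Convex bodies with inscribed tangent balls -/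

section Geometry

variable {n : ℕ} {K : Set (Euc n)} {C : ℝ} {ν : Euc n → Euc n}

/-- The centre of an inscribed ball touching `∂K` at `x` lies on every inward normal at `x`, so the
unit normal is unique. -/
lemma normal_eq (hC : 0 < C) {x z w : Euc n} (hz : closedBall z (1 / C) ⊆ K)
    (hxz : dist x z = 1 / C) (hw : ‖w‖ = 1) (hwK : ∀ y ∈ K, 0 ≤ ⟪w, y - x⟫_ℝ) :
    w = C • (z - x) := by
  have h1 : z - (1 / C) • w ∈ K := hz (by
    rw [mem_closedBall, dist_eq_norm]
    simp [norm_smul, hw, abs_of_pos hC])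
  have h2 := hwK _ h1
  rw [show z - (1 / C) • w - x = (z - x) - (1 / C) • w by abel, inner_sub_right, inner_smul_right,
    real_inner_self_eq_norm_sq, hw] at h2
  have h3 : ‖z - x‖ = 1 / C := by rw [← hxz, dist_comm, dist_eq_norm]
  have h4 : ‖w - C • (z - x)‖ ^ 2 ≤ 0 := by
    rw [norm_sub_sq_real, norm_smul, inner_smul_right, h3, hw, Real.norm_eq_abs, abs_of_pos hC]
    have : C * (1 / C) ≤ C * ⟪w, z - x⟫_ℝ := by gcongr; linarith
    rw [mul_one_div_cancel hC.ne'] at *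
    linarith
  have h5 : ‖w - C • (z - x)‖ = 0 := by
    have := sq_nonneg ‖w - C • (z - x)‖
    exact pow_eq_zero_iff (two_ne_zero) |>.1 (le_antisymm h4 this)
  exact sub_eq_zero.1 (norm_eq_zero.1 h5)

lemma normal_unique (hC : 0 < C) (hcurv : CurvatureBoundedBy K C) {x w w' : Euc n}
    (hx : x ∈ frontier K) (hw : ‖w‖ = 1) (hwK : ∀ y ∈ K, 0 ≤ ⟪w, y - x⟫_ℝ)
    (hw' : ‖w'‖ = 1) (hwK' : ∀ y ∈ K, 0 ≤ ⟪w', y - x⟫_ℝ) : w = w' := by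
  obtain ⟨z, hz, hxz⟩ := hcurv x hx
  rw [normal_eq hC hz hxz hw hwK, normal_eq hC hz hxz hw' hwK']

lemma inner_ball (hC : 0 < C) (hcurv : CurvatureBoundedBy K C) (hν : IsInwardNormal K ν)
    {x : Euc n} (hx : x ∈ frontier K) : closedBall (x + (1 / C) • ν x) (1 / C) ⊆ K := by
  obtain ⟨z, hz, hxz⟩ := hcurv x hx
  have h := normal_eq hC hz hxz (hν x hx).1 (hν x hx).2
  rw [h, smul_smul, one_div_mul_cancel hC.ne', one_smul]
  simpa using hz

/-- The unit normal is Hölder continuous with exponent `1/2`: compare the ball inscribed at `x` with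
the supporting hyperplane at `y`. -/
lemma normal_holder (hC : 0 < C) (hcurv : CurvatureBoundedBy K C) (hν : IsInwardNormal K ν)
    {x y : Euc n} (hx : x ∈ frontier K) (hy : y ∈ frontier K) :
    ‖ν x - ν y‖ ^ 2 ≤ 2 * C * ‖x - y‖ := by
  have h1 : x + (1 / C) • ν x - (1 / C) • ν y ∈ K := inner_ball hC hcurv hν hx (by
    rw [mem_closedBall, dist_eq_norm]
    simp [norm_smul, (hν y hy).1, abs_of_pos hC])
  have h2 := (hν y hy).2 _ h1
  rw [show x + (1 / C) • ν x - (1 / C) • ν y - y = (x - y) + (1 / C) • ν x - (1 / C) • ν y by abel,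
    inner_sub_right, inner_add_right, inner_smul_right, inner_smul_right,
    real_inner_self_eq_norm_sq, (hν y hy).1] at h2
  have h3 := real_inner_le_norm (ν y) (x - y)
  rw [(hν y hy).1, one_mul] at h3
  rw [norm_sub_sq_real, (hν y hy).1, (hν x hx).1, real_inner_comm]
  have h4 : 1 / C * (1 - ⟪ν y, ν x⟫_ℝ) ≤ ‖x - y‖ := by linarith
  rw [one_div, inv_mul_le_iff₀ hC] at h4
  linarith

lemma normal_continuousOn (hC : 0 < C) (hcurv : CurvatureBoundedBy K C)
    (hν : IsInwardNormal K ν) : ContinuousOn ν (frontier K) := by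
  intro x hx
  refine tendsto_iff_norm_sub_tendsto_zero.2 ?_
  have h0 : Tendsto (fun y => √(2 * C * ‖y - x‖)) (𝓝[frontier K] x) (𝓝 0) := by
    have : ContinuousAt (fun y => √(2 * C * ‖y - x‖)) x := by fun_prop
    have h := this.tendsto
    simp only [sub_self, norm_zero, mul_zero, Real.sqrt_zero] at h
    exact h.mono_left nhdsWithin_le_nhds
  refine squeeze_zero' (Eventually.of_forall fun _ => norm_nonneg _) ?_ h0
  filter_upwards [self_mem_nhdsWithin] with y hy
  exact Real.le_sqrt_of_sq_le (normal_holder hC hcurv hν hy hx)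

/-- `∂K` is differentiable at `x₀`, uniformly over pairs of nearby points. -/
lemma normal_tangent (hK : IsConvexBody K) (hC : 0 < C) (hcurv : CurvatureBoundedBy K C)
    (hν : IsInwardNormal K ν) {x₀ : Euc n} (hx₀ : x₀ ∈ frontier K) {ε : ℝ} (hε : 0 < ε) :
    ∃ U ∈ 𝓝 x₀, ∀ x ∈ U ∩ frontier K, ∀ y ∈ U ∩ frontier K,
      |⟪ν x₀, x - y⟫_ℝ| ≤ ε * ‖x - y‖ := by
  have hfr : frontier K ⊆ K := hK.2.1.isClosed.frontier_subset
  have h := (normal_continuousOn hC hcurv hν) x₀ hx₀ (closedBall_mem_nhds (ν x₀) hε)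
  rw [mem_map, mem_nhdsWithin_iff_exists_mem_nhds_inter] at h
  obtain ⟨U, hU, hUs⟩ := h
  have key : ∀ x ∈ U ∩ frontier K, ∀ y ∈ U ∩ frontier K, -(ε * ‖x - y‖) ≤ ⟪ν x₀, x - y⟫_ℝ := by
    intro x hx y hy
    have h1 := hUs hy
    rw [Set.mem_preimage, mem_closedBall, dist_eq_norm] at h1
    have h2 := (hν y hy.2).2 x (hfr hx.2)
    have h3 : ⟪ν x₀, x - y⟫_ℝ = ⟪ν y, x - y⟫_ℝ - ⟪ν y - ν x₀, x - y⟫_ℝ := by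
      rw [inner_sub_left]; ring
    have h4 := real_inner_le_norm (ν y - ν x₀) (x - y)
    have h5 : ‖ν y - ν x₀‖ * ‖x - y‖ ≤ ε * ‖x - y‖ := by gcongr
    linarith
  refine ⟨U, hU, fun x hx y hy => abs_le.2 ⟨key x hx y hy, ?_⟩⟩
  have := key y hy x hx
  rw [← neg_sub x y, inner_neg_right, norm_neg] at this
  linarith

/-- The part of `∂K` that is not in the tangent hyperplane at `u`. -/
def visible (K : Set (Euc n)) (ν : Euc n → Euc n) (u : Euc n) : Set (Euc n) :=
  {x | x ∈ frontier K ∧ 0 < ⟪ν u, x - u⟫_ℝ}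

/-- Visibility is symmetric: if `u` lay in the tangent hyperplane at `x`, this hyperplane would
support `K` at `u` too, hence coincide with the tangent hyperplane at `u`. -/
lemma visible_pos (hK : IsConvexBody K) (hC : 0 < C) (hcurv : CurvatureBoundedBy K C)
    (hν : IsInwardNormal K ν) {u x : Euc n} (hu : u ∈ frontier K) (hx : x ∈ visible K ν u) :
    0 < ⟪ν x, u - x⟫_ℝ := by
  have hfr : frontier K ⊆ K := hK.2.1.isClosed.frontier_subset
  refine lt_of_le_of_ne ((hν x hx.1).2 u (hfr hu)) fun h0 => ?_
  have hwK : ∀ y ∈ K, 0 ≤ ⟪ν x, y - u⟫_ℝ := fun y hy => by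
    have := (hν x hx.1).2 y hy
    rw [show y - u = (y - x) - (u - x) by abel, inner_sub_right, ← h0]; linarith
  have heq := normal_unique hC hcurv hu (hν x hx.1).1 hwK (hν u hu).1 (hν u hu).2
  have h1 := hx.2
  rw [← heq, ← neg_sub u x, inner_neg_right, ← h0] at h1
  simp at h1

lemma shadow_norm_sq {V : Type*} [NormedAddCommGroup V] [InnerProductSpace ℝ V] {a u x : V}
    (ha : ‖a‖ = 1) (hx : x ≠ u) :
    ‖shadow a u x‖ ^ 2 = 1 - (‖x - u‖⁻¹ * ⟪a, x - u⟫_ℝ) ^ 2 := by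
  have hpos : 0 < ‖x - u‖ := norm_pos_iff.2 (sub_ne_zero.2 hx)
  rw [shadow, norm_sub_sq_real, norm_smul, norm_smul, ha, inner_smul_left, inner_smul_right,
    real_inner_comm, Real.norm_eq_abs, Real.norm_eq_abs, mul_one, sq_abs,
    abs_of_pos (inv_pos.2 hpos), inv_mul_cancel₀ hpos.ne']
  simp
  ring

lemma cos_eq {V : Type*} [NormedAddCommGroup V] [InnerProductSpace ℝ V] {a u x : V}
    (ha : ‖a‖ = 1) (hx : 0 < ⟪a, x - u⟫_ℝ) :
    √(1 - ‖shadow a u x‖ ^ 2) = ‖x - u‖⁻¹ * ⟪a, x - u⟫_ℝ := by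
  have hne : x ≠ u := by rintro rfl; simp at hx
  have hpos : 0 < ‖x - u‖ := norm_pos_iff.2 (sub_ne_zero.2 hne)
  rw [shadow_norm_sq ha hne, sub_sub_cancel, Real.sqrt_sq (by positivity)]

/-- The direction from `u` to `x` is recovered from its shadow when it points into the half space
of `a`. -/
lemma direction_eq {V : Type*} [NormedAddCommGroup V] [InnerProductSpace ℝ V] {a u x : V}
    (ha : ‖a‖ = 1) (hx : 0 < ⟪a, x - u⟫_ℝ) :
    ‖x - u‖⁻¹ • (x - u) = shadow a u x + √(1 - ‖shadow a u x‖ ^ 2) • a := by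
  rw [cos_eq ha hx, shadow, sub_add_cancel]

lemma shadow_norm_lt {V : Type*} [NormedAddCommGroup V] [InnerProductSpace ℝ V] {a u x : V}
    (ha : ‖a‖ = 1) (hx : 0 < ⟪a, x - u⟫_ℝ) : ‖shadow a u x‖ < 1 := by
  have hne : x ≠ u := by rintro rfl; simp at hx
  have hpos : 0 < ‖x - u‖ := norm_pos_iff.2 (sub_ne_zero.2 hne)
  have h1 := shadow_norm_sq ha hne
  have h2 : 0 < (‖x - u‖⁻¹ * ⟪a, x - u⟫_ℝ) ^ 2 := by positivity
  nlinarith [norm_nonneg (shadow a u x)]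

/-- A ray from `u` that leaves the tangent hyperplane meets `∂K` in at most one further point. -/
lemma shadow_injOn (hK : IsConvexBody K) (hC : 0 < C) (hcurv : CurvatureBoundedBy K C)
    (hν : IsInwardNormal K ν) {u : Euc n} (hu : u ∈ frontier K) :
    Set.InjOn (shadow (ν u) u) (visible K ν u) := by
  have hfr : frontier K ⊆ K := hK.2.1.isClosed.frontier_subset
  have key : ∀ x ∈ visible K ν u, ∀ y ∈ visible K ν u,
      ‖x - u‖⁻¹ • (x - u) = ‖y - u‖⁻¹ • (y - u) → ‖y - u‖ ≤ ‖x - u‖ := by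
    intro x hx y hy hxy
    by_contra! hlt
    have hne : x ≠ u := by rintro rfl; simpa using hx.2
    have hpos : 0 < ‖x - u‖ := norm_pos_iff.2 (sub_ne_zero.2 hne)
    have hpos' : 0 < ‖y - u‖ := hpos.trans hlt
    have h1 : y - x = (1 - ‖y - u‖ * ‖x - u‖⁻¹) • (u - x) := by
      have : y - u = (‖y - u‖ * ‖x - u‖⁻¹) • (x - u) := by
        rw [mul_smul, hxy, smul_smul, mul_inv_cancel₀ hpos'.ne', one_smul]
      generalize ‖y - u‖ * ‖x - u‖⁻¹ = c at this ⊢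
      rw [show y - x = (y - u) + (u - x) by abel, this]
      module
    have h2 := (hν x hx.1).2 y (hfr hy.1)
    rw [h1, inner_smul_right] at h2
    have h3 := visible_pos hK hC hcurv hν hu hx
    have h4 : 1 < ‖y - u‖ * ‖x - u‖⁻¹ := by
      rw [← div_eq_mul_inv, one_lt_div hpos]; exact hlt
    nlinarith
  intro x hx y hy hxy
  have hdir : ‖x - u‖⁻¹ • (x - u) = ‖y - u‖⁻¹ • (y - u) := by
    rw [direction_eq (hν u hu).1 hx.2, direction_eq (hν u hu).1 hy.2, hxy]
  have hnorm := le_antisymm (key y hy x hx hdir.symm) (key x hx y hy hdir)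
  have hne : x ≠ u := by rintro rfl; simpa using hx.2
  have hpos : 0 < ‖x - u‖ := norm_pos_iff.2 (sub_ne_zero.2 hne)
  rw [← hnorm] at hdir
  exact sub_left_injective (smul_right_injective _ (inv_pos.2 hpos).ne' hdir)

/-- Every direction from `u` strictly into the half space of `ν u` enters the ball inscribed at `u`,
so it hits `∂K` at a visible point. -/
lemma shadow_surj (hK : IsConvexBody K) (hC : 0 < C) (hcurv : CurvatureBoundedBy K C)
    (hν : IsInwardNormal K ν) {u z : Euc n} (hu : u ∈ frontier K) (hz : ⟪ν u, z⟫_ℝ = 0)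
    (hz1 : ‖z‖ < 1) : ∃ x ∈ visible K ν u, shadow (ν u) u x = z := by
  set a := ν u with ha
  have ha1 : ‖a‖ = 1 := (hν u hu).1
  set s := √(1 - ‖z‖ ^ 2) with hs
  have hspos : 0 < s := Real.sqrt_pos.2 (by nlinarith [norm_nonneg z])
  set ω := z + s • a with hω
  have haω : ⟪a, ω⟫_ℝ = s := by
    rw [hω, inner_add_right, hz, inner_smul_right, real_inner_self_eq_norm_sq, ha1]; ring
  have hω1 : ‖ω‖ = 1 := by
    have : ‖ω‖ ^ 2 = 1 := by
      rw [hω, norm_add_sq_real, inner_smul_right, real_inner_comm, hz, norm_smul, ha1,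
        Real.norm_eq_abs, mul_one, sq_abs, hs, Real.sq_sqrt (by nlinarith [norm_nonneg z])]
      ring
    nlinarith [norm_nonneg ω]
  have hcont : Continuous (fun τ : ℝ => u + τ • ω) := by fun_prop
  set T : Set ℝ := (fun τ : ℝ => u + τ • ω) ⁻¹' K with hT
  have hTc : IsCompact T := by
    refine Metric.isCompact_of_isClosed_isBounded (hK.2.1.isClosed.preimage hcont) ?_
    obtain ⟨R, hR⟩ := hK.2.1.isBounded.subset_closedBall u
    refine (isBounded_closedBall (x := (0 : ℝ)) (r := R)).subset fun τ hτ => ?_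
    have := hR hτ
    rw [mem_closedBall, dist_eq_norm] at this
    rw [mem_closedBall, dist_zero_right]
    simpa [norm_smul, hω1] using this
  have h0 : s / C ∈ T := inner_ball hC hcurv hν hu (by
    rw [mem_closedBall, dist_eq_norm]
    have : ‖u + (s / C) • ω - (u + (1 / C) • ν u)‖ ^ 2 ≤ (1 / C) ^ 2 := by
      rw [add_sub_add_left_eq_sub, norm_sub_sq_real, ← ha, norm_smul, norm_smul, hω1, ha1,
        inner_smul_left, inner_smul_right, real_inner_comm, haω, Real.norm_eq_abs,
        Real.norm_eq_abs, mul_one, mul_one, sq_abs, sq_abs]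
      simp only [conj_trivial]
      have : 0 ≤ (s / C) ^ 2 := by positivity
      have : 2 * (s / C * (1 / C * s)) = 2 * (s / C) ^ 2 := by ring
      linarith
    exact (sq_le_sq₀ (norm_nonneg _) (by positivity)).1 this)
  obtain ⟨τ, hτT, hτmax⟩ := hTc.exists_isMaxOn ⟨_, h0⟩ continuousOn_id
  have hτpos : 0 < τ := lt_of_lt_of_le (div_pos hspos hC) (hτmax h0)
  have hxu : u + τ • ω - u = τ • ω := by abel
  have hpos : 0 < ⟪ν u, u + τ • ω - u⟫_ℝ := by
    rw [hxu, inner_smul_right, ← ha, haω]; positivity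
  refine ⟨u + τ • ω, ⟨⟨subset_closure hτT, fun hmem => ?_⟩, hpos⟩, ?_⟩
  · have hnh : ∀ᶠ σ in 𝓝 τ, σ ∈ T := by
      have h1 : ∀ᶠ σ in 𝓝 τ, u + σ • ω ∈ interior K :=
        hcont.continuousAt.eventually (isOpen_interior.mem_nhds hmem)
      filter_upwards [h1] with σ hσ using interior_subset (s := K) hσ
    obtain ⟨σ, hσT, hσ⟩ := ((hnh.filter_mono nhdsWithin_le_nhds).and
      (self_mem_nhdsWithin : Set.Ioi τ ∈ 𝓝[>] τ)).exists
    exact absurd (hτmax hσT) (not_le.2 hσ)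
  · have hnorm : ‖u + τ • ω - u‖ = τ := by
      rw [hxu, norm_smul, hω1, mul_one, Real.norm_eq_abs, abs_of_pos hτpos]
    rw [shadow, hnorm, hxu, inner_smul_right, haω, smul_smul, ← mul_assoc,
      inv_mul_cancel₀ hτpos.ne', one_smul, one_mul, hω, add_sub_cancel_right]

end Geometry

/-! ### The billiard kernel in terms of shadows -/

section Kernel

/-- The normalising constant of the billiard kernel. -/
def kconst {n : ℕ} (K : Set (Euc n)) : ℝ :=
  Real.pi ^ (((n : ℝ) - 1) / 2) / (Real.Gamma (((n : ℝ) + 1) / 2) * (surf K Set.univ).toReal)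

lemma kconst_nonneg {n : ℕ} (K : Set (Euc n)) : 0 ≤ kconst K := by
  unfold kconst
  have : 0 < Real.Gamma (((n : ℝ) + 1) / 2) := Real.Gamma_pos_of_pos (by positivity)
  positivity

/-- The density of the billiard kernel without its normalising constant. -/
def dens {n : ℕ} (ν : Euc n → Euc n) (u x : Euc n) : ℝ :=
  cosAngle ν u x * cosAngle ν x u / ‖u - x‖ ^ (n - 1)

lemma dens_eq {d : ℕ} (ν : Euc (d + 1) → Euc (d + 1)) (u x : Euc (d + 1)) :
    dens ν u x = ⟪ν u, x - u⟫_ℝ * ⟪ν x, u - x⟫_ℝ / ‖x - u‖ ^ (d + 2) := by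
  rw [dens, cosAngle, cosAngle, norm_sub_rev u x, div_mul_div_comm, div_div, ← pow_two, ← pow_add,
    show 2 + (d + 1 - 1) = d + 2 by omega]

lemma surf_eq {d : ℕ} (K : Set (Euc (d + 1))) : surf K = (μH[(d : ℝ)]).restrict (frontier K) := by
  rw [surf]; norm_num

variable {d : ℕ} {K : Set (Euc (d + 1))} {C : ℝ} {ν : Euc (d + 1) → Euc (d + 1)}
  {P : Euc (d + 1) → Measure (Euc (d + 1))}

lemma kernel_apply (hP : IsBilliardKernel K ν P) {u : Euc (d + 1)} (hu : u ∈ frontier K)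
    {X : Set (Euc (d + 1))} (hX : MeasurableSet X) :
    P u X = ∫⁻ x in X ∩ frontier K, ENNReal.ofReal (kconst K * dens ν u x) ∂μH[(d : ℝ)] := by
  rw [(hP u hu).2 X hX, surf_eq, Measure.restrict_restrict hX, ← surf_eq]
  rfl

lemma measurableSet_visible (K : Set (Euc (d + 1))) (ν : Euc (d + 1) → Euc (d + 1))
    (u : Euc (d + 1)) : MeasurableSet (visible K ν u) := by
  have h : IsOpen {x : Euc (d + 1) | 0 < ⟪ν u, x - u⟫_ℝ} :=
    isOpen_lt continuous_const (by fun_prop)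
  exact isClosed_frontier.measurableSet.inter h.measurableSet

/-- The billiard kernel is a multiple of Lebesgue measure in terms of shadows: its density is the
Jacobian of the shadow map. -/
lemma kernel_formula (hK : IsConvexBody K) (hC : 0 < C) (hcurv : CurvatureBoundedBy K C)
    (hν : IsInwardNormal K ν) (hP : IsBilliardKernel K ν P) {u : Euc (d + 1)}
    (hu : u ∈ frontier K) {X : Set (Euc (d + 1))} (hX : MeasurableSet X) :
    P u X = ENNReal.ofReal (kconst K) *
      μH[(d : ℝ)] (shadow (ν u) u '' (X ∩ visible K ν u)) := by
  have hfr : frontier K ⊆ K := hK.2.1.isClosed.frontier_subset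
  have hsub : visible K ν u ⊆ frontier K := fun x hx => hx.1
  have hvm := measurableSet_visible K ν u
  have hd : Module.finrank ℝ (Euc (d + 1)) = d + 1 := by simp
  rw [← shadow_area hd (hν u hu).1 ((normal_continuousOn hC hcurv hν).mono hsub)
    (fun x hx => (hν x hx.1).1)
    (fun x₀ hx₀ ε hε => by
      obtain ⟨U, hU, h⟩ := normal_tangent hK hC hcurv hν hx₀.1 hε
      exact ⟨U, hU, fun x hx y hy => h x ⟨hx.1, hsub hx.2⟩ y ⟨hy.1, hsub hy.2⟩⟩)
    (fun x hx => hx.2) (fun x hx => visible_pos hK hC hcurv hν hu hx)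
    (shadow_injOn hK hC hcurv hν hu) (hX.inter hvm) Set.inter_subset_right,
    kernel_apply hP hu hX]
  have h1 : ∫⁻ x in X ∩ frontier K, ENNReal.ofReal (kconst K * dens ν u x) ∂μH[(d : ℝ)]
      = ∫⁻ x in X ∩ visible K ν u, ENNReal.ofReal (kconst K * dens ν u x) ∂μH[(d : ℝ)] := by
    have hs : X ∩ frontier K = (X ∩ visible K ν u) ∪ ((X ∩ frontier K) \ (visible K ν u)) := by
      ext x; constructor
      · intro hx
        by_cases h : x ∈ visible K ν u
        · exact Or.inl ⟨hx.1, h⟩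
        · exact Or.inr ⟨hx, h⟩
      · rintro (h | h)
        · exact ⟨h.1, hsub h.2⟩
        · exact h.1
    have hm2 : MeasurableSet ((X ∩ frontier K) \ (visible K ν u)) :=
      (hX.inter isClosed_frontier.measurableSet).diff hvm
    rw [hs, lintegral_union hm2 (by
      rw [Set.disjoint_left]; exact fun x hx h => h.2 hx.2)]
    rw [setLIntegral_congr_fun (g := fun _ => 0) hm2]
    · simp
    · intro x hx
      have h2 : ⟪ν u, x - u⟫_ℝ = 0 :=
        le_antisymm (not_lt.1 fun h => hx.2 ⟨hx.1.2, h⟩) ((hν u hu).2 x (hfr hx.1.2))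
      simp [dens_eq, h2]
  rw [h1, ← lintegral_const_mul' _ _ ENNReal.ofReal_ne_top]
  refine lintegral_congr fun x => ?_
  rw [ENNReal.ofReal_mul (kconst_nonneg K), dens_eq]

/-- Under `P u`, the shadow on the tangent hyperplane at `u` of the next point is uniform in the
unit disc. The constant needs no computation, as `P u` is a probability measure. -/
lemma kernel_mass (hd0 : 0 < d) (hK : IsConvexBody K) (hC : 0 < C) (hcurv : CurvatureBoundedBy K C)
    (hν : IsInwardNormal K ν) (hP : IsBilliardKernel K ν P) {u : Euc (d + 1)}
    (hu : u ∈ frontier K) {X : Set (Euc (d + 1))} (hX : MeasurableSet X) :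
    (P u X).toReal * (μH[(d : ℝ)] : Measure (ℝ ∙ ν u)ᗮ).real (closedBall 0 1) =
      (μH[(d : ℝ)] : Measure (ℝ ∙ ν u)ᗮ).real
        {z | (z : Euc (d + 1)) ∈ shadow (ν u) u '' (X ∩ visible K ν u)} := by
  have hd : Module.finrank ℝ (Euc (d + 1)) = d + 1 := by simp
  have ha := (hν u hu).1
  have hHaar : (μH[(d : ℝ)] : Measure (ℝ ∙ ν u)ᗮ).IsAddHaarMeasure :=
    hausdorff_isAddHaar (finrank_orth hd ha)
  have hnt : Nontrivial (ℝ ∙ ν u)ᗮ :=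
    Module.nontrivial_of_finrank_pos (R := ℝ) (by rw [finrank_orth hd ha]; exact hd0)
  have hcoe : ∀ X : Set (Euc (d + 1)), μH[(d : ℝ)] (shadow (ν u) u '' (X ∩ visible K ν u))
      = (μH[(d : ℝ)] : Measure (ℝ ∙ ν u)ᗮ)
        {z | (z : Euc (d + 1)) ∈ shadow (ν u) u '' (X ∩ visible K ν u)} := by
    intro X
    have hiso : Isometry (Subtype.val : (ℝ ∙ ν u)ᗮ → Euc (d + 1)) := isometry_subtype_coe
    rw [← hiso.hausdorffMeasure_image (Or.inl (Nat.cast_nonneg d))]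
    congr 1
    ext z; constructor
    · intro hz
      refine ⟨⟨z, ?_⟩, hz, rfl⟩
      obtain ⟨x, _, rfl⟩ := hz
      exact Submodule.mem_orthogonal_singleton_iff_inner_right.2 (inner_shadow ha u x)
    · rintro ⟨w, hw, rfl⟩; exact hw
  have hball : {z : (ℝ ∙ ν u)ᗮ | (z : Euc (d + 1)) ∈
      shadow (ν u) u '' (Set.univ ∩ visible K ν u)} = ball 0 1 := by
    ext z
    rw [mem_ball_zero_iff, Set.univ_inter]
    constructor
    · rintro ⟨x, hx, hxz⟩
      change ‖(z : Euc (d + 1))‖ < 1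
      rw [← hxz]
      exact shadow_norm_lt ha hx.2
    · intro hz
      obtain ⟨x, hx, hxz⟩ := shadow_surj hK hC hcurv hν hu
        (Submodule.mem_orthogonal_singleton_iff_inner_right.1 z.2) hz
      exact ⟨x, hx, hxz⟩
  have := (hP u hu).1
  have h1 : ENNReal.ofReal (kconst K) *
      (μH[(d : ℝ)] : Measure (ℝ ∙ ν u)ᗮ) (closedBall 0 1) = 1 := by
    rw [Measure.addHaar_closedBall_eq_addHaar_ball, ← hball, ← hcoe,
      ← kernel_formula hK hC hcurv hν hP hu MeasurableSet.univ, measure_univ]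
  rw [kernel_formula hK hC hcurv hν hP hu hX, hcoe, ENNReal.toReal_mul, Measure.real, Measure.real,
    mul_right_comm, ← ENNReal.toReal_mul, h1, ENNReal.toReal_one, one_mul]

end Kernel

/-! ### Comparison of the densities -/

section Overlap

/-- The component of `w` orthogonal to the unit vector `a`, as an element of `aᗮ`. -/
def perp {V : Type*} [NormedAddCommGroup V] [InnerProductSpace ℝ V] {a : V} (ha : ‖a‖ = 1)
    (w : V) : (ℝ ∙ a)ᗮ :=
  ⟨w - ⟪a, w⟫_ℝ • a, by
    rw [Submodule.mem_orthogonal_singleton_iff_inner_right, inner_sub_right, inner_smul_right,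
      real_inner_self_eq_norm_sq, ha]; ring⟩

lemma perp_norm_sq {V : Type*} [NormedAddCommGroup V] [InnerProductSpace ℝ V] {a : V}
    (ha : ‖a‖ = 1) (w : V) : ⟪a, w⟫_ℝ ^ 2 + ‖perp ha w‖ ^ 2 = ‖w‖ ^ 2 := by
  change ⟪a, w⟫_ℝ ^ 2 + ‖w - ⟪a, w⟫_ℝ • a‖ ^ 2 = ‖w‖ ^ 2
  rw [norm_sub_sq_real, inner_smul_right, norm_smul, ha, mul_one, Real.norm_eq_abs, sq_abs,
    real_inner_comm]
  ring

lemma perp_norm_le {V : Type*} [NormedAddCommGroup V] [InnerProductSpace ℝ V] {a : V}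
    (ha : ‖a‖ = 1) {w : V} (hw : ‖w‖ ≤ 1) : ‖perp ha w‖ ≤ 1 := by
  have h := perp_norm_sq ha w
  have h1 : ‖perp ha w‖ ^ 2 ≤ ‖w‖ ^ 2 := by linarith [sq_nonneg ⟪a, w⟫_ℝ]
  exact ((sq_le_sq₀ (norm_nonneg _) (norm_nonneg _)).1 h1).trans hw

lemma inner_perp {V : Type*} [NormedAddCommGroup V] [InnerProductSpace ℝ V] {a : V}
    (ha : ‖a‖ = 1) (w : V) (z : (ℝ ∙ a)ᗮ) : ⟪perp ha w, z⟫_ℝ = ⟪w, (z : V)⟫_ℝ := by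
  have hz : ⟪a, (z : V)⟫_ℝ = 0 := Submodule.mem_orthogonal_singleton_iff_inner_right.1 z.2
  change ⟪w - ⟪a, w⟫_ℝ • a, (z : V)⟫_ℝ = _
  rw [inner_sub_left, inner_smul_left, hz]; simp

/-- A relative perturbation of order `1/n` of the squared distance costs at most a factor `2` in the
density. -/
lemma pow_bound {n : ℕ} (hn : 1000 ≤ n) {ρ τ : ℝ} (hρ : 0 ≤ ρ) (hτ : 0 ≤ τ)
    (h : τ ^ 2 ≤ ρ ^ 2 * (1 + 1 / (10 * n))) : τ ^ (n + 1) ≤ 2 * ρ ^ (n + 1) := by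
  have hn' : (1000 : ℝ) ≤ n := by exact_mod_cast hn
  have h1 : (τ ^ (n + 1)) ^ 2 ≤ (2 * ρ ^ (n + 1)) ^ 2 := by
    calc (τ ^ (n + 1)) ^ 2 = (τ ^ 2) ^ (n + 1) := by rw [← pow_mul, ← pow_mul, mul_comm]
      _ ≤ (ρ ^ 2 * (1 + 1 / (10 * n))) ^ (n + 1) := by gcongr
      _ ≤ (ρ ^ 2 * Real.exp (1 / (10 * n))) ^ (n + 1) := by
          gcongr; linarith [Real.add_one_le_exp (1 / (10 * (n : ℝ)))]
      _ = (ρ ^ (n + 1)) ^ 2 * Real.exp ((n + 1 : ℕ) * (1 / (10 * n))) := by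
          rw [mul_pow, ← pow_mul, ← pow_mul, mul_comm 2, ← Real.exp_nat_mul]
      _ ≤ (ρ ^ (n + 1)) ^ 2 * 4 := by
          gcongr
          have : (n + 1 : ℕ) * (1 / (10 * n)) ≤ (1 : ℝ) := by
            push_cast
            rw [mul_one_div, div_le_one (by positivity)]; linarith
          have h2 := Real.exp_one_lt_d9
          calc _ ≤ Real.exp 1 := Real.exp_le_exp.2 this
            _ ≤ 4 := by linarith
      _ = _ := by ring
  exact (sq_le_sq₀ (by positivity) (by positivity)).1 h1

variable {d : ℕ} {K : Set (Euc (d + 1))} {C : ℝ} {ν : Euc (d + 1) → Euc (d + 1)}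
  {P : Euc (d + 1) → Measure (Euc (d + 1))}

/-- The points of `∂K` at which the one-step density from `v` is at least a fixed fraction of the
one from `u`. -/
def overlap (K : Set (Euc (d + 1))) (ν : Euc (d + 1) → Euc (d + 1)) (u v : Euc (d + 1)) :
    Set (Euc (d + 1)) :=
  {x | x ∈ frontier K ∧ dens ν u x ≤ 6000 * dens ν v x}

lemma measurable_dens (hC : 0 < C) (hcurv : CurvatureBoundedBy K C) (hν : IsInwardNormal K ν)
    (u : Euc (d + 1)) : Measurable (fun x : frontier K => dens ν u x) := by
  have h1 : Continuous (fun x : frontier K => ν x) :=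
    continuousOn_iff_continuous_domRestrict.1 (normal_continuousOn hC hcurv hν)
  simp only [dens_eq]
  have h2 : Measurable (fun x : frontier K => ⟪ν u, (x : Euc (d + 1)) - u⟫_ℝ) :=
    Continuous.measurable (by fun_prop)
  have h3 : Measurable (fun x : frontier K => ⟪ν x, u - (x : Euc (d + 1))⟫_ℝ) :=
    (h1.inner (continuous_const.sub continuous_subtype_val)).measurable
  have h4 : Measurable (fun x : frontier K => ‖(x : Euc (d + 1)) - u‖ ^ (d + 2)) :=
    Continuous.measurable (by fun_prop)
  exact (h2.mul h3).div h4

lemma measurableSet_overlap (hC : 0 < C) (hcurv : CurvatureBoundedBy K C)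
    (hν : IsInwardNormal K ν) (u v : Euc (d + 1)) : MeasurableSet (overlap K ν u v) := by
  have h : MeasurableSet {x : frontier K | dens ν u x ≤ 6000 * dens ν v x} :=
    measurableSet_le (measurable_dens hC hcurv hν u)
      ((measurable_dens hC hcurv hν v).const_mul 6000)
  have h2 := (MeasurableEmbedding.subtype_coe
    (isClosed_frontier (s := K)).measurableSet).measurableSet_image.2 h
  convert h2
  ext x; constructor
  · rintro ⟨hx, h⟩; exact ⟨⟨x, hx⟩, h, rfl⟩
  · rintro ⟨y, hy, rfl⟩; exact ⟨y.2, hy⟩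

/-- A point `x` further than `F` from `u` belongs to the overlap if its direction from `u` is
nearly tangential, has small component along `u - v`, and has component at most `-0.002 / √n` along
every unit vector `m` that is almost an outward normal at `u`, in that `⟪m, y - u⟫` is at most
`F / (50√n)` on `K`. The last condition is applied to `m = -ν v` and, when the normal component at
`x` changes by a factor of more than `2`, to `m = -ν x`. -/
lemma mem_overlap (hd : 1000 ≤ d + 1) (hK : IsConvexBody K) (hC : 0 < C)
    (hcurv : CurvatureBoundedBy K C)
    (hν : IsInwardNormal K ν) {u v x : Euc (d + 1)} (hu : u ∈ frontier K) (hv : v ∈ frontier K)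
    (hx : x ∈ visible K ν u) {F : ℝ} (hF : F < ‖x - u‖)
    (hr : ‖u - v‖ < F / (100 * √(d + 1 : ℕ)))
    (hs : ⟪ν u, x - u⟫_ℝ ≤ 3 / √(d + 1 : ℕ) * ‖x - u‖)
    (hq : ⟪x - u, u - v⟫_ℝ ≤ 3 / √(d + 1 : ℕ) * (‖x - u‖ * ‖u - v‖))
    (hM : ∀ m : Euc (d + 1), ‖m‖ = 1 → (∀ y ∈ K, ⟪m, y - u⟫_ℝ ≤ F / (50 * √(d + 1 : ℕ))) →
      ⟪m, x - u⟫_ℝ < -(0.002 / √(d + 1 : ℕ)) * ‖x - u‖) :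
    x ∈ overlap K ν u v := by
  have hfr : frontier K ⊆ K := hK.2.1.isClosed.frontier_subset
  refine ⟨hx.1, ?_⟩
  have hn0 : (1000 : ℝ) ≤ ((d + 1 : ℕ) : ℝ) := by exact_mod_cast hd
  have hsq : √((d + 1 : ℕ) : ℝ) ^ 2 = (d + 1 : ℕ) := Real.sq_sqrt (by linarith)
  have hsqpos : 0 < √((d + 1 : ℕ) : ℝ) := Real.sqrt_pos.2 (by linarith)
  have hne : x ≠ u := by rintro rfl; simpa using hx.2
  set ρ := ‖x - u‖ with hρ
  have hρpos : 0 < ρ := norm_pos_iff.2 (sub_ne_zero.2 hne)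
  set r := ‖u - v‖ with hrdef
  have hr0 : 0 ≤ r := norm_nonneg _
  have hFr : F / (50 * √((d + 1 : ℕ) : ℝ)) = 2 * (F / (100 * √((d + 1 : ℕ) : ℝ))) := by field_simp; ring
  have hβ := visible_pos hK hC hcurv hν hu hx
  have hα := hx.2
  have hx1 := hν x hx.1
  have hv1 := hν v hv
  -- otherwise `⟪ν x, u - x⟫ < 2|u - v|`, which makes `-ν x` almost an outward normal at `u`
  have h2 : ⟪ν x, u - x⟫_ℝ ≤ 2 * ⟪ν x, v - x⟫_ℝ := by
    by_contra! hcon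
    have e1 : ⟪ν x, u - x⟫_ℝ = ⟪ν x, v - x⟫_ℝ + ⟪ν x, u - v⟫_ℝ := by
      rw [← inner_add_right]; congr 1; abel
    have e2 := real_inner_le_norm (ν x) (u - v)
    rw [hx1.1, one_mul, ← hrdef] at e2
    have h := hM (-ν x) (by rw [norm_neg, hx1.1]) (fun y hy => by
      have := hx1.2 y hy
      have e3 : ⟪-ν x, y - u⟫_ℝ = ⟪ν x, u - x⟫_ℝ - ⟪ν x, y - x⟫_ℝ := by
        rw [inner_neg_left, ← inner_neg_right, ← inner_sub_right]; congr 1; abel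
      rw [e3, hFr]; linarith)
    rw [inner_neg_left, ← inner_neg_right, neg_sub] at h
    have : 0 < 0.002 / √((d + 1 : ℕ) : ℝ) * ρ := by positivity
    linarith
  -- `-ν v` is almost an outward normal at `u`, and `3 = 1500 * 0.002`
  have h3 : ⟪ν u, x - u⟫_ℝ ≤ 1500 * ⟪ν v, x - v⟫_ℝ := by
    have e1 := real_inner_le_norm (ν v) (u - v)
    rw [hv1.1, one_mul, ← hrdef] at e1
    have h := hM (-ν v) (by rw [norm_neg, hv1.1]) (fun y hy => by
      have := hv1.2 y hy
      have e3 : ⟪-ν v, y - u⟫_ℝ = ⟪ν v, u - v⟫_ℝ - ⟪ν v, y - v⟫_ℝ := by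
        rw [inner_neg_left, ← inner_neg_right, ← inner_sub_right]; congr 1; abel
      rw [e3, hFr]; linarith)
    rw [inner_neg_left] at h
    have e4 : ⟪ν v, x - v⟫_ℝ = ⟪ν v, x - u⟫_ℝ + ⟪ν v, u - v⟫_ℝ := by
      rw [← inner_add_right]; congr 1; abel
    have e5 := hv1.2 u (hfr hu)
    have e6 : 3 / √((d + 1 : ℕ) : ℝ) * ρ = 1500 * (0.002 / √((d + 1 : ℕ) : ℝ) * ρ) := by ring
    linarith
  have h3' : 0 < ⟪ν v, x - v⟫_ℝ := by linarith
  have h2' : 0 < ⟪ν x, v - x⟫_ℝ := by linarith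
  have hnv : x ≠ v := by rintro rfl; simp at h3'
  have hτpos : 0 < ‖x - v‖ := norm_pos_iff.2 (sub_ne_zero.2 hnv)
  -- `|x - v|²` exceeds `ρ²` by at most `2 * (3/100 + 1/20000) ρ² / n`
  have h4 : ‖x - v‖ ^ (d + 1 + 1) ≤ 2 * ρ ^ (d + 1 + 1) := by
    refine pow_bound (n := d + 1) hd hρpos.le hτpos.le ?_
    have e1 : x - v = (x - u) + (u - v) := by abel
    have hrρ : r ≤ ρ / (100 * √((d + 1 : ℕ) : ℝ)) :=
      hr.le.trans (by gcongr)
    have e2 : 3 / √((d + 1 : ℕ) : ℝ) * (ρ * r) ≤ 3 / √((d + 1 : ℕ) : ℝ) * (ρ * (ρ / (100 * √((d + 1 : ℕ) : ℝ)))) := by gcongr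
    have e3 : 3 / √((d + 1 : ℕ) : ℝ) * (ρ * (ρ / (100 * √((d + 1 : ℕ) : ℝ)))) = 3 / 100 * (ρ ^ 2 / (d + 1 : ℕ)) := by
      have e : ρ ^ 2 / ((d + 1 : ℕ) : ℝ) = ρ ^ 2 / √((d + 1 : ℕ) : ℝ) ^ 2 := by rw [hsq]
      rw [e]; field_simp
    have e4 : r ^ 2 ≤ (ρ / (100 * √((d + 1 : ℕ) : ℝ))) ^ 2 := by gcongr
    have e5 : (ρ / (100 * √((d + 1 : ℕ) : ℝ))) ^ 2 = 1 / 10000 * (ρ ^ 2 / (d + 1 : ℕ)) := by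
      rw [div_pow, mul_pow, hsq]; field_simp; norm_num
    have e6 : 0 ≤ ρ ^ 2 / (d + 1 : ℕ) := by positivity
    have e7 : ρ ^ 2 * (1 + 1 / (10 * (d + 1 : ℕ))) = ρ ^ 2 + 1 / 10 * (ρ ^ 2 / (d + 1 : ℕ)) := by field_simp
    rw [e1, norm_add_sq_real, e7]
    linarith
  rw [dens_eq, dens_eq, ← hρ]
  change _ / ρ ^ (d + 1 + 1) ≤ 6000 * (_ / ‖x - v‖ ^ (d + 1 + 1))
  rw [← mul_div_assoc, div_le_div_iff₀ (by positivity) (by positivity)]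
  calc ⟪ν u, x - u⟫_ℝ * ⟪ν x, u - x⟫_ℝ * ‖x - v‖ ^ (d + 1 + 1)
      ≤ (1500 * ⟪ν v, x - v⟫_ℝ) * (2 * ⟪ν x, v - x⟫_ℝ) * (2 * ρ ^ (d + 1 + 1)) := by gcongr
    _ = _ := by ring

/-- The overlap carries at least half of the mass of `P u`: by `kernel_mass` this is a statement about
shadows in the unit disc, and `bad_mass` applies with `A` the shadow of the points within distance
`F` of `u`, `M` the almost outward normals at `u`, and `q` the shadow of the direction of `u - v`. -/
lemma overlap_mass (hd : 1000 ≤ d + 1) (hK : IsConvexBody K) (hC : 0 < C)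
    (hcurv : CurvatureBoundedBy K C) (hν : IsInwardNormal K ν) (hP : IsBilliardKernel K ν P)
    {u v : Euc (d + 1)} (hu : u ∈ frontier K) (hv : v ∈ frontier K) {F : ℝ}
    (hF : P u {y | dist u y ≤ F} = ENNReal.ofReal (1 / 128))
    (hr : ‖u - v‖ < F / (100 * √(d + 1 : ℕ))) :
    (P u (overlap K ν u v)ᶜ).toReal ≤ 1 / 2 := by
  have hfr : frontier K ⊆ K := hK.2.1.isClosed.frontier_subset
  have hd0 : 0 < d := by omega
  have ha : ‖ν u‖ = 1 := (hν u hu).1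
  set a := ν u with hadef
  have hfin : Module.finrank ℝ (Euc (d + 1)) = d + 1 := by simp
  have hE : Module.finrank ℝ (ℝ ∙ a)ᗮ = d := finrank_orth hfin ha
  have hHaar : (μH[(d : ℝ)] : Measure (ℝ ∙ a)ᗮ).IsAddHaarMeasure := hausdorff_isAddHaar hE
  have hza : ∀ z : (ℝ ∙ a)ᗮ, ⟪a, (z : Euc (d + 1))⟫_ℝ = 0 := fun z =>
    Submodule.mem_orthogonal_singleton_iff_inner_right.1 z.2
  set A : Set (ℝ ∙ a)ᗮ := {z | (z : Euc (d + 1)) ∈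
    shadow a u '' ({y | dist u y ≤ F} ∩ visible K ν u)} with hA
  set M : Set (ℝ × (ℝ ∙ a)ᗮ) := {p | p.1 ^ 2 + ‖p.2‖ ^ 2 = 1 ∧
    ∀ y ∈ K, ⟪p.1 • a + (p.2 : Euc (d + 1)), y - u⟫_ℝ ≤ F / (50 * √(d + 1 : ℕ))} with hMdef
  set q : (ℝ ∙ a)ᗮ := perp ha (‖u - v‖⁻¹ • (u - v)) with hqdef
  have hsqpos : 0 < √((d + 1 : ℕ) : ℝ) := Real.sqrt_pos.2 (by positivity)
  have hball := real_closedBall_pos (μ := (μH[(d : ℝ)] : Measure (ℝ ∙ a)ᗮ))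
  have hinner : ∀ x ∈ visible K ν u, ∀ z : (ℝ ∙ a)ᗮ, (z : Euc (d + 1)) = shadow a u x →
      ∀ p : ℝ × (ℝ ∙ a)ᗮ, p.1 * √(1 - ‖z‖ ^ 2) + ⟪p.2, z⟫_ℝ
        = ‖x - u‖⁻¹ * ⟪p.1 • a + (p.2 : Euc (d + 1)), x - u⟫_ℝ := by
    intro x hx z hz p
    have e0 : ‖z‖ = ‖(z : Euc (d + 1))‖ := rfl
    rw [← inner_smul_right, direction_eq ha hx.2, ← hz, e0, inner_add_left, inner_add_right,
      inner_add_right, inner_smul_left, inner_smul_left, inner_smul_right, inner_smul_right, hza,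
      real_inner_self_eq_norm_sq, ha, real_inner_comm a (p.2 : Euc (d + 1)), hza]
    simp
  have hAB : A ⊆ closedBall 0 1 := by
    rintro z ⟨x, hx, hxz⟩
    rw [mem_closedBall_zero_iff]
    change ‖(z : Euc (d + 1))‖ ≤ 1
    rw [← hxz]
    exact (shadow_norm_lt ha hx.2.2).le
  have hclosed : MeasurableSet {y : Euc (d + 1) | dist u y ≤ F} :=
    (isClosed_le (by fun_prop) continuous_const).measurableSet
  have hAm : (μH[(d : ℝ)] : Measure (ℝ ∙ a)ᗮ).real A
      ≤ (μH[(d : ℝ)] : Measure (ℝ ∙ a)ᗮ).real (closedBall 0 1) / 128 := by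
    have h := kernel_mass hd0 hK hC hcurv hν hP hu hclosed
    rw [hF, ENNReal.toReal_ofReal (by norm_num)] at h
    exact (h.symm.trans (by ring)).le
  have hMA : ∀ m ∈ M, ∀ z : (ℝ ∙ a)ᗮ, ‖z‖ < 1 →
      1 / (50 * √(d + 1 : ℕ)) ≤ m.1 * √(1 - ‖z‖ ^ 2) + ⟪m.2, z⟫_ℝ → z ∈ A := by
    intro m hm z hz hmz
    obtain ⟨x, hx, hxz⟩ := shadow_surj hK hC hcurv hν hu (hza z) hz
    refine ⟨x, ⟨?_, hx⟩, hxz⟩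
    rw [hinner x hx z hxz.symm] at hmz
    have h1 := hm.2 x (hfr hx.1)
    have hne : x ≠ u := by rintro rfl; simpa using hx.2
    have hpos : 0 < ‖x - u‖ := norm_pos_iff.2 (sub_ne_zero.2 hne)
    have h2 : 1 / (50 * √(d + 1 : ℕ)) ≤ ‖x - u‖⁻¹ * (F / (50 * √(d + 1 : ℕ))) :=
      hmz.trans (by gcongr)
    change dist u x ≤ F
    rw [dist_comm, dist_eq_norm]
    have h3 : ‖x - u‖⁻¹ * (F / (50 * √(d + 1 : ℕ))) = F / ‖x - u‖ * (1 / (50 * √(d + 1 : ℕ))) := by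
      ring
    have h4 : 0 < 1 / (50 * √((d + 1 : ℕ) : ℝ)) := by positivity
    rw [h3, le_mul_iff_one_le_left h4, one_le_div hpos] at h2
    exact h2
  have hq1 : ‖q‖ ≤ 1 := perp_norm_le ha (by
    rw [norm_smul, norm_inv, norm_norm]; exact inv_mul_le_one)
  have hbad := bad_mass (μ := (μH[(d : ℝ)] : Measure (ℝ ∙ a)ᗮ)) (n := d + 1) (by rw [hE]) hd hAB
    hAm M (fun m hm => hm.1) hMA hq1
  have hmass := kernel_mass hd0 hK hC hcurv hν hP hu (measurableSet_overlap hC hcurv hν u v).compl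
  have hsub : {z : (ℝ ∙ a)ᗮ | (z : Euc (d + 1)) ∈
      shadow a u '' ((overlap K ν u v)ᶜ ∩ visible K ν u)} ⊆
      {z | ‖z‖ < 1 ∧ ¬ (z ∉ A ∧ √(1 - ‖z‖ ^ 2) ≤ 3 / √(d + 1 : ℕ) ∧
        ⟪q, z⟫_ℝ ≤ 3 / √(d + 1 : ℕ) ∧
        ∀ m ∈ M, m.1 * √(1 - ‖z‖ ^ 2) + ⟪m.2, z⟫_ℝ < -(0.002 / √(d + 1 : ℕ)))} := by
    rintro z ⟨x, ⟨hxo, hx⟩, hxz⟩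
    have hznorm : ‖z‖ = ‖shadow a u x‖ := by rw [hxz]; rfl
    refine ⟨by rw [hznorm]; exact shadow_norm_lt ha hx.2, ?_⟩
    rintro ⟨hzA, hzs, hzq, hzM⟩
    have hne : x ≠ u := by rintro rfl; simpa using hx.2
    have hpos : 0 < ‖x - u‖ := norm_pos_iff.2 (sub_ne_zero.2 hne)
    apply hxo
    refine mem_overlap hd hK hC hcurv hν hu hv hx (F := F) ?_ hr ?_ ?_ ?_
    · by_contra! hcon
      exact hzA ⟨x, ⟨by change dist u x ≤ F; rwa [dist_comm, dist_eq_norm], hx⟩, hxz⟩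
    · rw [hznorm, cos_eq ha hx.2, inv_mul_le_iff₀ hpos] at hzs
      linarith
    · have h1 := hinner x hx z hxz.symm (0, q)
      have hdir := direction_eq ha hx.2
      have h2 : ⟪q, z⟫_ℝ = ‖u - v‖⁻¹ * ⟪u - v, (z : Euc (d + 1))⟫_ℝ := by
        rw [hqdef, inner_perp, inner_smul_left]; simp
      have h3 : ⟪u - v, (z : Euc (d + 1))⟫_ℝ ≤ 3 / √(d + 1 : ℕ) * ‖u - v‖ := by
        rcases eq_or_ne u v with rfl | huv
        · simp
        · have hr0 : 0 < ‖u - v‖ := norm_pos_iff.2 (sub_ne_zero.2 huv)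
          rw [h2, inv_mul_le_iff₀ hr0] at hzq
          linarith
      have h4 : ⟪u - v, ‖x - u‖⁻¹ • (x - u)⟫_ℝ ≤ ⟪u - v, (z : Euc (d + 1))⟫_ℝ := by
        rw [hdir, hxz, inner_add_right, inner_smul_right]
        have h5 := (hν u hu).2 v (hfr hv)
        rw [← neg_sub u v, inner_neg_right, real_inner_comm] at h5
        have h6 : 0 ≤ √(1 - ‖(z : Euc (d + 1))‖ ^ 2) := Real.sqrt_nonneg _
        have h7 : ⟪u - v, a⟫_ℝ ≤ 0 := by linarith
        linarith [mul_nonpos_of_nonneg_of_nonpos h6 h7]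
      rw [inner_smul_right] at h4
      have h7 := h4.trans h3
      rw [inv_mul_le_iff₀ hpos, real_inner_comm] at h7
      linarith
    · intro m hm hmK
      have hp : (⟪a, m⟫_ℝ • a + (perp ha m : Euc (d + 1))) = m := by
        change ⟪a, m⟫_ℝ • a + (m - ⟪a, m⟫_ℝ • a) = m
        abel
      have h1 := hzM (⟪a, m⟫_ℝ, perp ha m) ⟨by rw [perp_norm_sq, hm, one_pow], by
        simp only [hp]; exact hmK⟩
      rw [hinner x hx z hxz.symm, hp, inv_mul_lt_iff₀ hpos] at h1
      linarith
  have hfinite : (μH[(d : ℝ)] : Measure (ℝ ∙ a)ᗮ)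
      {z | ‖z‖ < 1 ∧ ¬ (z ∉ A ∧ √(1 - ‖z‖ ^ 2) ≤ 3 / √(d + 1 : ℕ) ∧
        ⟪q, z⟫_ℝ ≤ 3 / √(d + 1 : ℕ) ∧
        ∀ m ∈ M, m.1 * √(1 - ‖z‖ ^ 2) + ⟪m.2, z⟫_ℝ < -(0.002 / √(d + 1 : ℕ)))} ≠ ∞ :=
    ((measure_mono (t := closedBall (0 : (ℝ ∙ a)ᗮ) 1) (fun z hz =>
      mem_closedBall_zero_iff.2 hz.1.le)).trans_lt measure_closedBall_lt_top).ne
  have h := (measureReal_mono hsub hfinite).trans hbad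
  rw [← hmass] at h
  refine le_of_mul_le_mul_right (h.trans_eq ?_) hball
  ring

lemma overlap_le (hP : IsBilliardKernel K ν P)
    {u v : Euc (d + 1)} (hu : u ∈ frontier K) (hv : v ∈ frontier K) {X : Set (Euc (d + 1))}
    (hX : MeasurableSet X) (hXo : X ⊆ overlap K ν u v) :
    (P u X).toReal ≤ 6000 * (P v X).toReal := by
  have := (hP v hv).1
  have hle : P u X ≤ ENNReal.ofReal 6000 * P v X := by
    rw [kernel_apply hP hu hX, kernel_apply hP hv hX,
      ← lintegral_const_mul' _ _ ENNReal.ofReal_ne_top]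
    refine setLIntegral_mono' (hX.inter isClosed_frontier.measurableSet) fun x hx => ?_
    rw [← ENNReal.ofReal_mul (by norm_num)]
    refine ENNReal.ofReal_le_ofReal ?_
    have h1 := (hXo hx.1).2
    have h2 := mul_le_mul_of_nonneg_left h1 (kconst_nonneg K)
    linarith
  have h := ENNReal.toReal_mono (ENNReal.mul_ne_top ENNReal.ofReal_ne_top (measure_ne_top _ _)) hle
  rwa [ENNReal.toReal_mul, ENNReal.toReal_ofReal (by norm_num)] at h

/-- If `μ₁ ≤ 6000 μ₂` on a set of `μ₁`-measure at least `1/2`, the two probability measures share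
mass `1/12000`. Non-measurable sets in the supremum are replaced by measurable hulls. -/
lemma tv_le_of_overlap {n : ℕ} {μ₁ μ₂ : Measure (Euc n)} [IsProbabilityMeasure μ₁]
    [IsProbabilityMeasure μ₂] {S : Set (Euc n)} (hS : MeasurableSet S)
    (hS1 : (μ₁ Sᶜ).toReal ≤ 1 / 2)
    (h : ∀ X ⊆ S, MeasurableSet X → (μ₁ X).toReal ≤ 6000 * (μ₂ X).toReal) :
    tvDist μ₁ μ₂ ≤ 1 - 1 / 12000 := by
  have one : ∀ B, MeasurableSet B → μ₁.real B - μ₂.real B ≤ 1 - 1 / 12000 := by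
    intro B hB
    have h1 := h (B ∩ S) Set.inter_subset_right (hB.inter hS)
    change μ₁.real (B ∩ S) ≤ 6000 * μ₂.real (B ∩ S) at h1
    change μ₁.real Sᶜ ≤ 1 / 2 at hS1
    have h2 : μ₂.real (B ∩ S) ≤ μ₂.real B := measureReal_mono Set.inter_subset_left
    have h3 : μ₁.real (B ∩ S) ≤ μ₁.real S := measureReal_mono Set.inter_subset_right
    have h4 : μ₁.real (B \ S) ≤ μ₁.real Sᶜ := measureReal_mono fun x hx => hx.2
    have h5 := measureReal_inter_add_sdiff (μ := μ₁) (s := B) hS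
    have h6 := probReal_compl_eq_one_sub (μ := μ₁) hS
    linarith
  have meas : ∀ B, MeasurableSet B → |μ₁.real B - μ₂.real B| ≤ 1 - 1 / 12000 := by
    intro B hB
    have h1 := one Bᶜ hB.compl
    rw [probReal_compl_eq_one_sub hB, probReal_compl_eq_one_sub hB] at h1
    exact abs_le.2 ⟨by linarith, one B hB⟩
  refine ciSup_le fun B => ?_
  -- `toMeasurable μ₁ B ∩ toMeasurable μ₂ B` is a hull of `B` for both measures
  have h1 : μ₁ B = μ₁ (toMeasurable μ₁ B ∩ toMeasurable μ₂ B) :=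
    le_antisymm (measure_mono (Set.subset_inter (subset_toMeasurable _ _) (subset_toMeasurable _ _)))
      ((measure_mono Set.inter_subset_left).trans (measure_toMeasurable B).le)
  have h2 : μ₂ B = μ₂ (toMeasurable μ₁ B ∩ toMeasurable μ₂ B) :=
    le_antisymm (measure_mono (Set.subset_inter (subset_toMeasurable _ _) (subset_toMeasurable _ _)))
      ((measure_mono Set.inter_subset_right).trans (measure_toMeasurable B).le)
  rw [h1, h2]
  exact meas _ ((measurableSet_toMeasurable _ _).inter (measurableSet_toMeasurable _ _))

lemma tv_le (hd : 1000 ≤ d + 1) (hK : IsConvexBody K) (hC : 0 < C)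
    (hcurv : CurvatureBoundedBy K C) (hν : IsInwardNormal K ν) (hP : IsBilliardKernel K ν P)
    {u v : Euc (d + 1)} (hu : u ∈ frontier K) (hv : v ∈ frontier K) {F : ℝ}
    (hF : P u {y | dist u y ≤ F} = ENNReal.ofReal (1 / 128))
    (hr : dist u v < 1 / (100 * √(d + 1 : ℕ)) * F) :
    tvDist (P u) (P v) ≤ 1 - 1 / 12000 := by
  have := (hP u hu).1
  have := (hP v hv).1
  refine tv_le_of_overlap (measurableSet_overlap hC hcurv hν u v)
    (overlap_mass hd hK hC hcurv hν hP hu hv hF ?_)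
    fun X hX hXm => overlap_le hP hu hv hXm hX
  rw [← dist_eq_norm]
  exact hr.trans_eq (by ring)

lemma tvDist_comm {n : ℕ} (μ₁ μ₂ : Measure (Euc n)) : tvDist μ₁ μ₂ = tvDist μ₂ μ₁ := by
  unfold tvDist
  simp only [abs_sub_comm]

end Overlap

/-- **Overlap lemma.** There is an absolute constant `κ > 0` such that, for all
sufficiently large `n`: for any convex body `K ⊆ ℝⁿ` with curvature bound `C` and any
`u, v ∈ ∂K` with `|u - v| < (1/(100√n)) max(F(u), F(v))`, the one-step distributions
overlap: `‖P_u - P_v‖_TV ≤ 1 - 1/κ`. -/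
theorem billiard_overlap :
    ∃ κ : ℝ, 0 < κ ∧
      ∃ N : ℕ, ∀ n : ℕ, N ≤ n →
        ∀ (K : Set (Euc n)) (C : ℝ) (ν : Euc n → Euc n)
          (P : Euc n → Measure (Euc n)) (F : Euc n → ℝ),
          IsConvexBody K →
          0 < C → CurvatureBoundedBy K C →
          IsInwardNormal K ν →
          IsBilliardKernel K ν P →
          (∀ x ∈ frontier K,
            P x {y : Euc n | dist x y ≤ F x} = ENNReal.ofReal (1 / 128)) →
          ∀ u ∈ frontier K, ∀ v ∈ frontier K,
            dist u v < 1 / (100 * Real.sqrt n) * max (F u) (F v) →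
            tvDist (P u) (P v) ≤ 1 - 1 / κ := by
  refine ⟨12000, by norm_num, 1000, fun n hn K C ν P F hK hC hcurv hν hP hF u hu v hv huv => ?_⟩
  obtain ⟨d, rfl⟩ : ∃ d, n = d + 1 := ⟨n - 1, by omega⟩
  rcases le_total (F v) (F u) with h | h
  · rw [max_eq_left h] at huv
    exact tv_le hn hK hC hcurv hν hP hu hv (hF u hu) huv
  · rw [max_eq_right h, dist_comm] at huv
    rw [tvDist_comm]
    exact tv_le hn hK hC hcurv hν hP hv hu (hF v hv) huv

end
end

section
/- In the proof of the mixing-time lower bound for the cylinder: let X be uniformly distributed on the (n−1)-dimensional unit ball tangent at the origin to K̃ = {x ∈ R^n : (1−x₂)² + x₃² + ⋯ + x_n² ≤ 1} (the tangent plane being orthogonal to e₂), let Y = (X₁, √(1−‖X‖²), X₃, …, X_n), and let Z = (2Y/(1−X₁²))·√(1−‖X‖²). Then Z lies on ∂K̃, the law of Z equals the one-step distribution of the stochastic billiard process on ∂K̃ started from the origin, and Var(Z₁) = E[(1−‖X‖²)·4X₁²/(1−X₁²)²] is of order 1/n² as n → ∞. -/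
/-!
Write `n = k + 2`. Lifting a point `x` of the tangent ball to the upper unit halfsphere gives a
direction `lift x`, and `Zmap` is `exitMap ∘ lift` (`Zmap_ins`); that the image lies on `∂K̃` is then
algebra. The theorem rests on two facts.

*The cosine law is the lifted uniform law* (`Pcos_eq`). The Hausdorff measure of the sphere is finite,
non-zero and rotation invariant, and so is the image of Lebesgue measure on the unit ball under
central projection (`coneMeasure`). Rotation-invariant finite measures on the sphere are
proportional (`invariant_unique`), so the cosine law may be computed with `coneMeasure`. Splitting a
point of the solid ball into its tangential part `u` and normal coordinate `v`, and replacing `v` by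
the norm `ρ = √(v² + ‖u‖²)`, the Jacobian `v / ρ` is exactly the cosine weight; rescaling `u = ρ x`
leaves Lebesgue measure in `x` on the tangent ball (`lintegral_cos`). On the hyperplane the
Hausdorff measure is a multiple of Lebesgue measure, so this is the law of `X` (`unifTangent_eq`).

*The variance is explicit* (`variance_exact`). Since `Z₁` is odd in `X`, its mean vanishes and
`Var Z₁ = E[Z₁²]`. Slice the ball at `X₁ = s`: the rest of `X` is `√(1 - s²) W` with `W` uniform in
the unit ball of `ℝᵏ`, for which `E[1 - ‖W‖²] = 2 / (k + 2)`. The remaining integral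
`∫ s² (1 - s²)^{(k-2)/2} ds` is `1 / k` times `∫ (1 - s²)^{k/2} ds` by parts. Hence
`Var Z₁ = 8 / (k (k + 2)) = 8 / (n (n - 2))` for `n ≥ 4`, which lies between `8 / n²` and `16 / n²`.
-/

open MeasureTheory Metric Filter
open scoped ENNReal NNReal InnerProductSpace Topology

noncomputable section

/-- Surface measure on the unit sphere `S_x` centered at `x`:
the `(n-1)`-dimensional Hausdorff measure restricted to the sphere. -/
def sphereMeasure {n : ℕ} (x : Euc n) : Measure (Euc n) :=
  (μH[(n - 1 : ℝ)]).restrict (sphere x 1)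

/-- The cosine law `P_x^cos`: probability law on the halfsphere
`{y ∈ S_x : n_x·(y-x) ≥ 0}` with density proportional to `n_x·(y-x)`. -/
def Pcos {n : ℕ} (x ν : Euc n) : Measure (Euc n) :=
  ((sphereMeasure x).withDensity (fun y => ENNReal.ofReal ⟪ν, y - x⟫_ℝ) Set.univ)⁻¹ •
    (sphereMeasure x).withDensity (fun y => ENNReal.ofReal ⟪ν, y - x⟫_ℝ)

/-- The uniform law `P_x^unif` on the halfsphere `{y ∈ S_x : n_x·(y-x) ≥ 0}`. -/
def Punif {n : ℕ} (x ν : Euc n) : Measure (Euc n) :=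
  ((sphereMeasure x).restrict {y | 0 ≤ ⟪ν, y - x⟫_ℝ} Set.univ)⁻¹ •
    (sphereMeasure x).restrict {y | 0 ≤ ⟪ν, y - x⟫_ℝ}

/-- The two-sided cosine law `P̃_x^cos`: law on the full sphere `S_x` with density
proportional to `|n_x·(y-x)|`. -/
def PcosAbs {n : ℕ} (x ν : Euc n) : Measure (Euc n) :=
  ((sphereMeasure x).withDensity (fun y => ENNReal.ofReal |⟪ν, y - x⟫_ℝ|) Set.univ)⁻¹ •
    (sphereMeasure x).withDensity (fun y => ENNReal.ofReal |⟪ν, y - x⟫_ℝ|)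

/-- The uniform law `P̃_x^unif` on the full sphere `S_x`. -/
def PunifFull {n : ℕ} (x : Euc n) : Measure (Euc n) :=
  (sphereMeasure x Set.univ)⁻¹ • sphereMeasure x

open ProbabilityTheory

/-- The `(n-1)`-dimensional unit ball tangent to `K̃` at the origin, lying in the
hyperplane orthogonal to `e₂` (coordinates `x₁, x₃, …, x_n`). -/
def tangentBall (n : ℕ) [NeZero n] : Set (Euc n) :=
  {x : Euc n | x 1 = 0 ∧ ‖x‖ ≤ 1}

/-- Uniform distribution on the tangent ball (normalized `(n-1)`-dimensional
Hausdorff measure). -/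
def unifTangent (n : ℕ) [NeZero n] : Measure (Euc n) :=
  (((μH[(n - 1 : ℝ)]).restrict (tangentBall n)) Set.univ)⁻¹ •
    ((μH[(n - 1 : ℝ)]).restrict (tangentBall n))

/-- `Y = (X₁, √(1-‖X‖²), X₃, …, X_n)`: the projection of `X` onto the unit halfsphere. -/
def Ymap (n : ℕ) [NeZero n] (x : Euc n) : Euc n :=
  x + Real.sqrt (1 - ‖x‖ ^ 2) • (EuclideanSpace.single 1 1 : Euc n)

/-- `Z = (2Y/(1-X₁²))·√(1-‖X‖²)`. -/
def Zmap (n : ℕ) [NeZero n] (x : Euc n) : Euc n :=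
  (2 * Real.sqrt (1 - ‖x‖ ^ 2) / (1 - (x 0) ^ 2)) • Ymap n x

/-- The shifted cylinder `K̃ = {x : (1-x₂)² + x₃² + ⋯ + x_n² ≤ 1}`
(note `x₃² + ⋯ + x_n² = ‖x‖² - x₁² - x₂²`). -/
def Ktilde (n : ℕ) [NeZero n] : Set (Euc n) :=
  {x : Euc n | (1 - x 1) ^ 2 + (‖x‖ ^ 2 - (x 0) ^ 2 - (x 1) ^ 2) ≤ 1}

/-- The second intersection with `∂K̃` of the ray from the origin in direction `w`. -/
def exitMap (n : ℕ) [NeZero n] (w : Euc n) : Euc n :=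
  (2 * w 1 / (1 - (w 0) ^ 2)) • w

/-! ### Rotation-invariant measures on the sphere -/

lemma measure_ball_eq_of_invariant {n : ℕ} {μ : Measure (Euc n)}
    (hμ : ∀ L : Euc n ≃ₗᵢ[ℝ] Euc n, μ.map L = μ) {x y : Euc n}
    (hx : x ∈ sphere (0 : Euc n) 1) (hy : y ∈ sphere (0 : Euc n) 1) (ε : ℝ) :
    μ (ball x ε) = μ (ball y ε) := by
  have hxy : ‖x‖ = ‖y‖ := by simp_all
  set L : Euc n ≃ₗᵢ[ℝ] Euc n := (ℝ ∙ (x - y))ᗮ.reflection with hL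
  have hLx : L x = y := Submodule.reflection_sub hxy
  calc μ (ball x ε) = μ (L ⁻¹' ball y ε) := by
        congr 1; ext z
        simp only [Set.mem_preimage, mem_ball, ← hLx, L.dist_map]
    _ = μ.map L (ball y ε) := (Measure.map_apply L.continuous.measurable measurableSet_ball).symm
    _ = μ (ball y ε) := by rw [hμ L]

/-- Fubini and invariance: the small balls centred on the sphere all have the same `μ`-measure, so
averaging `ν (U ∩ ball x ε)` over `x` gives a multiple of `ν U`. -/
lemma lintegral_measure_inter_ball {n : ℕ} {μ ν : Measure (Euc n)} [IsFiniteMeasure μ]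
    [IsFiniteMeasure ν] (hνS : ν (sphere (0 : Euc n) 1)ᶜ = 0)
    (hμ : ∀ L : Euc n ≃ₗᵢ[ℝ] Euc n, μ.map L = μ) {p : Euc n} (hp : p ∈ sphere (0 : Euc n) 1)
    {U : Set (Euc n)} (hU : MeasurableSet U) (ε : ℝ) :
    Measurable (fun x => ν (U ∩ ball x ε)) ∧
    ∫⁻ x, ν (U ∩ ball x ε) ∂μ = μ (ball p ε) * ν U := by
  set s : Set (Euc n × Euc n) := {q | q.2 ∈ U ∧ dist q.2 q.1 < ε} with hs
  have hsm : MeasurableSet s :=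
    (measurable_snd hU).inter (isOpen_lt (continuous_snd.dist continuous_fst) continuous_const).measurableSet
  have h1 : ∀ x, ν (U ∩ ball x ε) = ν (Prod.mk x ⁻¹' s) := fun x => rfl
  refine ⟨measurable_measure_prodMk_left hsm, ?_⟩
  simp_rw [h1]
  rw [← Measure.prod_apply hsm, Measure.prod_apply_symm hsm]
  have h2 : ∀ᵐ y ∂ν, μ ((fun x => (x, y)) ⁻¹' s) = U.indicator (fun _ => μ (ball p ε)) y := by
    have : ∀ᵐ y ∂ν, y ∈ sphere (0 : Euc n) 1 := hνS
    filter_upwards [this] with y hy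
    by_cases hyU : y ∈ U
    · rw [Set.indicator_of_mem hyU, ← measure_ball_eq_of_invariant hμ hy hp ε]
      congr 1; ext x; simp [hs, hyU, dist_comm]
    · rw [Set.indicator_of_notMem hyU]
      have : (fun x => (x, y)) ⁻¹' s = ∅ := by ext x; simp [hs, hyU]
      simp [this]
  rw [lintegral_congr_ae h2, lintegral_indicator hU]
  simp

/-- Half of the uniqueness of the rotation-invariant measure on the sphere. Averaging `ν (U ∩ ball x ε)`
over `x ~ μ` gives, by Fubini and invariance, a multiple of `ν U`; letting `ε → 0`, Fatou's lemma
compares the average with `μ U`. -/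
lemma invariant_le {n : ℕ} {μ ν : Measure (Euc n)} [IsFiniteMeasure μ]
    [IsFiniteMeasure ν] (hμS : μ (sphere (0 : Euc n) 1)ᶜ = 0)
    (hνS : ν (sphere (0 : Euc n) 1)ᶜ = 0)
    (hμ : ∀ L : Euc n ≃ₗᵢ[ℝ] Euc n, μ.map L = μ)
    (hν : ∀ L : Euc n ≃ₗᵢ[ℝ] Euc n, ν.map L = ν) (hν0 : ν ≠ 0)
    {U : Set (Euc n)} (hU : IsOpen U) :
    ν Set.univ * μ U ≤ μ Set.univ * ν U := by
  have hνu : ν Set.univ ≠ 0 := by simpa using hν0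
  have hSne : (sphere (0 : Euc n) 1).Nonempty := by
    by_contra h
    rw [Set.not_nonempty_iff_eq_empty] at h
    simp [h] at hνS
    exact hν0 hνS
  obtain ⟨p, hp⟩ := hSne
  have hpos : ∀ ε : ℝ, 0 < ε → ν (ball p ε) ≠ 0 := by
    intro ε hε h0
    have : ν (sphere (0 : Euc n) 1) = 0 := by
      apply measure_null_of_locally_null
      intro x hx
      refine ⟨ball x ε, mem_nhdsWithin_of_mem_nhds (ball_mem_nhds x hε), ?_⟩
      rw [measure_ball_eq_of_invariant hν hx hp ε, h0]
    apply hνu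
    rw [← Set.union_compl_self (sphere (0 : Euc n) 1)]
    exact measure_union_null this hνS
  have hratio : ∀ ε : ℝ, 0 < ε →
      μ (ball p ε) / ν (ball p ε) = μ Set.univ / ν Set.univ := by
    intro ε hε
    have h1 := (lintegral_measure_inter_ball hνS hμ hp MeasurableSet.univ ε).2
    have h2 : ∫⁻ x, ν (Set.univ ∩ ball x ε) ∂μ = ν (ball p ε) * μ Set.univ := by
      have : ∀ᵐ x ∂μ, ν (Set.univ ∩ ball x ε) = ν (ball p ε) := by
        have : ∀ᵐ y ∂μ, y ∈ sphere (0 : Euc n) 1 := hμS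
        filter_upwards [this] with x hx
        rw [Set.univ_inter, measure_ball_eq_of_invariant hν hx hp ε]
      rw [lintegral_congr_ae this]; simp
    rw [h2] at h1
    rw [ENNReal.div_eq_div_iff hνu (measure_ne_top _ _) (hpos ε hε) (measure_ne_top _ _), h1,
      mul_comm]
  set e : ℕ → ℝ := fun k => 1 / ((k : ℝ) + 1) with he
  have hepos : ∀ k, 0 < e k := fun k => by positivity
  have helim : Tendsto e atTop (𝓝 0) := tendsto_one_div_add_atTop_nhds_zero_nat
  set f : ℕ → Euc n → ℝ≥0∞ := fun k x => ν (U ∩ ball x (e k)) / ν (ball p (e k)) with hf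
  have hfm : ∀ k, Measurable (f k) := fun k =>
    (lintegral_measure_inter_ball hνS hμ hp hU.measurableSet (e k)).1.div_const _
  have hint : ∀ k, ∫⁻ x, f k x ∂μ = μ Set.univ / ν Set.univ * ν U := by
    intro k
    simp only [hf, div_eq_mul_inv]
    rw [lintegral_mul_const _ (lintegral_measure_inter_ball hνS hμ hp hU.measurableSet (e k)).1,
      (lintegral_measure_inter_ball hνS hμ hp hU.measurableSet (e k)).2, mul_right_comm,
      ← div_eq_mul_inv, hratio _ (hepos k), div_eq_mul_inv]
  have hfatou := lintegral_liminf_le (μ := μ) (u := atTop) hfm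
  simp only [hint, liminf_const] at hfatou
  have hle : μ U ≤ ∫⁻ a, liminf (fun i => f i a) atTop ∂μ := by
    rw [← lintegral_indicator_one hU.measurableSet]
    apply lintegral_mono_ae
    have : ∀ᵐ y ∂μ, y ∈ sphere (0 : Euc n) 1 := hμS
    filter_upwards [this] with x hx
    by_cases hxU : x ∈ U
    · rw [Set.indicator_of_mem hxU]
      refine le_liminf_of_le (by isBoundedDefault) ?_
      obtain ⟨δ, hδ, hball⟩ := Metric.isOpen_iff.1 hU x hxU
      filter_upwards [helim.eventually (gt_mem_nhds hδ)] with k hk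
      have : U ∩ ball x (e k) = ball x (e k) :=
        Set.inter_eq_right.2 ((ball_subset_ball hk.le).trans hball)
      simp only [hf, this, measure_ball_eq_of_invariant hν hx hp (e k), Pi.one_apply]
      rw [ENNReal.div_self (hpos _ (hepos k)) (measure_ne_top _ _)]
    · simp [Set.indicator_of_notMem hxU]
  calc ν Set.univ * μ U ≤ ν Set.univ * (μ Set.univ / ν Set.univ * ν U) := by
        gcongr; exact hle.trans hfatou
    _ = μ Set.univ * ν U := by
        rw [← mul_assoc, ENNReal.mul_div_cancel hνu (measure_ne_top _ _)]

/-- A finite rotation-invariant measure on the unit sphere is unique up to a factor. -/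
lemma invariant_unique {n : ℕ} {μ ν : Measure (Euc n)} [IsFiniteMeasure μ]
    [IsFiniteMeasure ν] (hμS : μ (sphere (0 : Euc n) 1)ᶜ = 0)
    (hνS : ν (sphere (0 : Euc n) 1)ᶜ = 0)
    (hμ : ∀ L : Euc n ≃ₗᵢ[ℝ] Euc n, μ.map L = μ)
    (hν : ∀ L : Euc n ≃ₗᵢ[ℝ] Euc n, ν.map L = ν) (hμ0 : μ ≠ 0) (hν0 : ν ≠ 0) :
    ν Set.univ • μ = μ Set.univ • ν := by
  have : IsFiniteMeasure (ν Set.univ • μ) := μ.smul_finite (measure_ne_top _ _)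
  refine ext_of_generate_finite _ (BorelSpace.measurable_eq (α := Euc n)) isPiSystem_isOpen
    (fun U hU => ?_) ?_
  · simp only [Measure.smul_apply, smul_eq_mul]
    exact le_antisymm (invariant_le hμS hνS hμ hν hν0 hU) (invariant_le hνS hμS hν hμ hμ0 hU)
  · simp [mul_comm]

/-! ### Slicing Euclidean space along a coordinate -/

/-- The point of `ℝ^{m+1}` with `i`-th coordinate `v` and remaining coordinates `u`. -/
def ins {m : ℕ} (i : Fin (m + 1)) (v : ℝ) (u : Euc m) : Euc (m + 1) :=
  WithLp.toLp 2 (i.insertNth v (u : Fin m → ℝ))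

@[simp] lemma ins_same {m : ℕ} (i : Fin (m + 1)) (v : ℝ) (u : Euc m) : ins i v u i = v := by
  simp [ins]

@[simp] lemma ins_succAbove {m : ℕ} (i : Fin (m + 1)) (v : ℝ) (u : Euc m) (j : Fin m) :
    ins i v u (i.succAbove j) = u j := by
  simp [ins]

lemma ins_ext {m : ℕ} (i : Fin (m + 1)) {x y : Euc (m + 1)} (h : x i = y i)
    (h' : ∀ j, x (i.succAbove j) = y (i.succAbove j)) : x = y := by
  ext k
  rcases Fin.eq_self_or_eq_succAbove i k with rfl | ⟨j, rfl⟩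
  · exact h
  · exact h' j

lemma norm_sq_ins {m : ℕ} (i : Fin (m + 1)) (v : ℝ) (u : Euc m) :
    ‖ins i v u‖ ^ 2 = v ^ 2 + ‖u‖ ^ 2 := by
  rw [EuclideanSpace.norm_sq_eq, EuclideanSpace.norm_sq_eq, Fin.sum_univ_succAbove _ i]
  simp

lemma norm_ins {m : ℕ} (i : Fin (m + 1)) (v : ℝ) (u : Euc m) :
    ‖ins i v u‖ = √(v ^ 2 + ‖u‖ ^ 2) := by
  rw [← norm_sq_ins i, Real.sqrt_sq (norm_nonneg _)]

lemma smul_ins {m : ℕ} (i : Fin (m + 1)) (c v : ℝ) (u : Euc m) :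
    c • ins i v u = ins i (c * v) (c • u) := by
  apply ins_ext i <;> simp

lemma continuous_ins {m : ℕ} (i : Fin (m + 1)) :
    Continuous (fun q : ℝ × Euc m => ins i q.1 q.2) := by
  unfold ins
  refine (PiLp.continuous_toLp 2 _).comp ?_
  refine continuous_pi fun k => ?_
  rcases Fin.eq_self_or_eq_succAbove i k with rfl | ⟨j, rfl⟩
  · simpa using continuous_fst
  · simp only [Fin.insertNth_apply_succAbove]
    fun_prop

lemma isometry_ins_zero {m : ℕ} (i : Fin (m + 1)) : Isometry (ins i 0 : Euc m → Euc (m + 1)) := by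
  refine Isometry.of_dist_eq fun u w => ?_
  have h : ins i 0 u - ins i 0 w = ins i 0 (u - w) := by apply ins_ext i <;> simp
  rw [dist_eq_norm, dist_eq_norm, h, norm_ins]
  simp

lemma range_ins_zero {m : ℕ} (i : Fin (m + 1)) :
    Set.range (ins i 0 : Euc m → Euc (m + 1)) = {x | x i = 0} := by
  ext x
  constructor
  · rintro ⟨u, rfl⟩; simp
  · intro hx
    refine ⟨WithLp.toLp 2 fun j => x (i.succAbove j), ins_ext i ?_ ?_⟩
    · simpa using hx.symm
    · simp

lemma lintegral_slice {m : ℕ} (i : Fin (m + 1)) {F : Euc (m + 1) → ℝ≥0∞} (hF : Measurable F) :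
    ∫⁻ x, F x = ∫⁻ v : ℝ, ∫⁻ u : Euc m, F (ins i v u) := by
  have hmp : MeasurePreserving (fun q : ℝ × Euc m => ins i q.1 q.2) := by
    have h1 := (volume_preserving_piFinSuccAbove (fun _ : Fin (m + 1) => ℝ) i).symm
    have h2 := (MeasurePreserving.id (volume : Measure ℝ)).prod (PiLp.volume_preserving_ofLp (Fin m))
    exact ((PiLp.volume_preserving_toLp (Fin (m + 1))).comp h1).comp h2
  rw [← hmp.lintegral_comp hF, Measure.volume_eq_prod, lintegral_prod]
  exact (hF.comp (continuous_ins i).measurable).aemeasurable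

lemma lintegral_comp_smul_euc {m : ℕ} {r : ℝ} (hr : 0 < r) {F : Euc m → ℝ≥0∞}
    (hF : Measurable F) :
    ∫⁻ u, F u = ENNReal.ofReal (r ^ m) * ∫⁻ x : Euc m, F (r • x) := by
  have h := Measure.map_addHaar_smul (volume : Measure (Euc m)) hr.ne'
  rw [← lintegral_map hF (measurable_const_smul r), h, lintegral_smul_measure, smul_eq_mul,
    ← mul_assoc, ← ENNReal.ofReal_mul (by positivity), finrank_euclideanSpace_fin,
    abs_of_pos (by positivity), mul_inv_cancel₀ (by positivity)]
  simp

/-! ### Projecting the cosine law onto the tangent hyperplane -/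

/-- In the substitution `ρ = √(v² + a²)` the Jacobian `v / ρ` is exactly the cosine weight. -/
lemma lintegral_hypot {a : ℝ} (ha : 0 ≤ a) (H : ℝ → ℝ≥0∞) :
    ∫⁻ v in Set.Ioi (0 : ℝ), ENNReal.ofReal (v / √(v ^ 2 + a ^ 2)) * H (√(v ^ 2 + a ^ 2)) =
      ∫⁻ ρ in Set.Ioi a, H ρ := by
  have himg : (fun v : ℝ => √(v ^ 2 + a ^ 2)) '' Set.Ioi 0 = Set.Ioi a := by
    ext ρ
    constructor
    · rintro ⟨v, hv, rfl⟩
      have : 0 < v ^ 2 := pow_pos hv 2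
      exact Real.lt_sqrt_of_sq_lt (by linarith)
    · intro hρ
      have hρ' : a < ρ := hρ
      refine ⟨√(ρ ^ 2 - a ^ 2), Real.sqrt_pos.2 (by nlinarith), ?_⟩
      simp only
      rw [Real.sq_sqrt (by nlinarith), sub_add_cancel, Real.sqrt_sq (ha.trans hρ'.le)]
  rw [← himg, lintegral_image_eq_lintegral_abs_deriv_mul (f' := fun v => v / √(v ^ 2 + a ^ 2))
    measurableSet_Ioi]
  · refine setLIntegral_congr_fun measurableSet_Ioi fun v hv => ?_
    have : 0 ≤ v / √(v ^ 2 + a ^ 2) := div_nonneg (le_of_lt hv) (Real.sqrt_nonneg _)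
    simp only [abs_of_nonneg this]
  · intro v hv
    have hpos : 0 < v ^ 2 + a ^ 2 := by have : 0 < v ^ 2 := pow_pos hv 2; positivity
    have := (((hasDerivAt_pow 2 v).add_const (a ^ 2)).sqrt hpos.ne').hasDerivWithinAt (s := Set.Ioi 0)
    rw [Nat.cast_ofNat, Nat.add_one_sub_one, pow_one, mul_div_mul_left _ _ two_ne_zero] at this
    exact this
  · intro v hv w hw h
    have hv' : 0 < v := hv
    have hw' : 0 < w := hw
    have h2 : v ^ 2 + a ^ 2 = w ^ 2 + a ^ 2 := (Real.sqrt_inj (by positivity) (by positivity)).1 h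
    nlinarith

/-- The lift of a point of the ball to the upper unit halfsphere in direction `i`. -/
def lift {m : ℕ} (i : Fin (m + 1)) (x : Euc m) : Euc (m + 1) := ins i (√(1 - ‖x‖ ^ 2)) x

lemma continuous_lift {m : ℕ} (i : Fin (m + 1)) : Continuous (lift i : Euc m → Euc (m + 1)) :=
  (continuous_ins i).comp (by fun_prop : Continuous fun x : Euc m => (√(1 - ‖x‖ ^ 2), x))

/-- Integrating against the cosine weight over the solid ball, in coordinates `(u, ρ)` with `u` the
tangential part and `ρ` the norm, and rescaling `u = ρ x`, produces the Lebesgue integral over the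
tangent ball. -/
lemma lintegral_cos {m : ℕ} (i : Fin (m + 1)) {F : Euc (m + 1) → ℝ≥0∞} (hF : Measurable F) :
    ∫⁻ y in ball (0 : Euc (m + 1)) 1, F (‖y‖⁻¹ • y) * ENNReal.ofReal ((‖y‖⁻¹ • y) i) =
      (∫⁻ ρ in Set.Ioo (0 : ℝ) 1, ENNReal.ofReal (ρ ^ m)) *
        ∫⁻ x in ball (0 : Euc m) 1, F (lift i x) := by
  classical
  have hnm : Measurable fun y : Euc (m + 1) => ‖y‖⁻¹ • y := by fun_prop
  -- the integrand in the variables `(ρ, u)`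
  set H : ℝ → Euc m → ℝ≥0∞ := fun ρ u =>
    Set.indicator {q : ℝ × Euc m | ‖q.2‖ < q.1 ∧ q.1 < 1}
      (fun q => F (ins i (q.1⁻¹ * √(q.1 ^ 2 - ‖q.2‖ ^ 2)) (q.1⁻¹ • q.2))) (ρ, u) with hH
  have hHm : Measurable (Function.uncurry H) := by
    refine Measurable.indicator (f := fun q : ℝ × Euc m =>
      F (ins i (q.1⁻¹ * √(q.1 ^ 2 - ‖q.2‖ ^ 2)) (q.1⁻¹ • q.2))) ?_ ?_
    · refine hF.comp ((continuous_ins i).measurable.comp (f := fun q : ℝ × Euc m =>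
        (q.1⁻¹ * √(q.1 ^ 2 - ‖q.2‖ ^ 2), q.1⁻¹ • q.2)) ?_)
      fun_prop
    · exact (measurableSet_lt measurable_snd.norm measurable_fst).inter
        (measurableSet_lt measurable_fst measurable_const)
  set G : Euc (m + 1) → ℝ≥0∞ := (ball (0 : Euc (m + 1)) 1).indicator
    (fun y => F (‖y‖⁻¹ • y) * ENNReal.ofReal ((‖y‖⁻¹ • y) i)) with hG
  have hGm : Measurable G := by
    refine Measurable.indicator ?_ measurableSet_ball
    exact (hF.comp hnm).mul (by fun_prop)
  have hslice : ∀ u : Euc m, ∫⁻ v : ℝ, G (ins i v u) = ∫⁻ ρ, H ρ u := by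
    intro u
    have h1 : ∫⁻ v : ℝ, G (ins i v u) = ∫⁻ v in Set.Ioi (0 : ℝ), G (ins i v u) := by
      rw [← lintegral_indicator measurableSet_Ioi]
      refine lintegral_congr fun v => ?_
      by_cases hv : v ∈ Set.Ioi (0 : ℝ)
      · rw [Set.indicator_of_mem hv]
      · rw [Set.indicator_of_notMem hv]
        have hv' : v ≤ 0 := not_lt.1 hv
        have : ‖ins i v u‖⁻¹ * v ≤ 0 := mul_nonpos_of_nonneg_of_nonpos (by positivity) hv'
        simp only [hG, Set.indicator_apply, PiLp.smul_apply, ins_same, smul_eq_mul,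
          ENNReal.ofReal_of_nonpos this, mul_zero, ite_self]
    have h2 : ∫⁻ ρ, H ρ u = ∫⁻ ρ in Set.Ioi ‖u‖, H ρ u := by
      rw [← lintegral_indicator measurableSet_Ioi]
      refine lintegral_congr fun ρ => ?_
      by_cases hv : ρ ∈ Set.Ioi ‖u‖
      · rw [Set.indicator_of_mem hv]
      · rw [Set.indicator_of_notMem hv]
        have hv' : ¬ ‖u‖ < ρ := hv
        simp [hH, hv']
    rw [h1, h2, ← lintegral_hypot (norm_nonneg u) (fun ρ => H ρ u)]
    refine setLIntegral_congr_fun measurableSet_Ioi fun v hv => ?_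
    have hv' : 0 < v := hv
    have hn := norm_ins i v u
    have hlt : ‖u‖ < √(v ^ 2 + ‖u‖ ^ 2) := Real.lt_sqrt_of_sq_lt (by nlinarith)
    simp only [hG, hH, Set.indicator_apply, mem_ball_zero_iff, Set.mem_ofPred_eq, hn, hlt, true_and]
    split_ifs with hlt1
    · rw [Real.sq_sqrt (by positivity), add_sub_cancel_right, Real.sqrt_sq hv'.le, smul_ins,
        ins_same, mul_comm, div_eq_inv_mul]
    · simp
  have hscale : ∀ ρ : ℝ, ∫⁻ u, H ρ u = (Set.Ioo (0 : ℝ) 1).indicator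
      (fun ρ => ENNReal.ofReal (ρ ^ m)) ρ * ∫⁻ x in ball (0 : Euc m) 1, F (lift i x) := by
    intro ρ
    by_cases hρ : ρ ∈ Set.Ioo (0 : ℝ) 1
    · have hHρ : Measurable (H ρ) := hHm.of_uncurry_left
      rw [Set.indicator_of_mem hρ, lintegral_comp_smul_euc hρ.1 hHρ,
        ← lintegral_indicator measurableSet_ball]
      congr 1
      refine lintegral_congr fun x => ?_
      have hρ0 := hρ.1
      have hlt : ρ * ‖x‖ < ρ ↔ ‖x‖ < 1 := by
        constructor <;> intro h <;> nlinarith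
      simp only [hH, Set.indicator_apply, mem_ball_zero_iff, Set.mem_ofPred_eq, norm_smul,
        Real.norm_eq_abs, abs_of_pos hρ0, hlt, hρ.2, and_true]
      split_ifs with hx
      · have h3 : ρ ^ 2 - (ρ * ‖x‖) ^ 2 = ρ ^ 2 * (1 - ‖x‖ ^ 2) := by ring
        rw [h3, Real.sqrt_mul (by positivity), Real.sqrt_sq hρ0.le, ← mul_assoc, smul_smul,
          inv_mul_cancel₀ hρ0.ne', one_mul, one_smul, lift]
      · rfl
    · rw [Set.indicator_of_notMem hρ, zero_mul]
      have : ∀ u, H ρ u = 0 := by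
        intro u
        refine Set.indicator_of_notMem ?_ _
        rintro ⟨h1, h2⟩
        exact hρ ⟨(norm_nonneg u).trans_lt h1, h2⟩
      simp [this]
  have hswap : ∫⁻ v : ℝ, ∫⁻ u : Euc m, G (ins i v u) = ∫⁻ u : Euc m, ∫⁻ v : ℝ, G (ins i v u) :=
    lintegral_lintegral_swap (hGm.comp (continuous_ins i).measurable).aemeasurable
  have hswap2 : ∫⁻ u : Euc m, ∫⁻ ρ : ℝ, H ρ u = ∫⁻ ρ : ℝ, ∫⁻ u : Euc m, H ρ u :=
    (lintegral_lintegral_swap hHm.aemeasurable).symm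
  rw [← lintegral_indicator measurableSet_ball, ← hG, lintegral_slice i hGm, hswap]
  simp_rw [hslice]
  rw [hswap2]
  simp_rw [hscale]
  rw [lintegral_mul_const _ (Measurable.indicator (by fun_prop) measurableSet_Ioo),
    lintegral_indicator measurableSet_Ioo]

/-! ### Hausdorff measure on the sphere -/

lemma eq_ins {m : ℕ} (i : Fin (m + 1)) (y : Euc (m + 1)) : ∃ u : Euc m, y = ins i (y i) u :=
  ⟨WithLp.toLp 2 fun j => y (i.succAbove j), ins_ext i (by simp) (by simp)⟩

lemma ins_sub_ins {m : ℕ} (i : Fin (m + 1)) (v w : ℝ) (x y : Euc m) :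
    ins i v x - ins i w y = ins i (v - w) (x - y) := by
  apply ins_ext i <;> simp

lemma dist_lift_sq {m : ℕ} (i : Fin (m + 1)) (x y : Euc m) :
    dist (lift i x) (lift i y) ^ 2 =
      (√(1 - ‖x‖ ^ 2) - √(1 - ‖y‖ ^ 2)) ^ 2 + dist x y ^ 2 := by
  rw [dist_eq_norm, dist_eq_norm, lift, lift, ins_sub_ins, norm_sq_ins]

lemma norm_lift {m : ℕ} (i : Fin (m + 1)) {x : Euc m} (hx : ‖x‖ ≤ 1) : ‖lift i x‖ = 1 := by
  have : ‖x‖ ^ 2 ≤ 1 := pow_le_one₀ (norm_nonneg _) hx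
  rw [lift, norm_ins, Real.sq_sqrt (by linarith), sub_add_cancel, Real.sqrt_one]

lemma antilipschitz_lift {m : ℕ} (i : Fin (m + 1)) :
    AntilipschitzWith 1 (lift i : Euc m → Euc (m + 1)) := by
  refine AntilipschitzWith.of_le_mul_dist fun x y => ?_
  have := dist_lift_sq i x y
  rw [NNReal.coe_one, one_mul]
  refine le_of_sq_le_sq ?_ dist_nonneg
  nlinarith [sq_nonneg (√(1 - ‖x‖ ^ 2) - √(1 - ‖y‖ ^ 2))]

/-- Away from the equator the halfsphere is a Lipschitz graph. -/
lemma lipschitzOn_lift {m : ℕ} (i : Fin (m + 1)) :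
    LipschitzOnWith 3 (lift i : Euc m → Euc (m + 1)) {x | ‖x‖ ^ 2 ≤ 3 / 4} := by
  refine LipschitzOnWith.of_dist_le_mul fun x hx y hy => ?_
  have hx : ‖x‖ ^ 2 ≤ 3 / 4 := hx
  have hy : ‖y‖ ^ 2 ≤ 3 / 4 := hy
  have hd := dist_lift_sq i x y
  set a := √(1 - ‖x‖ ^ 2) with ha
  set b := √(1 - ‖y‖ ^ 2) with hb
  have ha1 : 1 / 2 ≤ a := Real.le_sqrt_of_sq_le (by linarith)
  have hb1 : 1 / 2 ≤ b := Real.le_sqrt_of_sq_le (by linarith)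
  have ha2 : a ^ 2 = 1 - ‖x‖ ^ 2 := Real.sq_sqrt (by linarith)
  have hb2 : b ^ 2 = 1 - ‖y‖ ^ 2 := Real.sq_sqrt (by linarith)
  have hnx : ‖x‖ ≤ 1 := by nlinarith [norm_nonneg x]
  have hny : ‖y‖ ≤ 1 := by nlinarith [norm_nonneg y]
  have hxy : |‖x‖ - ‖y‖| ≤ dist x y := by rw [dist_eq_norm]; exact abs_norm_sub_norm_le x y
  have hab : |a - b| ≤ 2 * dist x y := by
    have h1 : (a - b) * (a + b) = -((‖x‖ - ‖y‖) * (‖x‖ + ‖y‖)) := by nlinarith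
    have h2 : |a - b| * (a + b) = |‖x‖ - ‖y‖| * (‖x‖ + ‖y‖) := by
      rw [← abs_of_nonneg (by linarith : 0 ≤ a + b), ← abs_mul, h1, abs_neg, abs_mul,
        abs_of_nonneg (by positivity : 0 ≤ ‖x‖ + ‖y‖)]
    have h3 : |a - b| * 1 ≤ |a - b| * (a + b) := by gcongr; linarith
    have h4 : |‖x‖ - ‖y‖| * (‖x‖ + ‖y‖) ≤ dist x y * 2 := by gcongr; linarith
    linarith
  have hsq : (a - b) ^ 2 ≤ (2 * dist x y) ^ 2 := sq_le_sq' (by linarith [neg_abs_le (a - b)])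
    ((le_abs_self _).trans hab)
  have h3 : ((3 : ℝ≥0) : ℝ) = 3 := rfl
  rw [h3]
  refine le_of_sq_le_sq ?_ (by positivity)
  nlinarith [sq_nonneg (dist x y)]

/-- By compactness it suffices to bound the measure near each point; a reflection moves the point to
the pole, where the cap `{y₀ > 1/2}` is a Lipschitz image of a bounded set. -/
lemma hausdorff_sphere_lt_top (m : ℕ) : μH[(m : ℝ)] (sphere (0 : Euc (m + 1)) 1) < ⊤ := by
  have hcap : μH[(m : ℝ)] (lift (0 : Fin (m + 1)) '' {x : Euc m | ‖x‖ ^ 2 ≤ 3 / 4}) < ⊤ := by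
    refine ((lipschitzOn_lift (0 : Fin (m + 1))).hausdorffMeasure_image_le
      (Nat.cast_nonneg m)).trans_lt ?_
    refine ENNReal.mul_lt_top (by simp) ?_
    refine (measure_mono (t := closedBall 0 1) fun x hx => ?_).trans_lt measure_closedBall_lt_top
    have hx : ‖x‖ ^ 2 ≤ 3 / 4 := hx
    rw [mem_closedBall_zero_iff]
    nlinarith [norm_nonneg x]
  refine (isCompact_sphere _ _).measure_lt_top_of_nhdsWithin fun x hx => ?_
  set e : Euc (m + 1) := EuclideanSpace.single 0 1 with he
  have hxe : ‖x‖ = ‖e‖ := by rw [mem_sphere_zero_iff_norm.1 hx]; simp [he]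
  set L : Euc (m + 1) ≃ₗᵢ[ℝ] Euc (m + 1) := (ℝ ∙ (x - e))ᗮ.reflection with hL
  have hLx : L x = e := Submodule.reflection_sub hxe
  refine ⟨sphere 0 1 ∩ {y | 1 / 2 < L y 0}, ?_, ?_⟩
  · refine inter_mem self_mem_nhdsWithin (mem_nhdsWithin_of_mem_nhds ?_)
    refine (isOpen_lt continuous_const (by fun_prop)).mem_nhds ?_
    simp [hLx, he]
    norm_num
  · rw [← L.toIsometryEquiv.hausdorffMeasure_image]
    refine (measure_mono ?_).trans_lt hcap
    rintro _ ⟨y, ⟨hy, hy2⟩, rfl⟩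
    have hy2 : 1 / 2 < L y 0 := hy2
    obtain ⟨u, hu⟩ := eq_ins 0 (L y)
    have hn : ‖L y‖ ^ 2 = 1 := by rw [L.norm_map, mem_sphere_zero_iff_norm.1 hy, one_pow]
    rw [hu, norm_sq_ins] at hn
    refine ⟨u, ?_, ?_⟩
    · change ‖u‖ ^ 2 ≤ 3 / 4
      nlinarith
    · have : 1 - ‖u‖ ^ 2 = (L y 0) ^ 2 := by linarith
      rw [lift, this, Real.sqrt_sq (by linarith)]
      exact hu.symm

/-- Orthogonal projection maps the halfsphere onto the ball and does not increase Hausdorff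
measure. -/
lemma hausdorff_sphere_ne_zero (m : ℕ) : μH[(m : ℝ)] (sphere (0 : Euc (m + 1)) 1) ≠ 0 := by
  intro h0
  have h1 := (antilipschitz_lift (0 : Fin (m + 1))).le_hausdorffMeasure_image
    (Nat.cast_nonneg m) (ball (0 : Euc m) 1)
  have h2 : μH[(m : ℝ)] (lift (0 : Fin (m + 1)) '' ball (0 : Euc m) 1) = 0 := by
    refine measure_mono_null ?_ h0
    rintro _ ⟨x, hx, rfl⟩
    simpa using norm_lift 0 (mem_ball_zero_iff.1 hx).le
  rw [h2, mul_zero] at h1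
  exact (measure_ball_pos μH[(m : ℝ)] (0 : Euc m) one_pos).ne' (le_antisymm h1 bot_le)

lemma map_sphereMeasure {m : ℕ} (L : Euc (m + 1) ≃ₗᵢ[ℝ] Euc (m + 1)) :
    (sphereMeasure (0 : Euc (m + 1))).map L = sphereMeasure (0 : Euc (m + 1)) := by
  have hpre : L ⁻¹' sphere (0 : Euc (m + 1)) 1 = sphere 0 1 := by ext; simp
  have h := L.toIsometryEquiv.map_hausdorffMeasure (((m + 1 : ℕ) : ℝ) - 1)
  have h' : Measure.map L (μH[(((m + 1 : ℕ) : ℝ) - 1)] : Measure (Euc (m + 1))) =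
    μH[(((m + 1 : ℕ) : ℝ) - 1)] := h
  unfold sphereMeasure
  conv_lhs => rw [← hpre]
  rw [← Measure.restrict_map L.continuous.measurable isClosed_sphere.measurableSet, h']

/-! ### The solid-angle measure and the cosine law -/

/-- The image of Lebesgue measure on the unit ball under central projection to the sphere. -/
def coneMeasure (n : ℕ) : Measure (Euc n) :=
  (volume.restrict (ball (0 : Euc n) 1)).map fun y => ‖y‖⁻¹ • y

instance (n : ℕ) : IsFiniteMeasure (volume.restrict (ball (0 : Euc n) 1)) :=
  ⟨by simpa using measure_ball_lt_top⟩

instance (n : ℕ) : IsFiniteMeasure (coneMeasure n) := by unfold coneMeasure; infer_instance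

lemma measurable_normalize (n : ℕ) : Measurable fun y : Euc n => ‖y‖⁻¹ • y := by fun_prop

lemma coneMeasure_compl (m : ℕ) : coneMeasure (m + 1) (sphere 0 1)ᶜ = 0 := by
  rw [coneMeasure, Measure.map_apply (measurable_normalize _)
    isClosed_sphere.measurableSet.compl]
  refine measure_mono_null (t := {0}) (fun y hy => ?_)
    (Measure.absolutelyContinuous_of_le Measure.restrict_le_self (measure_singleton 0))
  by_contra h0
  have h0 : y ≠ 0 := h0
  apply hy
  simp [norm_smul, h0]

lemma map_coneMeasure {n : ℕ} (L : Euc n ≃ₗᵢ[ℝ] Euc n) :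
    (coneMeasure n).map L = coneMeasure n := by
  have hpre : L ⁻¹' ball (0 : Euc n) 1 = ball 0 1 := by ext; simp
  have h1 : (volume.restrict (ball (0 : Euc n) 1)).map L = volume.restrict (ball (0 : Euc n) 1) := by
    conv_lhs => rw [← hpre]
    rw [← Measure.restrict_map L.continuous.measurable measurableSet_ball,
      L.measurePreserving.map_eq]
  unfold coneMeasure
  conv_rhs => rw [← h1]
  rw [Measure.map_map L.continuous.measurable (measurable_normalize n),
    Measure.map_map (measurable_normalize n) L.continuous.measurable]
  congr 1
  ext y : 1
  simp

lemma coneMeasure_ne_zero (n : ℕ) : coneMeasure n ≠ 0 := by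
  rw [coneMeasure, Ne, Measure.map_eq_zero_iff (measurable_normalize n).aemeasurable,
    Measure.restrict_eq_zero]
  exact (measure_ball_pos _ _ one_pos).ne'

lemma normalize_smul {Ω : Type*} [MeasurableSpace Ω] {M : Measure Ω} {c : ℝ≥0∞} (h0 : c ≠ 0)
    (ht : c ≠ ⊤) : ((c • M) Set.univ)⁻¹ • (c • M) = (M Set.univ)⁻¹ • M := by
  rw [Measure.smul_apply, smul_eq_mul, ENNReal.mul_inv (Or.inl h0) (Or.inl ht), smul_smul,
    mul_right_comm, ENNReal.inv_mul_cancel h0 ht, one_mul]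

lemma sphereMeasure_eq_smul (m : ℕ) : ∃ c : ℝ≥0∞, c ≠ 0 ∧ c ≠ ⊤ ∧
    sphereMeasure (0 : Euc (m + 1)) = c • coneMeasure (m + 1) := by
  have hd : ((m + 1 : ℕ) : ℝ) - 1 = m := by push_cast; ring
  have hu : sphereMeasure (0 : Euc (m + 1)) Set.univ =
      μH[(m : ℝ)] (sphere (0 : Euc (m + 1)) 1) := by
    rw [sphereMeasure, Measure.restrict_apply_univ, hd]
  have hu0 := hausdorff_sphere_ne_zero m
  have hut := hausdorff_sphere_lt_top m
  rw [← hu] at hu0 hut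
  have : IsFiniteMeasure (sphereMeasure (0 : Euc (m + 1))) := ⟨hut⟩
  have hc0 : coneMeasure (m + 1) Set.univ ≠ 0 := by simpa using coneMeasure_ne_zero (m + 1)
  have hct : coneMeasure (m + 1) Set.univ ≠ ⊤ := measure_ne_top _ _
  have hS : sphereMeasure (0 : Euc (m + 1)) (sphere 0 1)ᶜ = 0 := by
    rw [sphereMeasure, Measure.restrict_apply isClosed_sphere.measurableSet.compl]; simp
  have h := invariant_unique hS (coneMeasure_compl m) map_sphereMeasure map_coneMeasure
    (by simpa using hu0) (coneMeasure_ne_zero _)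
  refine ⟨(coneMeasure (m + 1) Set.univ)⁻¹ * sphereMeasure (0 : Euc (m + 1)) Set.univ,
    mul_ne_zero (ENNReal.inv_ne_zero.2 hct) hu0,
    ENNReal.mul_ne_top (ENNReal.inv_ne_top.2 hc0) hut.ne, ?_⟩
  rw [mul_smul, ← h, smul_smul, ENNReal.inv_mul_cancel hc0 hct, one_smul]

lemma coneMeasure_withDensity {m : ℕ} (i : Fin (m + 1)) :
    (coneMeasure (m + 1)).withDensity (fun y => ENNReal.ofReal (y i)) =
      (∫⁻ ρ in Set.Ioo (0 : ℝ) 1, ENNReal.ofReal (ρ ^ m)) •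
        (volume.restrict (ball (0 : Euc m) 1)).map (lift i) := by
  ext A hA
  have hm : Measurable fun y : Euc (m + 1) => ENNReal.ofReal (y i) := by fun_prop
  rw [withDensity_apply _ hA, Measure.smul_apply, smul_eq_mul,
    ← lintegral_indicator_one hA, lintegral_map (measurable_one.indicator hA)
      (continuous_lift i).measurable, ← lintegral_cos i (measurable_one.indicator hA),
    ← lintegral_indicator hA, coneMeasure, lintegral_map (hm.indicator hA) (measurable_normalize _)]
  refine lintegral_congr fun y => ?_
  by_cases hy : ‖y‖⁻¹ • y ∈ A
  · simp only [Set.indicator_of_mem hy, Pi.one_apply, one_mul]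
  · simp only [Set.indicator_of_notMem hy, zero_mul]

/-- The cosine law is the uniform law on the tangent ball lifted to the halfsphere. -/
lemma Pcos_eq {m : ℕ} (i : Fin (m + 1)) :
    Pcos (0 : Euc (m + 1)) (EuclideanSpace.single i 1) =
      (volume (ball (0 : Euc m) 1))⁻¹ • (volume.restrict (ball (0 : Euc m) 1)).map (lift i) := by
  obtain ⟨c, hc0, hct, hc⟩ := sphereMeasure_eq_smul m
  have hK0 : ∫⁻ ρ in Set.Ioo (0 : ℝ) 1, ENNReal.ofReal (ρ ^ m) ≠ 0 := by
    refine ((setLIntegral_pos_iff (by fun_prop)).2 ?_).ne'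
    refine lt_of_lt_of_le ?_ (measure_mono (s := Set.Ioo (0 : ℝ) 1) fun ρ hρ => ⟨?_, hρ⟩)
    · simp
    · exact (ENNReal.ofReal_pos.2 (pow_pos hρ.1 m)).ne'
  have hKt : ∫⁻ ρ in Set.Ioo (0 : ℝ) 1, ENNReal.ofReal (ρ ^ m) ≠ ⊤ := by
    have : ∫⁻ ρ in Set.Ioo (0 : ℝ) 1, ENNReal.ofReal (ρ ^ m) ≤ ∫⁻ ρ in Set.Ioo (0 : ℝ) 1, 1 := by
      refine setLIntegral_mono measurable_const fun ρ hρ => ?_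
      rw [← ENNReal.ofReal_one]
      exact ENNReal.ofReal_le_ofReal (pow_le_one₀ hρ.1.le hρ.2.le)
    exact ne_top_of_le_ne_top (by simp) this
  have hd : (fun y : Euc (m + 1) => ENNReal.ofReal ⟪EuclideanSpace.single i 1, y - 0⟫_ℝ) =
      fun y => ENNReal.ofReal (y i) := by
    ext y; simp [EuclideanSpace.inner_single_left]
  rw [Pcos, hd, hc, withDensity_smul_measure, normalize_smul hc0 hct, coneMeasure_withDensity,
    normalize_smul hK0 hKt, Measure.map_apply (continuous_lift i).measurable MeasurableSet.univ]
  simp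

/-! ### The uniform law on the tangent ball -/

lemma one_succAbove_zero (k : ℕ) : (1 : Fin (k + 2)).succAbove 0 = 0 := rfl

/-- The uniform law on the tangent ball is carried by the Lebesgue measure of `ℝ^{n-1}`. -/
lemma unifTangent_eq (k : ℕ) [NeZero (k + 2)] :
    unifTangent (k + 2) = ((volume (ball (0 : Euc (k + 1)) 1))⁻¹ •
      volume.restrict (ball (0 : Euc (k + 1)) 1)).map (ins (1 : Fin (k + 2)) 0) := by
  have hd : ((k + 2 : ℕ) : ℝ) - 1 = ((k + 1 : ℕ) : ℝ) := by push_cast; ring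
  have hiso := isometry_ins_zero (1 : Fin (k + 2))
  have hmeas : Measurable (ins (1 : Fin (k + 2)) 0 : Euc (k + 1) → Euc (k + 2)) :=
    hiso.continuous.measurable
  have hclosed : MeasurableSet (closedBall (0 : Euc (k + 2)) 1) := measurableSet_closedBall
  have hT : tangentBall (k + 2) =
      closedBall 0 1 ∩ Set.range (ins (1 : Fin (k + 2)) 0 : Euc (k + 1) → Euc (k + 2)) := by
    rw [range_ins_zero]
    ext x
    simp only [tangentBall, Set.mem_inter_iff, mem_closedBall_zero_iff]
    exact and_comm
  have hpre : (ins (1 : Fin (k + 2)) 0 : Euc (k + 1) → Euc (k + 2)) ⁻¹' closedBall 0 1 =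
      closedBall 0 1 := by
    ext u; simp [norm_ins]
  have hball : (volume : Measure (Euc (k + 1))).restrict (closedBall 0 1) =
      volume.restrict (ball 0 1) := by
    refine Measure.restrict_congr_set ?_
    exact (ae_eq_of_subset_of_measure_ge ball_subset_closedBall
      (Measure.addHaar_unitClosedBall_eq_addHaar_unitBall _).le
      measurableSet_ball.nullMeasurableSet measure_closedBall_lt_top.ne).symm
  set c := Measure.addHaarScalarFactor (μH[((k + 1 : ℕ) : ℝ)] : Measure (Euc (k + 1))) volume
  have hc : (μH[((k + 1 : ℕ) : ℝ)] : Measure (Euc (k + 1))) = c • volume :=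
    Measure.isAddLeftInvariant_eq_smul _ _
  have hc0 : c ≠ 0 := by
    intro h0
    have := (measure_ball_pos (μH[((k + 1 : ℕ) : ℝ)]) (0 : Euc (k + 1)) one_pos).ne'
    rw [hc, h0] at this
    simp at this
  have hrestr : (μH[((k + 2 : ℕ) : ℝ) - 1] : Measure (Euc (k + 2))).restrict (tangentBall (k + 2)) =
      (c : ℝ≥0∞) • (volume.restrict (ball (0 : Euc (k + 1)) 1)).map (ins (1 : Fin (k + 2)) 0) := by
    rw [hT, ← Measure.restrict_restrict hclosed, hd,
      ← hiso.map_hausdorffMeasure (Or.inl (Nat.cast_nonneg _)), Measure.restrict_map hmeas hclosed,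
      hpre, hc, ← hball, ← Measure.map_smul, Measure.restrict_smul]
    rfl
  rw [unifTangent, hrestr, normalize_smul (by simpa using hc0) ENNReal.coe_ne_top,
    Measure.map_apply hmeas MeasurableSet.univ, Measure.map_smul]
  simp

lemma Zmap_ins (k : ℕ) [NeZero (k + 2)] (u : Euc (k + 1)) :
    Zmap (k + 2) (ins (1 : Fin (k + 2)) 0 u) = exitMap (k + 2) (lift (1 : Fin (k + 2)) u) := by
  have hn : ‖ins (1 : Fin (k + 2)) 0 u‖ ^ 2 = ‖u‖ ^ 2 := by simp [norm_sq_ins]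
  have hY : Ymap (k + 2) (ins (1 : Fin (k + 2)) 0 u) = lift (1 : Fin (k + 2)) u := by
    rw [Ymap, hn, lift]
    apply ins_ext (1 : Fin (k + 2)) <;> simp
  rw [Zmap, hY, exitMap, hn]
  congr 3

lemma measurable_exitMap (n : ℕ) [NeZero n] : Measurable (exitMap n) := by
  unfold exitMap; fun_prop

lemma measurable_Zmap (n : ℕ) [NeZero n] : Measurable (Zmap n) := by
  unfold Zmap Ymap; fun_prop

lemma law_eq (k : ℕ) [NeZero (k + 2)] :
    Measure.map (Zmap (k + 2)) (unifTangent (k + 2)) =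
      Measure.map (exitMap (k + 2))
        (Pcos (0 : Euc (k + 2)) (EuclideanSpace.single 1 1 : Euc (k + 2))) := by
  have hmeas : Measurable (ins (1 : Fin (k + 2)) 0 : Euc (k + 1) → Euc (k + 2)) :=
    (isometry_ins_zero _).continuous.measurable
  have hP := Pcos_eq (1 : Fin (k + 2))
  refine Eq.trans ?_ (congrArg (Measure.map (exitMap (k + 2))) hP.symm)
  rw [unifTangent_eq, Measure.map_map (measurable_Zmap _) hmeas, Measure.map_smul,
    Measure.map_smul, Measure.map_map (measurable_exitMap _) (continuous_lift _).measurable]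
  congr 2
  ext u : 1
  exact Zmap_ins k u

/-! ### The landing point lies on the boundary -/

/-- Moving away from the axis of the cylinder leaves `K̃` at once. -/
lemma mem_frontier_Ktilde (k : ℕ) [NeZero (k + 2)] {z : Euc (k + 2)}
    (hz : (1 - z 1) ^ 2 + (‖z‖ ^ 2 - (z 0) ^ 2 - (z 1) ^ 2) = 1) :
    z ∈ frontier (Ktilde (k + 2)) := by
  have hz' : z ∈ Ktilde (k + 2) := hz.le
  refine ⟨subset_closure hz', fun hint => ?_⟩
  -- the point of the axis of the cylinder at the height of `z`
  set c : Euc (k + 2) := EuclideanSpace.single 0 (z 0) + EuclideanSpace.single 1 1 with hc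
  have hc0 : c 0 = z 0 := by simp [hc]
  have hc1 : c 1 = 1 := by simp [hc]
  set w : ℝ → Euc (k + 2) := fun t => z + t • (z - c) with hw
  have hcont : ContinuousAt w 0 := by
    have : Continuous w := by fun_prop
    exact this.continuousAt
  have hw0 : w 0 = z := by simp [hw]
  have hev : ∀ᶠ t in 𝓝 (0 : ℝ), w t ∈ Ktilde (k + 2) :=
    hcont (by rw [hw0]; exact mem_interior_iff_mem_nhds.1 hint)
  obtain ⟨δ, hδ, hball⟩ := Metric.eventually_nhds_iff.1 hev
  have hmem : w (δ / 2) ∈ Ktilde (k + 2) := hball (by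
    rw [Real.dist_eq, sub_zero, abs_of_pos (by positivity)]; linarith)
  have hmem : (1 - w (δ / 2) 1) ^ 2 +
    (‖w (δ / 2)‖ ^ 2 - (w (δ / 2) 0) ^ 2 - (w (δ / 2) 1) ^ 2) ≤ 1 := hmem
  have hsplit : ∀ y : Euc (k + 2), ‖y‖ ^ 2 - (y 0) ^ 2 - (y 1) ^ 2 =
      ∑ j : Fin k, (y j.succ.succ) ^ 2 := by
    intro y
    rw [EuclideanSpace.norm_sq_eq, Fin.sum_univ_succ, Fin.sum_univ_succ]
    simp only [Real.norm_eq_abs, sq_abs, Fin.succ_zero_eq_one]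
    ring
  have hws : ∀ j : Fin k, w (δ / 2) j.succ.succ = (1 + δ / 2) * z j.succ.succ := by
    intro j
    have h0 : (j.succ.succ : Fin (k + 2)) ≠ 0 := Fin.succ_ne_zero _
    have h1 : (j.succ.succ : Fin (k + 2)) ≠ 1 := by
      intro h; exact Fin.succ_ne_zero j (Fin.succ_injective _ h)
    simp [hw, hc, h0, h1]
    ring
  have hw1 : w (δ / 2) 1 = z 1 + δ / 2 * (z 1 - 1) := by
    simp only [hw, PiLp.add_apply, PiLp.smul_apply, PiLp.sub_apply, hc1, smul_eq_mul]
  rw [hsplit] at hmem hz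
  simp_rw [hws, mul_pow] at hmem
  rw [← Finset.mul_sum, hw1] at hmem
  nlinarith

lemma Zmap_mem_frontier (k : ℕ) [NeZero (k + 2)] {x : Euc (k + 2)} (hx : x ∈ tangentBall (k + 2)) :
    Zmap (k + 2) x ∈ frontier (Ktilde (k + 2)) := by
  obtain ⟨hx1, hxn⟩ := hx
  obtain ⟨u, hu⟩ := eq_ins (1 : Fin (k + 2)) x
  have hu' : x = ins (1 : Fin (k + 2)) 0 u := by rw [hu]; congr 1
  have hun : ‖u‖ ≤ 1 := by
    have : ‖x‖ = ‖u‖ := by rw [hu', norm_ins]; simp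
    rwa [← this]
  rw [hu', Zmap_ins]
  apply mem_frontier_Ktilde
  set y := lift (1 : Fin (k + 2)) u with hy
  have hyn : ‖y‖ = 1 := norm_lift _ hun
  have hexp : ‖exitMap (k + 2) y‖ ^ 2 = (2 * y 1 / (1 - (y 0) ^ 2)) ^ 2 := by
    rw [exitMap, norm_smul, hyn, mul_one, Real.norm_eq_abs, sq_abs]
  rw [hexp]
  simp only [exitMap, PiLp.smul_apply, smul_eq_mul]
  by_cases h0 : 1 - (y 0) ^ 2 = 0
  -- for `y = ±e₁` the factor is `2 * 0 / 0 = 0`, and the image is the origin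
  · simp [h0]
  · field_simp
    ring

/-! ### The variance as a second moment -/

/-- The integrand `(1 - ‖x‖²) · 4x₁² / (1 - x₁²)²`. -/
def zSq {n : ℕ} [NeZero n] (x : Euc n) : ℝ := (1 - ‖x‖ ^ 2) * (4 * (x 0) ^ 2 / (1 - (x 0) ^ 2) ^ 2)

lemma measurable_zSq {n : ℕ} [NeZero n] : Measurable (zSq : Euc n → ℝ) := by
  unfold zSq; fun_prop

lemma Zmap_zero (k : ℕ) [NeZero (k + 2)] (x : Euc (k + 2)) :
    Zmap (k + 2) x 0 = 2 * √(1 - ‖x‖ ^ 2) / (1 - (x 0) ^ 2) * x 0 := by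
  simp [Zmap, Ymap]

lemma measurable_ins_zero {m : ℕ} (i : Fin (m + 1)) :
    Measurable (ins i 0 : Euc m → Euc (m + 1)) :=
  (isometry_ins_zero i).continuous.measurable

lemma integral_Zmap_zero (k : ℕ) [NeZero (k + 2)] :
    ∫ x, Zmap (k + 2) x 0 ∂(unifTangent (k + 2)) = 0 := by
  have hm : Measurable fun x : Euc (k + 2) => Zmap (k + 2) x 0 :=
    (by fun_prop : Measurable fun y : Euc (k + 2) => y 0).comp (measurable_Zmap (k + 2))
  rw [unifTangent_eq, integral_map (measurable_ins_zero _).aemeasurable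
    hm.aestronglyMeasurable, integral_smul_measure, ← integral_indicator measurableSet_ball]
  set f : Euc (k + 1) → ℝ := (ball (0 : Euc (k + 1)) 1).indicator
    (fun u => Zmap (k + 2) (ins (1 : Fin (k + 2)) 0 u) 0) with hf
  have hodd : ∀ u, f (-u) = - f u := by
    intro u
    have hneg : ins (1 : Fin (k + 2)) 0 (-u) = - ins (1 : Fin (k + 2)) 0 u := by
      apply ins_ext (1 : Fin (k + 2)) <;> simp
    by_cases hu : u ∈ ball (0 : Euc (k + 1)) 1
    · have hu' : -u ∈ ball (0 : Euc (k + 1)) 1 := by simpa using hu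
      rw [hf, Set.indicator_of_mem hu, Set.indicator_of_mem hu', hneg, Zmap_zero, Zmap_zero]
      simp
    · have hu' : -u ∉ ball (0 : Euc (k + 1)) 1 := by simpa using hu
      rw [hf, Set.indicator_of_notMem hu, Set.indicator_of_notMem hu', neg_zero]
  have h := integral_neg_eq_self f volume
  simp_rw [hodd, integral_neg] at h
  have : ∫ u, f u = 0 := by linarith
  rw [this, smul_zero]

lemma ae_unifTangent (k : ℕ) [NeZero (k + 2)] : ∀ᵐ x ∂(unifTangent (k + 2)), ‖x‖ ≤ 1 := by
  rw [unifTangent_eq, ae_map_iff (measurable_ins_zero _).aemeasurable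
    (measurableSet_le (by fun_prop) (by fun_prop))]
  refine Measure.ae_smul_measure ?_ _
  filter_upwards [ae_restrict_mem measurableSet_ball] with u hu
  simpa [norm_ins] using (mem_ball_zero_iff.1 hu).le

lemma Zmap_zero_sq (k : ℕ) [NeZero (k + 2)] {x : Euc (k + 2)} (hx : ‖x‖ ≤ 1) :
    (Zmap (k + 2) x 0) ^ 2 = zSq x := by
  have : ‖x‖ ^ 2 ≤ 1 := pow_le_one₀ (norm_nonneg _) hx
  rw [Zmap_zero, zSq, mul_pow, div_pow, mul_pow, Real.sq_sqrt (by linarith)]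
  ring

lemma variance_eq_toReal (k : ℕ) [NeZero (k + 2)] :
    variance (fun x => Zmap (k + 2) x 0) (unifTangent (k + 2)) =
      (∫⁻ x, ENNReal.ofReal (zSq x) ∂(unifTangent (k + 2))).toReal := by
  rw [variance, evariance_eq_lintegral_ofReal, integral_Zmap_zero]
  congr 1
  refine lintegral_congr_ae ?_
  filter_upwards [ae_unifTangent k] with x hx
  rw [sub_zero, Zmap_zero_sq k hx]

/-- For `n = 2` both sides are the junk value `0` of a divergent integral. -/
lemma variance_eq_integral (k : ℕ) [NeZero (k + 2)] :
    variance (fun x => Zmap (k + 2) x 0) (unifTangent (k + 2)) =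
      ∫ x, zSq x ∂(unifTangent (k + 2)) := by
  rw [variance_eq_toReal, integral_eq_lintegral_of_nonneg_ae _
    measurable_zSq.aestronglyMeasurable]
  filter_upwards [ae_unifTangent k] with x hx
  rw [← Zmap_zero_sq k hx]
  exact sq_nonneg _

lemma variance_eq_ball (k : ℕ) [NeZero (k + 2)] :
    variance (fun x => Zmap (k + 2) x 0) (unifTangent (k + 2)) =
      ((volume (ball (0 : Euc (k + 1)) 1))⁻¹ *
        ∫⁻ u in ball (0 : Euc (k + 1)) 1, ENNReal.ofReal (zSq u)).toReal := by
  rw [variance_eq_toReal, unifTangent_eq, lintegral_map measurable_zSq.ennreal_ofReal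
    (measurable_ins_zero _), lintegral_smul_measure, smul_eq_mul]
  congr 2
  refine lintegral_congr fun u => ?_
  have h0 : ins (1 : Fin (k + 2)) 0 u 0 = u 0 := ins_succAbove 1 0 u 0
  rw [zSq, zSq, norm_sq_ins]
  erw [h0]
  simp

/-! ### Exact evaluation of the second moment -/

/-- Slicing the ball at height `s` and rescaling the slice by its radius `√(1 - s²)`. -/
lemma lintegral_ball_slice (k j : ℕ) {φ : ℝ → ℝ≥0∞} (hφ : Measurable φ) :
    ∫⁻ u in ball (0 : Euc (k + 1)) 1, φ (u 0) * ENNReal.ofReal ((1 - ‖u‖ ^ 2) ^ j) =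
      (∫⁻ s in Set.Ioo (-1 : ℝ) 1, φ s * ENNReal.ofReal (√(1 - s ^ 2) ^ (k + 2 * j))) *
        ∫⁻ w in ball (0 : Euc k) 1, ENNReal.ofReal ((1 - ‖w‖ ^ 2) ^ j) := by
  classical
  set G : Euc (k + 1) → ℝ≥0∞ := (ball (0 : Euc (k + 1)) 1).indicator
    (fun u => φ (u 0) * ENNReal.ofReal ((1 - ‖u‖ ^ 2) ^ j)) with hG
  have hGm : Measurable G := by
    refine Measurable.indicator ?_ measurableSet_ball
    fun_prop
  have hslice : ∀ s : ℝ, ∫⁻ w : Euc k, G (ins 0 s w) = (Set.Ioo (-1 : ℝ) 1).indicator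
      (fun s => φ s * ENNReal.ofReal (√(1 - s ^ 2) ^ (k + 2 * j))) s *
        ∫⁻ w in ball (0 : Euc k) 1, ENNReal.ofReal ((1 - ‖w‖ ^ 2) ^ j) := by
    intro s
    by_cases hs : s ∈ Set.Ioo (-1 : ℝ) 1
    · have hs2 : 0 < 1 - s ^ 2 := by nlinarith [hs.1, hs.2]
      have hR : 0 < √(1 - s ^ 2) := Real.sqrt_pos.2 hs2
      have hR2 : √(1 - s ^ 2) ^ 2 = 1 - s ^ 2 := Real.sq_sqrt hs2.le
      set R := √(1 - s ^ 2) with hRdef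
      have hGs : Measurable fun w : Euc k => G (ins 0 s w) :=
        hGm.comp ((continuous_ins 0).measurable.comp measurable_prodMk_left)
      rw [Set.indicator_of_mem hs, lintegral_comp_smul_euc hR hGs,
        ← lintegral_indicator measurableSet_ball, ← lintegral_const_mul' _ _ ENNReal.ofReal_ne_top,
        ← lintegral_const_mul _ (Measurable.indicator (by fun_prop) measurableSet_ball)]
      refine lintegral_congr fun x => ?_
      have hn : ‖ins 0 s (R • x)‖ ^ 2 = s ^ 2 + R ^ 2 * ‖x‖ ^ 2 := by
        rw [norm_sq_ins, norm_smul, mul_pow, Real.norm_eq_abs, sq_abs]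
      have hiff : ‖ins 0 s (R • x)‖ < 1 ↔ ‖x‖ < 1 := by
        rw [← sq_lt_one_iff₀ (norm_nonneg _), hn, ← sq_lt_one_iff₀ (norm_nonneg x), hR2]
        constructor <;> intro h <;> nlinarith
      simp only [hG, Set.indicator_apply, mem_ball_zero_iff, hiff, ins_same]
      split_ifs with hx
      · have h1 : 1 - ‖ins 0 s (R • x)‖ ^ 2 = R ^ 2 * (1 - ‖x‖ ^ 2) := by rw [hn]; linarith
        rw [h1, mul_pow, ← pow_mul, ENNReal.ofReal_mul (by positivity), pow_add,
          ENNReal.ofReal_mul (by positivity)]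
        ring
      · simp
    · rw [Set.indicator_of_notMem hs, zero_mul]
      have : ∀ w : Euc k, G (ins 0 s w) = 0 := by
        intro w
        refine Set.indicator_of_notMem (fun h => hs ?_) _
        have h1 : ‖ins 0 s w‖ < 1 := mem_ball_zero_iff.1 h
        rw [← sq_lt_one_iff₀ (norm_nonneg _), norm_sq_ins] at h1
        constructor <;> nlinarith [sq_nonneg ‖w‖]
      simp [this]
  rw [← lintegral_indicator measurableSet_ball, ← hG, lintegral_slice 0 hGm]
  simp_rw [hslice]
  rw [lintegral_mul_const _ (Measurable.indicator (by fun_prop) measurableSet_Ioo),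
    lintegral_indicator measurableSet_Ioo]

/-- `E[1 - ‖W‖²] = 2 / (k + 2)` for `W` uniform on the unit ball of `ℝᵏ`. -/
lemma lintegral_one_sub_norm_sq (k : ℕ) (hk : 1 ≤ k) :
    ∫⁻ w in ball (0 : Euc k) 1, ENNReal.ofReal (1 - ‖w‖ ^ 2) =
      ENNReal.ofReal (2 / (k + 2)) * volume (ball (0 : Euc k) 1) := by
  have : Nonempty (Fin k) := ⟨⟨0, hk⟩⟩
  have hnonneg : ∀ w ∈ ball (0 : Euc k) 1, 0 ≤ 1 - ‖w‖ ^ 2 := by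
    intro w hw
    have := pow_le_one₀ (n := 2) (norm_nonneg w) (mem_ball_zero_iff.1 hw).le
    linarith
  have hint : IntegrableOn (fun w : Euc k => 1 - ‖w‖ ^ 2) (ball 0 1) :=
    ((by fun_prop : Continuous fun w : Euc k => 1 - ‖w‖ ^ 2).continuousOn.integrableOn_compact
      (isCompact_closedBall 0 1)).mono_set ball_subset_closedBall
  have hval : ∫ w in ball (0 : Euc k) 1, (1 - ‖w‖ ^ 2) =
      2 / (k + 2) * volume.real (ball (0 : Euc k) 1) := by
    have h := integral_fun_norm_addHaar (volume : Measure (Euc k))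
      ((Set.Iio (1 : ℝ)).indicator fun y => 1 - y ^ 2)
    have hl : (fun w : Euc k => (Set.Iio (1 : ℝ)).indicator (fun y => 1 - y ^ 2) ‖w‖) =
        (ball (0 : Euc k) 1).indicator fun w => 1 - ‖w‖ ^ 2 := by
      classical
      ext w; simp [Set.indicator_apply]
    have hr : ∫ y in Set.Ioi (0 : ℝ), y ^ (k - 1) • (Set.Iio (1 : ℝ)).indicator
        (fun y => 1 - y ^ 2) y = (1 : ℝ) / k - 1 / (k + 2) := by
      have h1 : (fun y : ℝ => y ^ (k - 1) • (Set.Iio (1 : ℝ)).indicator (fun y => 1 - y ^ 2) y) =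
          (Set.Iio (1 : ℝ)).indicator fun y => y ^ (k - 1) - y ^ (k + 1) := by
        ext y
        by_cases hy : y ∈ Set.Iio (1 : ℝ)
        · rw [Set.indicator_of_mem hy, Set.indicator_of_mem hy]
          obtain ⟨l, rfl⟩ : ∃ l, k = l + 1 := ⟨k - 1, by omega⟩
          simp only [Nat.add_sub_cancel, smul_eq_mul]
          ring
        · rw [Set.indicator_of_notMem hy, Set.indicator_of_notMem hy, smul_zero]
      rw [h1, setIntegral_indicator measurableSet_Iio, Set.Ioi_inter_Iio,
        ← integral_Ioc_eq_integral_Ioo, ← intervalIntegral.integral_of_le zero_le_one,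
        intervalIntegral.integral_sub (by simp) (by simp), integral_pow, integral_pow]
      obtain ⟨l, rfl⟩ : ∃ l, k = l + 1 := ⟨k - 1, by omega⟩
      push_cast
      simp
      ring_nf
    rw [hl, integral_indicator measurableSet_ball, finrank_euclideanSpace_fin, hr] at h
    rw [h]
    have : (k : ℝ) ≠ 0 := by positivity
    simp only [nsmul_eq_mul, smul_eq_mul]
    field_simp
    ring
  rw [← ofReal_integral_eq_lintegral_ofReal hint
    ((ae_restrict_mem measurableSet_ball).mono hnonneg), hval,
    ENNReal.ofReal_mul (by positivity), ofReal_measureReal measure_ball_lt_top.ne]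

/-- Integration by parts: the derivative of `s (1 - s²)^{k/2}` integrates to zero. -/
lemma integral_parts (k : ℕ) (hk : 2 ≤ k) :
    ∫ s in (-1 : ℝ)..1, s ^ 2 * √(1 - s ^ 2) ^ (k - 2) =
      1 / k * ∫ s in (-1 : ℝ)..1, √(1 - s ^ 2) ^ k := by
  have hk' : (2 : ℝ) ≤ k := by exact_mod_cast hk
  have hpow : ∀ j : ℕ, ∀ s ∈ Set.uIcc (-1 : ℝ) 1,
      √(1 - s ^ 2) ^ j = (1 - s ^ 2) ^ ((j : ℝ) / 2) := by
    intro j s hs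
    rw [Set.uIcc_of_le (by norm_num)] at hs
    have : 0 ≤ 1 - s ^ 2 := by nlinarith [hs.1, hs.2]
    rw [Real.sqrt_eq_rpow, ← Real.rpow_natCast, ← Real.rpow_mul this]
    congr 1; ring
  have hderiv : ∀ s ∈ Set.uIcc (-1 : ℝ) 1, HasDerivAt (fun s : ℝ => s * (1 - s ^ 2) ^ ((k : ℝ) / 2))
      (√(1 - s ^ 2) ^ k - k * (s ^ 2 * √(1 - s ^ 2) ^ (k - 2))) s := by
    intro s hs
    have h1 : HasDerivAt (fun s : ℝ => 1 - s ^ 2) (-(2 * s)) s := by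
      simpa using (hasDerivAt_pow 2 s).const_sub 1
    have h2 := (hasDerivAt_id' s).fun_mul (h1.rpow_const (p := (k : ℝ) / 2) (Or.inr (by linarith)))
    have h3 : ((k - 2 : ℕ) : ℝ) / 2 = (k : ℝ) / 2 - 1 := by
      rw [Nat.cast_sub hk]; push_cast; ring
    rw [hpow k s hs, hpow (k - 2) s hs, h3]
    refine h2.congr_deriv ?_
    ring
  have hc1 : Continuous fun s : ℝ => √(1 - s ^ 2) ^ k := by fun_prop
  have hc2 : Continuous fun s : ℝ => (k : ℝ) * (s ^ 2 * √(1 - s ^ 2) ^ (k - 2)) := by fun_prop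
  have hftc := intervalIntegral.integral_eq_sub_of_hasDerivAt hderiv
    ((hc1.sub hc2).intervalIntegrable _ _)
  rw [intervalIntegral.integral_sub (hc1.intervalIntegrable _ _) (hc2.intervalIntegrable _ _),
    intervalIntegral.integral_const_mul] at hftc
  have h0 : (0 : ℝ) ^ ((k : ℝ) / 2) = 0 := Real.zero_rpow (by positivity)
  norm_num [h0] at hftc
  have : (k : ℝ) ≠ 0 := by positivity
  field_simp
  linarith

lemma lintegral_parts (k : ℕ) (hk : 2 ≤ k) :
    ∫⁻ s in Set.Ioo (-1 : ℝ) 1, ENNReal.ofReal (4 * s ^ 2 / (1 - s ^ 2) ^ 2) *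
        ENNReal.ofReal (√(1 - s ^ 2) ^ (k + 2)) =
      ENNReal.ofReal (4 / k) * ∫⁻ s in Set.Ioo (-1 : ℝ) 1, ENNReal.ofReal (√(1 - s ^ 2) ^ k) := by
  have hconv : ∀ f : ℝ → ℝ, Continuous f → (∀ s, 0 ≤ f s) →
      ∫⁻ s in Set.Ioo (-1 : ℝ) 1, ENNReal.ofReal (f s) =
        ENNReal.ofReal (∫ s in (-1 : ℝ)..1, f s) := by
    intro f hf h0
    rw [intervalIntegral.integral_of_le (by norm_num), integral_Ioc_eq_integral_Ioo,
      ofReal_integral_eq_lintegral_ofReal]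
    · exact (hf.integrableOn_Icc (a := -1) (b := 1)).mono_set Set.Ioo_subset_Icc_self
    · exact Eventually.of_forall h0
  have h1 : ∫⁻ s in Set.Ioo (-1 : ℝ) 1, ENNReal.ofReal (4 * s ^ 2 / (1 - s ^ 2) ^ 2) *
        ENNReal.ofReal (√(1 - s ^ 2) ^ (k + 2)) =
      ∫⁻ s in Set.Ioo (-1 : ℝ) 1, ENNReal.ofReal (4 * (s ^ 2 * √(1 - s ^ 2) ^ (k - 2))) := by
    refine setLIntegral_congr_fun measurableSet_Ioo fun s hs => ?_
    have hs2 : 0 < 1 - s ^ 2 := by nlinarith [hs.1, hs.2]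
    have hR : 0 < √(1 - s ^ 2) := Real.sqrt_pos.2 hs2
    have hR2 : √(1 - s ^ 2) ^ 2 = 1 - s ^ 2 := Real.sq_sqrt hs2.le
    rw [← ENNReal.ofReal_mul (by positivity)]
    congr 1
    obtain ⟨l, rfl⟩ : ∃ l, k = l + 2 := ⟨k - 2, by omega⟩
    rw [Nat.add_sub_cancel, ← hR2]
    have : √(√(1 - s ^ 2) ^ 2) = √(1 - s ^ 2) := Real.sqrt_sq hR.le
    rw [this]
    field_simp
    ring
  rw [h1, hconv _ (by fun_prop) (fun s => by positivity),
    hconv _ (by fun_prop) (fun s => by positivity), intervalIntegral.integral_const_mul,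
    integral_parts k hk, ← ENNReal.ofReal_mul (by positivity)]
  congr 1
  ring

/-- With `n = k + 2` the variance is exactly `8 / (n (n - 2))`. -/
lemma variance_exact (k : ℕ) [NeZero (k + 2)] (hk : 2 ≤ k) :
    variance (fun x => Zmap (k + 2) x 0) (unifTangent (k + 2)) = 8 / (k * (k + 2)) := by
  have hk0 : (0 : ℝ) < k := by exact_mod_cast (by omega : 0 < k)
  have hnum : ∫⁻ u in ball (0 : Euc (k + 1)) 1, ENNReal.ofReal (zSq u) =
      ENNReal.ofReal (8 / (k * (k + 2))) * volume (ball (0 : Euc (k + 1)) 1) := by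
    have h1 := lintegral_ball_slice k 1
      (φ := fun s => ENNReal.ofReal (4 * s ^ 2 / (1 - s ^ 2) ^ 2)) (by fun_prop)
    have h0 := lintegral_ball_slice k 0 (φ := fun _ => 1) measurable_const
    simp only [pow_zero, ENNReal.ofReal_one, mul_one, lintegral_const, Measure.restrict_apply_univ,
      one_mul, mul_zero, add_zero] at h0
    simp only [pow_one, mul_one] at h1
    rw [lintegral_parts k hk, lintegral_one_sub_norm_sq k (by omega)] at h1
    have hcongr : ∫⁻ u in ball (0 : Euc (k + 1)) 1, ENNReal.ofReal (zSq u) =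
        ∫⁻ u in ball (0 : Euc (k + 1)) 1, ENNReal.ofReal (4 * (u 0) ^ 2 / (1 - (u 0) ^ 2) ^ 2) *
          ENNReal.ofReal (1 - ‖u‖ ^ 2) := by
      refine lintegral_congr fun u => ?_
      rw [zSq, mul_comm, ENNReal.ofReal_mul (by positivity)]
    rw [hcongr, h1, h0]
    have h8 : (8 : ℝ) / (k * (k + 2)) = 4 / k * (2 / (k + 2)) := by field_simp; norm_num
    rw [h8, ENNReal.ofReal_mul (by positivity)]
    ring
  have hpos : volume (ball (0 : Euc (k + 1)) 1) ≠ 0 := (measure_ball_pos _ _ one_pos).ne'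
  rw [variance_eq_ball, hnum, mul_comm, mul_assoc,
    ENNReal.mul_inv_cancel hpos measure_ball_lt_top.ne, mul_one,
    ENNReal.toReal_ofReal (by positivity)]

/-- **Step analysis for the cylinder.** With `X` uniform on the tangent ball, `Z` lies on
`∂K̃`, the law of `Z` is the one-step distribution of the stochastic billiard on `∂K̃`
from the origin (direction drawn from the cosine law with inward normal `e₂`, jump to the
second intersection of the ray with `∂K̃`), `Var(Z₁) = E[(1-‖X‖²)·4X₁²/(1-X₁²)²]`, and
`Var(Z₁)` is of order `1/n²` as `n → ∞`. -/
theorem cylinder_step_analysis :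
    (∀ (n : ℕ) [NeZero n], 2 ≤ n →
      (∀ x ∈ tangentBall n, Zmap n x ∈ frontier (Ktilde n)) ∧
      Measure.map (Zmap n) (unifTangent n) =
        Measure.map (exitMap n)
          (Pcos (0 : Euc n) (EuclideanSpace.single 1 1 : Euc n)) ∧
      variance (fun x => Zmap n x 0) (unifTangent n) =
        ∫ x, (1 - ‖x‖ ^ 2) * (4 * (x 0) ^ 2 / (1 - (x 0) ^ 2) ^ 2)
          ∂(unifTangent n)) ∧
    ∃ c₁ c₂ : ℝ, 0 < c₁ ∧ 0 < c₂ ∧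
      ∃ N : ℕ, ∀ (n : ℕ) [NeZero n], N ≤ n →
        c₁ / (n : ℝ) ^ 2 ≤ variance (fun x => Zmap n x 0) (unifTangent n) ∧
        variance (fun x => Zmap n x 0) (unifTangent n) ≤ c₂ / (n : ℝ) ^ 2 := by
  refine ⟨fun n _ hn => ?_, 8, 16, by norm_num, by norm_num, 4, fun n _ hn => ?_⟩
  · obtain ⟨k, rfl⟩ : ∃ k, n = k + 2 := ⟨n - 2, by omega⟩
    exact ⟨fun x hx => Zmap_mem_frontier k hx, law_eq k, variance_eq_integral k⟩
  · obtain ⟨k, rfl⟩ : ∃ k, n = k + 2 := ⟨n - 2, by omega⟩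
    have hk : (2 : ℝ) ≤ k := by exact_mod_cast (by omega : 2 ≤ k)
    rw [variance_exact k (by omega)]
    push_cast
    constructor
    · exact div_le_div_of_nonneg_left (by norm_num) (by positivity) (by nlinarith)
    · rw [div_le_div_iff₀ (by positivity) (by positivity)]
      nlinarith

end
end
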